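/- Let d ≥ 3 be a fixed integer. There exists 𝔟₀ > 0 such that for every 𝔟 ≥ 𝔟₀ there exist constants C, c, N > 0 with the following property: for all n ≥ N with nd even and all primes p with gcd(p,d) = 1 and p ≤ c·n^{1/8}, let ℳ be the set of p×p symmetric matrices M = [m_{ij}]_{0≤i,j≤p−1} with nonnegative integer entries, every diagonal entry even, total sum Σ_{i,j} m_{ij} = dn, each row sum divisible by d with n_i(M) := (Σ_j m_{ij})/d and n_0(M) < n, and Σ_{j} j·m_{ij} ≡ 0 (mod p) for every i; and let ℰ_𝔟 = {M ∈ ℳ : Σ_{i,j=0}^{p−1} (m_{ij}/(dn) − 1/p²)² ≤ 𝔟·(ln n)/n}. Then | (2^{nd/2}(nd/2)!/(nd)!) · Σ_{M ∈ ℰ_𝔟} (n!/∏_{i=0}^{p−1} n_i(M)!) · (∏_{0≤i<j≤p−1} m_{ij}!) · (∏_{i=0}^{p−1} m_{ii}!/(2^{m_{ii}/2}(m_{ii}/2)!)) · ∏_{i=0}^{p−1} #{(a¹,…,a^{n_i(M)}) ∈ (Z_{d,p})^{n_i(M)} : Σ_k Φ(aᵏ) = (m_{i0},…,m_{i,p−1})}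 − (1 + 1_{p=2}) | ≤ C·p⁴·(ln n)^{3/2}/√n, where 1_{p=2} equals 1 if p = 2 and 0 otherwise. -/

import Mathlib

open Finset
set_option linter.unusedSectionVars false
set_option linter.style.haveILetI false
set_option linter.unusedVariables false


/-- counting statistic -/
def cnt {ι κ : Type*} [Fintype ι] [DecidableEq κ] (a : ι → κ) (j : κ) : ℕ :=
  (Finset.univ.filter (fun l => a l = j)).card

/-- type class -/
def TT {κ : Type*} [Fintype κ] [DecidableEq κ] (ι : Type*) [Fintype ι] [DecidableEq ι]
    (m : κ → ℕ) : Finset (ι → κ) :=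
  Finset.univ.filter (fun a => cnt a = m)

section types
variable {ι κ : Type*} [Fintype ι] [DecidableEq ι] [Fintype κ] [DecidableEq κ]

theorem mem_TT {m : κ → ℕ} {a : ι → κ} : a ∈ TT ι m ↔ cnt a = m := by simp [TT]

theorem sum_cnt (a : ι → κ) : ∑ j, cnt a j = Fintype.card ι := by
  unfold cnt
  rw [← Finset.card_univ (α := ι)]
  exact (Finset.card_eq_sum_card_fiberwise (fun _ _ => Finset.mem_univ _)).symm

theorem prod_cnt {R : Type*} [CommMonoid R] (a : ι → κ) (x : κ → R) :
    ∏ l, x (a l) = ∏ j, x j ^ cnt a j := by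
  unfold cnt
  rw [← Finset.prod_fiberwise_of_maps_to (s := univ) (t := univ) (g := a) (fun _ _ => mem_univ _)]
  refine Finset.prod_congr rfl fun j _ => ?_
  rw [Finset.prod_congr rfl (g := fun _ => x j) (fun l hl => by simp at hl; rw [hl])]
  simp

theorem sum_cnt_mul {R : Type*} [CommSemiring R] (a : ι → κ) (x : κ → R) :
    ∑ l, x (a l) = ∑ j, (cnt a j : R) * x j := by
  unfold cnt
  rw [← Finset.sum_fiberwise_of_maps_to (s := univ) (t := univ) (g := a) (fun _ _ => mem_univ _)]
  refine Finset.sum_congr rfl fun j _ => ?_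
  rw [Finset.sum_congr rfl (g := fun _ => x j) (fun l hl => by simp at hl; rw [hl])]
  simp

theorem card_TT_multinomial (m : κ → ℕ) (hm : ∑ j, m j = Fintype.card ι) :
    (TT ι m).card = Nat.multinomial univ m := by
  classical
  have h1 : (∑ j : κ, (MvPolynomial.X j : MvPolynomial κ ℕ)) ^ (Fintype.card ι)
      = ∑ a : ι → κ, ∏ j, (MvPolynomial.X j : MvPolynomial κ ℕ) ^ cnt a j := by
    rw [← Finset.card_univ, ← Finset.prod_const, Finset.prod_univ_sum, Fintype.piFinset_univ]
    exact Finset.sum_congr rfl fun a _ => prod_cnt a _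
  have h2 := Finset.sum_pow_eq_sum_piAntidiag (univ : Finset κ)
    (fun j => (MvPolynomial.X j : MvPolynomial κ ℕ)) (Fintype.card ι)
  rw [h1] at h2
  have key : ∀ k : κ → ℕ, ∏ j, (MvPolynomial.X j : MvPolynomial κ ℕ) ^ k j
      = MvPolynomial.monomial (Finsupp.equivFunOnFinite.symm k) 1 := by
    intro k
    rw [MvPolynomial.monomial_eq]
    simp [Finsupp.prod_fintype]
  have h3 := congrArg (MvPolynomial.coeff (Finsupp.equivFunOnFinite.symm m)) h2
  simp only [key, MvPolynomial.coeff_sum, MvPolynomial.coeff_monomial,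
    EmbeddingLike.apply_eq_iff_eq] at h3
  have h4 : ∀ k : κ → ℕ, MvPolynomial.coeff (Finsupp.equivFunOnFinite.symm m)
     ((Nat.multinomial univ k : MvPolynomial κ ℕ) *
       MvPolynomial.monomial (Finsupp.equivFunOnFinite.symm k) 1)
       = if k = m then Nat.multinomial univ k else 0 := by
    intro k
    rw [show (Nat.multinomial univ k : MvPolynomial κ ℕ) = MvPolynomial.C (Nat.multinomial univ k)
      by simp, MvPolynomial.coeff_C_mul, MvPolynomial.coeff_monomial]
    simp
  simp only [h4] at h3
  rw [Finset.sum_ite_eq_of_mem' _ _ _ (by simp [hm])] at h3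
  rw [← h3, TT, Finset.card_filter]

theorem card_TT (m : κ → ℕ) (hm : ∑ j, m j = Fintype.card ι) :
    (TT ι m).card * ∏ j, (m j).factorial = (Fintype.card ι).factorial := by
  rw [card_TT_multinomial m hm, mul_comm, ← hm]
  exact Nat.multinomial_spec _ _

theorem card_TT_pos (m : κ → ℕ) (hm : ∑ j, m j = Fintype.card ι) : 0 < (TT ι m).card := by
  have := card_TT (ι := ι) m hm
  rcases Nat.eq_zero_or_pos (TT ι m).card with h | h
  · rw [h, zero_mul] at this
    exact absurd this.symm (Nat.factorial_ne_zero _)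
  · exact h

theorem sum_all_prod {R : Type*} [CommRing R] (q : κ → R) :
    ∑ a : ι → κ, ∏ l, q (a l) = (∑ j, q j) ^ Fintype.card ι := by
  rw [← Finset.card_univ, ← Finset.prod_const, Finset.prod_univ_sum, Fintype.piFinset_univ]

theorem types_upper (m : κ → ℕ) (q : κ → ℝ) (hq : ∀ j, 0 ≤ q j) (hs : ∑ j, q j = 1) :
    ((TT ι m).card : ℝ) * ∏ j, q j ^ m j ≤ 1 := by
  have h1 := sum_all_prod (ι := ι) q
  rw [hs, one_pow] at h1
  rw [← h1]
  calc ((TT ι m).card : ℝ) * ∏ j, q j ^ m j = ∑ a ∈ TT ι m, ∏ l, q (a l) := by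
        rw [Finset.sum_congr rfl (g := fun _ => ∏ j, q j ^ m j)]
        · simp
        · intro a ha
          rw [prod_cnt, mem_TT.1 ha]
    _ ≤ _ := Finset.sum_le_sum_of_subset_of_nonneg (Finset.subset_univ _)
        (fun a _ _ => Finset.prod_nonneg fun l _ => hq _)

theorem pow_fact_le (m k : ℕ) : m ^ k * m.factorial ≤ m ^ m * k.factorial := by
  rcases le_total m k with h | h
  · obtain ⟨r, rfl⟩ := Nat.exists_eq_add_of_le h
    have := Nat.factorial_mul_pow_sub_le_factorial h
    rw [Nat.add_sub_cancel_left] at this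
    calc m ^ (m + r) * m.factorial = m ^ m * (m.factorial * m ^ r) := by ring
      _ ≤ _ := Nat.mul_le_mul_left _ this
  · obtain ⟨r, hr⟩ := Nat.exists_eq_add_of_le h
    have h1 := Nat.factorial_mul_descFactorial (n := m) (k := r) (by omega)
    have h2 := Nat.descFactorial_le_pow m r
    rw [show m - r = k by omega] at h1
    calc m ^ k * m.factorial = m ^ k * (k.factorial * m.descFactorial r) := by rw [h1]
      _ ≤ m ^ k * (k.factorial * m ^ r) := by gcongr
      _ = m ^ (k + r) * k.factorial := by ring
      _ = _ := by rw [← hr]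

theorem types_lower (m : κ → ℕ) (M : ℕ) (hM : M = Fintype.card ι) (hM0 : 0 < M)
    (hm : ∑ j, m j = M) :
    1 ≤ ((M : ℝ) + 1) ^ (Fintype.card κ) *
      (((TT ι m).card : ℝ) * ∏ j, ((m j : ℝ) / M) ^ m j) := by
  classical
  have hM' : (0 : ℝ) < M := by exact_mod_cast hM0
  have h2 := Finset.sum_pow_eq_sum_piAntidiag (univ : Finset κ) (fun j => (m j : ℝ) / M) M
  have hs : ∑ j, (m j : ℝ) / M = 1 := by
    rw [← Finset.sum_div, ← Nat.cast_sum, hm]; field_simp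
  rw [hs, one_pow] at h2
  have hterm : ∀ k ∈ piAntidiag (univ : Finset κ) M,
      (Nat.multinomial univ k : ℝ) * ∏ j, ((m j : ℝ) / M) ^ k j ≤
        ((TT ι m).card : ℝ) * ∏ j, ((m j : ℝ) / M) ^ m j := by
    intro k hk
    have hk' : ∑ j, k j = M := by simpa using hk
    rw [card_TT_multinomial m (hm.trans hM)]
    have e1 : (Nat.multinomial univ k : ℝ) = (M.factorial : ℝ) / ∏ j, ((k j).factorial : ℝ) := by
      rw [eq_div_iff (by exact_mod_cast Finset.prod_ne_zero_iff.2 fun j _ => Nat.factorial_ne_zero _)]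
      have := Nat.multinomial_spec univ k
      rw [hk'] at this
      rw [← this]; push_cast; ring
    have e2 : (Nat.multinomial univ m : ℝ) = (M.factorial : ℝ) / ∏ j, ((m j).factorial : ℝ) := by
      rw [eq_div_iff (by exact_mod_cast Finset.prod_ne_zero_iff.2 fun j _ => Nat.factorial_ne_zero _)]
      have := Nat.multinomial_spec univ m
      rw [hm] at this
      rw [← this]; push_cast; ring
    have e3 : ∀ k : κ → ℕ, ∑ j, k j = M → ∏ j, ((m j : ℝ) / M) ^ k j
        = (∏ j, (m j : ℝ) ^ k j) / (M : ℝ) ^ M := by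
      intro k hk
      simp only [div_pow]
      rw [Finset.prod_div_distrib, Finset.prod_pow_eq_pow_sum, hk]
    rw [e1, e2, e3 k hk', e3 m hm]
    have e4 : (∏ j, (m j : ℝ) ^ k j) / ∏ j, ((k j).factorial : ℝ) ≤
        (∏ j, (m j : ℝ) ^ m j) / ∏ j, ((m j).factorial : ℝ) := by
      rw [← Finset.prod_div_distrib, ← Finset.prod_div_distrib]
      refine Finset.prod_le_prod (fun j _ => by positivity) fun j _ => ?_
      rw [div_le_div_iff₀ (by exact_mod_cast Nat.factorial_pos _) (by exact_mod_cast Nat.factorial_pos _)]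
      exact_mod_cast pow_fact_le (m j) (k j)
    have e5 : (0 : ℝ) ≤ (M.factorial : ℝ) / (M : ℝ) ^ M := by positivity
    have := mul_le_mul_of_nonneg_left e4 e5
    calc _ = (M.factorial : ℝ) / (M : ℝ) ^ M * ((∏ j, (m j : ℝ) ^ k j) / ∏ j, ((k j).factorial : ℝ)) := by ring
      _ ≤ _ := this
      _ = _ := by ring
  have hX : 0 ≤ ((TT ι m).card : ℝ) * ∏ j, ((m j : ℝ) / M) ^ m j := by
    apply mul_nonneg (by positivity)
    exact Finset.prod_nonneg fun j _ => by positivity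
  have hc : ((piAntidiag (univ : Finset κ) M).card : ℝ) ≤ ((M : ℝ) + 1) ^ (Fintype.card κ) := by
    have : piAntidiag (univ : Finset κ) M ⊆ Fintype.piFinset (fun _ : κ => range (M + 1)) := by
      intro k hk
      have hk' : ∑ j, k j = M := by simpa using hk
      rw [Fintype.mem_piFinset]
      intro j
      rw [mem_range, Nat.lt_succ_iff, ← hk']
      exact Finset.single_le_sum (fun _ _ => Nat.zero_le _) (mem_univ j)
    have := Finset.card_le_card this
    rw [Fintype.card_piFinset] at this
    simp only [card_range, prod_const, Finset.card_univ] at this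
    exact_mod_cast this
  refine h2.trans_le ?_
  calc _ ≤ ∑ k ∈ piAntidiag (univ : Finset κ) M, ((TT ι m).card : ℝ) * ∏ j, ((m j : ℝ) / M) ^ m j :=
        Finset.sum_le_sum hterm
    _ = ((piAntidiag (univ : Finset κ) M).card : ℝ) * (((TT ι m).card : ℝ) * ∏ j, ((m j : ℝ) / M) ^ m j) := by
        rw [Finset.sum_const, nsmul_eq_mul]
    _ ≤ _ := mul_le_mul_of_nonneg_right hc hX

/-- coefficient extraction bound -/
theorem extract {Ω : Type*} [Fintype Ω] (R : Ω → κ → ℕ) (m : κ → ℕ) (F : Ω → ℂ) (C : ℝ)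
    (h : ∀ x : κ → ℂ, (∀ j, ‖x j‖ = 1) → ‖∑ ω, F ω * ∏ j, x j ^ (R ω j)‖ ≤ C) :
    ‖∑ ω with R ω = m, F ω‖ ≤ C := by
  classical
  obtain ⟨Q, hQ⟩ : ∃ Q : ℕ, (∀ ω j, R ω j < Q) ∧ (∀ j, m j < Q) ∧ 0 < Q := by
    refine ⟨∑ ω, ∑ j, R ω j + ∑ j, m j + 1, ?_, ?_, by omega⟩
    · intro ω j
      have h1 : R ω j ≤ ∑ j, R ω j := Finset.single_le_sum (f := fun j => R ω j) (fun _ _ => Nat.zero_le _) (mem_univ j)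
      have h2 : ∑ j, R ω j ≤ ∑ ω, ∑ j, R ω j :=
        Finset.single_le_sum (f := fun ω => ∑ j, R ω j) (fun _ _ => Nat.zero_le _) (mem_univ ω)
      omega
    · intro j
      have h1 : m j ≤ ∑ j, m j := Finset.single_le_sum (fun _ _ => Nat.zero_le _) (mem_univ j)
      omega
  obtain ⟨hQ1, hQ2, hQ0⟩ := hQ
  haveI : NeZero Q := ⟨hQ0.ne'⟩
  let ψ := (ZMod.stdAddChar (N := Q))
  have hψ : ∀ t : ZMod Q, ‖ψ t‖ = 1 := fun t => by
    rw [ZMod.stdAddChar_apply]; exact Circle.norm_coe _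
  have horth : ∀ ω, ∑ θ : κ → ZMod Q, (∏ j, ψ (-(θ j * (m j : ZMod Q)))) * ∏ j, ψ (θ j) ^ R ω j
      = if R ω = m then (Q : ℂ) ^ Fintype.card κ else 0 := by
    intro ω
    have e1 : ∀ θ : κ → ZMod Q, (∏ j, ψ (-(θ j * (m j : ZMod Q)))) * ∏ j, ψ (θ j) ^ R ω j
        = ∏ j, ψ (θ j * ((R ω j : ZMod Q) - m j)) := by
      intro θ
      rw [← Finset.prod_mul_distrib]
      refine Finset.prod_congr rfl fun j _ => ?_
      rw [← AddChar.map_nsmul_eq_pow, ← AddChar.map_add_eq_mul]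
      congr 1
      simp only [nsmul_eq_mul]; ring
    simp only [e1]
    have e2 := Finset.prod_univ_sum (fun _ : κ => (univ : Finset (ZMod Q)))
      (fun j t => ψ (t * ((R ω j : ZMod Q) - m j)))
    rw [Fintype.piFinset_univ] at e2
    rw [← e2]
    have e3 : ∀ j, ∑ t : ZMod Q, ψ (t * ((R ω j : ZMod Q) - m j)) = if R ω j = m j then (Q : ℂ) else 0 := by
      intro j
      rw [AddChar.sum_mulShift _ (ZMod.isPrimitive_stdAddChar Q)]
      have : ((R ω j : ZMod Q) - m j = 0) ↔ R ω j = m j := by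
        rw [sub_eq_zero, ZMod.natCast_eq_natCast_iff', Nat.mod_eq_of_lt (hQ1 ω j), Nat.mod_eq_of_lt (hQ2 j)]
      simp [this, ZMod.card]
    simp only [e3]
    split_ifs with hh
    · simp [hh]
    · obtain ⟨j, hj⟩ := Function.ne_iff.1 hh
      exact Finset.prod_eq_zero (mem_univ j) (by simp [hj])
  have hsum : (Q : ℂ) ^ Fintype.card κ * ∑ ω with R ω = m, F ω
      = ∑ θ : κ → ZMod Q, (∏ j, ψ (-(θ j * (m j : ZMod Q)))) * ∑ ω, F ω * ∏ j, ψ (θ j) ^ R ω j := by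
    simp only [Finset.mul_sum]
    rw [Finset.sum_comm, Finset.sum_filter]
    refine Finset.sum_congr rfl fun ω _ => ?_
    have := horth ω
    calc _ = F ω * (if R ω = m then (Q : ℂ) ^ Fintype.card κ else 0) := by split_ifs <;> ring
      _ = _ := by
        rw [← this, Finset.mul_sum]
        exact Finset.sum_congr rfl fun θ _ => by ring
  have hn : (Q : ℝ) ^ Fintype.card κ * ‖∑ ω with R ω = m, F ω‖ ≤ (Q : ℝ) ^ Fintype.card κ * C := by
    have e : (Q : ℝ) ^ Fintype.card κ = ‖(Q : ℂ) ^ Fintype.card κ‖ := by simp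
    conv_lhs => rw [e, ← norm_mul, hsum]
    refine (norm_sum_le _ _).trans ?_
    calc _ ≤ ∑ θ : κ → ZMod Q, C := by
          refine Finset.sum_le_sum fun θ _ => ?_
          rw [norm_mul, norm_prod]
          simp only [hψ, Finset.prod_const_one, one_mul]
          exact h _ fun j => hψ _
      _ = _ := by simp [ZMod.card]
  exact le_of_mul_le_mul_left hn (by positivity)

end types


section near
variable {p : ℕ} [NeZero p] {ι : Type*} [Fintype ι] [DecidableEq ι]

/-- character sum over a type class -/
noncomputable def BB (m : ZMod p → ℕ) (s : ι → ZMod p) : ℂ :=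
  ∑ a ∈ TT ι m, ZMod.stdAddChar (∑ l, s l * a l)

/-- Fourier transform of the count vector -/
noncomputable def etaHat (m : ZMod p → ℕ) (σ : ZMod p) : ℂ :=
  ∑ j, (m j : ℂ) * ZMod.stdAddChar (σ * j)

theorem norm_char (t : ZMod p) : ‖(ZMod.stdAddChar t : ℂ)‖ = 1 := by
  rw [ZMod.stdAddChar_apply]; exact Circle.norm_coe _

theorem cnt_comp_perm {κ : Type*} [DecidableEq κ] (a : ι → κ) (σ : Equiv.Perm ι) :
    cnt (a ∘ σ) = cnt a := by
  funext j
  unfold cnt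
  refine Finset.card_bij (fun l _ => σ l) (fun l hl => by simpa using hl)
    (fun _ _ _ _ h => σ.injective h) (fun b hb => ⟨σ.symm b, by simpa using hb, by simp⟩)

theorem BB_perm (m : ZMod p → ℕ) (s : ι → ZMod p) (σ : Equiv.Perm ι) :
    BB m (s ∘ σ) = BB m s := by
  unfold BB
  refine Finset.sum_bij' (fun a _ => a ∘ σ.symm) (fun a _ => a ∘ σ) ?_ ?_ ?_ ?_ ?_
  · intro a ha; rw [mem_TT] at *; rw [cnt_comp_perm, ha]
  · intro a ha; rw [mem_TT] at *; rw [cnt_comp_perm, ha]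
  · intro a ha; funext l; simp
  · intro a ha; funext l; simp
  · intro a ha
    congr 1
    refine Fintype.sum_equiv σ _ _ fun l => ?_
    simp

theorem BB_rec (m : ZMod p → ℕ) (s : ι → ZMod p) (σ : ZMod p) :
    ∑ l, BB m (s + Pi.single l σ) = etaHat m σ * BB m s := by
  unfold BB
  rw [Finset.sum_comm, Finset.mul_sum]
  refine Finset.sum_congr rfl fun a ha => ?_
  rw [mem_TT] at ha
  have h1 : ∀ l, (ZMod.stdAddChar (∑ l', (s + Pi.single l σ : ι → ZMod p) l' * a l') : ℂ)
      = ZMod.stdAddChar (σ * a l) * ZMod.stdAddChar (∑ l', s l' * a l') := by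
    intro l
    rw [← AddChar.map_add_eq_mul]
    congr 1
    simp only [Pi.add_apply, add_mul, Finset.sum_add_distrib]
    rw [add_comm]
    congr 1
    rw [Finset.sum_eq_single l] <;> simp +contextual [Pi.single_apply]
  simp only [h1]
  rw [← Finset.sum_mul]
  congr 1
  rw [sum_cnt_mul a (fun j => (ZMod.stdAddChar (σ * j) : ℂ)), ha]
  rfl

theorem BB_swap (m : ZMod p → ℕ) (s : ι → ZMod p) (σ : ZMod p) (l l0 : ι) (h : s l = 0)
    (h0 : s l0 = 0) : BB m (s + Pi.single l σ) = BB m (s + Pi.single l0 σ) := by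
  have hq := BB_perm m (s + Pi.single l0 σ : ι → ZMod p) (Equiv.swap l l0)
  refine Eq.trans ?_ hq
  congr 1
  funext x
  simp only [Pi.add_apply, Function.comp_apply]
  by_cases hx : x = l
  · subst hx; simp [h, h0]
  · by_cases hx0 : x = l0
    · subst hx0
      simp [h, h0, Pi.single_apply, hx, Ne.symm hx]
    · rw [Equiv.swap_apply_of_ne_of_ne hx hx0]
      simp [Pi.single_apply, hx, hx0]

theorem BB_near (m : ZMod p → ℕ) (M : ℕ) (hM : M = Fintype.card ι) (hM0 : 0 < M)
    (θ η : ZMod p → ℝ) (κ : ℝ) (hκ : 0 < κ) (Lm : ℕ) (hL : 2 * Lm ≤ M)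
    (hLκ : 2 * (Lm : ℝ) ≤ κ ^ 2 * M)
    (hη : ∀ σ, σ ≠ 0 → ‖etaHat m σ‖ ≤ M * η σ)
    (hθ0 : θ 0 = 1) (hθ1 : ∀ σ, θ σ ≤ 1) (hθ : ∀ σ, σ ≠ 0 → θ σ = 2 * η σ + κ)
    (hθκ : ∀ σ, κ ≤ θ σ) :
    ∀ k ≤ Lm, ∀ s : ι → ZMod p, (univ.filter (fun l => s l ≠ 0)).card ≤ k →
      ‖BB m s‖ ≤ ((TT ι m).card : ℝ) * ∏ l, θ (s l) := by
  have hMr : (0 : ℝ) < M := by exact_mod_cast hM0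
  intro k
  induction k with
  | zero =>
    intro _ s hs
    have h0 : ∀ l, s l = 0 := by
      intro l
      by_contra h
      have : l ∈ univ.filter (fun l => s l ≠ 0) := by simpa using h
      rw [Nat.le_zero, Finset.card_eq_zero] at hs
      rw [hs] at this
      simp at this
    simp only [h0, hθ0, Finset.prod_const_one, mul_one]
    unfold BB
    refine (norm_sum_le _ _).trans ?_
    simp [norm_char]
  | succ k ih =>
    intro hk s hs
    have hk' : k ≤ Lm := by omega
    by_cases hcard : (univ.filter (fun l => s l ≠ 0)).card ≤ k
    · exact ih hk' s hcard
    have hcard' : (univ.filter (fun l => s l ≠ 0)).card = k + 1 := by omega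
    obtain ⟨l0, hl0⟩ : ∃ l0, l0 ∈ univ.filter (fun l => s l ≠ 0) := by
      rw [← Finset.Nonempty, ← Finset.card_pos]; omega
    have hl0' : s l0 ≠ 0 := by simpa using hl0
    set σ := s l0 with hσ
    set s' : ι → ZMod p := Function.update s l0 0 with hs'
    have hs'0 : s' l0 = 0 := by simp [hs']
    have hss : s = s' + Pi.single l0 σ := by
      funext x
      by_cases hx : x = l0
      · subst hx; simp [hs', hσ]
      · simp [hs', hx, Pi.single_apply]
    set U := univ.filter (fun l => s' l ≠ 0) with hU
    have hUe : U = (univ.filter (fun l => s l ≠ 0)).erase l0 := by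
      ext x
      simp only [hU, hs', mem_filter, mem_univ, true_and, mem_erase]
      by_cases hx : x = l0
      · subst hx; simp
      · simp [hx]
    have hUc : U.card = k := by
      rw [hUe, Finset.card_erase_of_mem hl0, hcard']; simp
    have hrec := BB_rec m s' σ
    rw [← Finset.sum_add_sum_compl U] at hrec
    have hcompl : ∑ l ∈ Uᶜ, BB m (s' + Pi.single l σ) = ((M - k : ℝ) : ℂ) * BB m s := by
      rw [Finset.sum_congr rfl (g := fun _ => BB m s)]
      · rw [Finset.sum_const, Finset.card_compl, hUc, ← hM, nsmul_eq_mul, Nat.cast_sub (by omega)]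
        push_cast; rfl
      · intro l hl
        have : s' l = 0 := by simpa [hU] using hl
        rw [BB_swap m s' σ l l0 this hs'0, ← hss]
    rw [hcompl] at hrec
    set P := ∏ l, θ (s' l) with hP
    have hθpos : ∀ σ, 0 < θ σ := fun σ => hκ.trans_le (hθκ σ)
    have hPpos : 0 < P := Finset.prod_pos fun l _ => hθpos _
    set A : ℝ := ((TT ι m).card : ℝ) with hA
    have hA0 : 0 ≤ A := Nat.cast_nonneg _
    have hB' : ‖BB m s'‖ ≤ A * P := ih hk' s' (le_of_eq hUc)
    have hBl : ∀ l ∈ U, ‖BB m (s' + Pi.single l σ)‖ ≤ A * P / κ := by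
      intro l hl
      have hsub : univ.filter (fun x => (s' + Pi.single l σ : ι → ZMod p) x ≠ 0) ⊆ U := by
        intro x hx
        by_cases hxl : x = l
        · rw [hxl]; exact hl
        · simp only [mem_filter, mem_univ, true_and, Pi.add_apply, Pi.single_apply, hxl, if_false,
            add_zero, ne_eq] at hx
          simpa [hU] using hx
      have h1 := ih hk' (s' + Pi.single l σ) ((Finset.card_le_card hsub).trans hUc.le)
      refine h1.trans ?_
      rw [mul_div_assoc]
      refine mul_le_mul_of_nonneg_left ?_ hA0
      rw [le_div_iff₀ hκ, hP, ← Finset.mul_prod_erase univ _ (mem_univ l),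
        ← Finset.mul_prod_erase univ (fun x => θ (s' x)) (mem_univ l)]
      have h2 : ∏ x ∈ univ.erase l, θ ((s' + Pi.single l σ : ι → ZMod p) x)
          = ∏ x ∈ univ.erase l, θ (s' x) := by
        refine Finset.prod_congr rfl fun x hx => ?_
        simp [Pi.single_apply, Finset.ne_of_mem_erase hx]
      rw [h2]
      set W := ∏ x ∈ univ.erase l, θ (s' x)
      have hW : 0 < W := Finset.prod_pos fun x _ => hθpos _
      have h3 := hθ1 ((s' + Pi.single l σ : ι → ZMod p) l)
      have h4 := hθκ (s' l)
      calc _ ≤ 1 * W * κ := by gcongr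
        _ = κ * W := by ring
        _ ≤ _ := by gcongr
    have hmain : (M - k : ℝ) * ‖BB m s‖ ≤ A * P * (M * η σ + k / κ) := by
      have hkM : (0 : ℝ) ≤ M - k := by
        rw [sub_nonneg]; exact_mod_cast (by omega : k ≤ M)
      have e1 : (M - k : ℝ) * ‖BB m s‖ = ‖((M - k : ℝ) : ℂ) * BB m s‖ := by
        rw [norm_mul, Complex.norm_real, Real.norm_of_nonneg hkM]
      rw [e1, show ((M - k : ℝ) : ℂ) * BB m s = etaHat m σ * BB m s'
          - ∑ l ∈ U, BB m (s' + Pi.single l σ) by rw [← hrec]; ring]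
      refine (norm_sub_le _ _).trans ?_
      rw [norm_mul]
      have e2 : ‖∑ l ∈ U, BB m (s' + Pi.single l σ)‖ ≤ k * (A * P / κ) := by
        refine (norm_sum_le _ _).trans ((Finset.sum_le_sum hBl).trans ?_)
        rw [Finset.sum_const, hUc, nsmul_eq_mul]
      have e3 : ‖etaHat m σ‖ * ‖BB m s'‖ ≤ (M * η σ) * (A * P) :=
        mul_le_mul (hη σ hl0') hB' (norm_nonneg _) ((norm_nonneg _).trans (hη σ hl0'))
      calc _ ≤ (M * η σ) * (A * P) + k * (A * P / κ) := add_le_add e3 e2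
        _ = _ := by ring
    have hprod : ∏ l, θ (s l) = P * θ σ := by
      rw [hP, ← Finset.mul_prod_erase univ _ (mem_univ l0),
        ← Finset.mul_prod_erase univ (fun x => θ (s' x)) (mem_univ l0), hs'0, hθ0]
      have : ∏ x ∈ univ.erase l0, θ (s' x) = ∏ x ∈ univ.erase l0, θ (s x) := by
        refine Finset.prod_congr rfl fun x hx => ?_
        simp [hs', Finset.ne_of_mem_erase hx]
      rw [this]; ring
    rw [hprod, hθ σ hl0']
    have hM2 : (M : ℝ) / 2 ≤ M - k := by
      have : (2 * k : ℝ) ≤ M := by exact_mod_cast (by omega : 2 * k ≤ M)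
      linarith
    have h5 : (M : ℝ) / 2 * ‖BB m s‖ ≤ A * P * (M * η σ + k / κ) :=
      (mul_le_mul_of_nonneg_right hM2 (norm_nonneg _)).trans hmain
    have hkL : (2 * k : ℝ) ≤ κ ^ 2 * M := by
      have : (k : ℝ) ≤ Lm := by exact_mod_cast hk'
      linarith
    have h6 : (k : ℝ) / κ ≤ κ * M / 2 := by
      rw [div_le_iff₀ hκ]; nlinarith
    have h7 : (M : ℝ) / 2 * ‖BB m s‖ ≤ (M : ℝ) / 2 * (A * (P * (2 * η σ + κ))) := by
      refine h5.trans ?_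
      calc A * P * (M * η σ + k / κ) ≤ A * P * (M * η σ + κ * M / 2) :=
            mul_le_mul_of_nonneg_left (by linarith) (mul_nonneg hA0 hPpos.le)
        _ = _ := by ring
    exact le_of_mul_le_mul_left h7 (by positivity)

end near


/-- The counting map `Φ` : the `j`-th coordinate of `Φ(a)` is `#{r : a r = j}`. -/
def Phi {d p : ℕ} (a : Fin d → ZMod p) (j : ZMod p) : ℕ :=
  (Finset.univ.filter (fun r : Fin d => a r = j)).card

section row
variable {p : ℕ} [NeZero p]

theorem stdChar_sum {ι : Type*} (u : Finset ι) (f : ι → ZMod p) :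
    (ZMod.stdAddChar (∑ i ∈ u, f i) : ℂ) = ∏ i ∈ u, (ZMod.stdAddChar (f i) : ℂ) := by
  classical
  induction u using Finset.induction_on with
  | empty => simp
  | insert a s ha ih => rw [Finset.sum_insert ha, Finset.prod_insert ha, AddChar.map_add_eq_mul, ih]

theorem char_sum (c : ZMod p) : ∑ t : ZMod p, (ZMod.stdAddChar (t * c) : ℂ) = if c = 0 then (p : ℂ) else 0 := by
  rw [AddChar.sum_mulShift _ (ZMod.isPrimitive_stdAddChar p)]
  simp [ZMod.card]

/-- number of rows -/
def rowCount (p d N : ℕ) [NeZero p] (m : ZMod p → ℕ) : ℕ :=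
  (Finset.univ.filter (fun a : Fin N → Fin d → ZMod p =>
                  (∀ k, ∑ r, a k r = 0) ∧
                  (∀ j : ZMod p, (∑ k, Phi (a k) j) = m j))).card

theorem rowCount_eq (d N : ℕ) (m : ZMod p → ℕ) :
    ((p : ℂ) ^ N) * (rowCount p d N m : ℂ)
      = ∑ t : Fin N → ZMod p, BB m (fun l : Fin N × Fin d => t l.1) := by
  classical
  have h1 : rowCount p d N m = ((TT (Fin N × Fin d) m).filter (fun a => ∀ k, ∑ r, a (k, r) = 0)).card := by
    unfold rowCount
    refine Finset.card_bij' (fun a _ => fun l => a l.1 l.2) (fun a _ => fun k r => a (k, r)) ?_ ?_ ?_ ?_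
    · intro a ha
      simp only [mem_filter, mem_univ, true_and] at ha
      rw [mem_filter, mem_TT]
      refine ⟨?_, ha.1⟩
      funext j
      rw [← ha.2 j]
      unfold cnt Phi
      simp only [Finset.card_filter]
      rw [Fintype.sum_prod_type]
    · intro a ha
      rw [mem_filter, mem_TT] at ha
      simp only [mem_filter, mem_univ, true_and]
      refine ⟨ha.2, fun j => ?_⟩
      rw [← ha.1]
      unfold cnt Phi
      simp only [Finset.card_filter]
      rw [Fintype.sum_prod_type]
    · intro a _; rfl
    · intro a _; rfl
  have h2 : ∀ a : Fin N × Fin d → ZMod p,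
      ∑ t : Fin N → ZMod p, (ZMod.stdAddChar (∑ l : Fin N × Fin d, t l.1 * a l) : ℂ)
        = if (∀ k, ∑ r, a (k, r) = 0) then (p : ℂ) ^ N else 0 := by
    intro a
    have e1 : ∀ t : Fin N → ZMod p, (ZMod.stdAddChar (∑ l : Fin N × Fin d, t l.1 * a l) : ℂ)
        = ∏ k, (ZMod.stdAddChar (t k * ∑ r, a (k, r)) : ℂ) := by
      intro t
      rw [Fintype.sum_prod_type, stdChar_sum]
      simp only [Finset.mul_sum]
    simp only [e1]
    have e2 := Finset.prod_univ_sum (fun _ : Fin N => (univ : Finset (ZMod p)))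
      (fun k t => (ZMod.stdAddChar (t * ∑ r, a (k, r)) : ℂ))
    rw [Fintype.piFinset_univ] at e2
    rw [← e2]
    simp only [char_sum]
    split_ifs with hh
    · simp [hh]
    · push Not at hh
      obtain ⟨k, hk⟩ := hh
      exact Finset.prod_eq_zero (mem_univ k) (by simp [hk])
  unfold BB
  rw [Finset.sum_comm]
  simp only [h2]
  rw [← Finset.sum_filter, Finset.sum_const, h1, nsmul_eq_mul]
  ring

theorem planch_id (c : ZMod p → ℂ) :
    ∑ s : ZMod p, ‖∑ j, c j * ZMod.stdAddChar (s * j)‖ ^ 2 = p * ∑ j, ‖c j‖ ^ 2 := by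
  have h : ((∑ s : ZMod p, ‖∑ j, c j * ZMod.stdAddChar (s * j)‖ ^ 2 : ℝ) : ℂ) =
      ((p * ∑ j, ‖c j‖ ^ 2 : ℝ) : ℂ) := by
    push_cast
    have e1 : ∀ s : ZMod p, ((‖∑ j, c j * ZMod.stdAddChar (s * j)‖ : ℂ)) ^ 2
        = ∑ j, ∑ k, c j * (starRingEnd ℂ) (c k) * ZMod.stdAddChar (s * (j - k)) := by
      intro s
      rw [← Complex.mul_conj', map_sum, Finset.sum_mul_sum]
      refine Finset.sum_congr rfl fun j _ => Finset.sum_congr rfl fun k _ => ?_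
      rw [map_mul (starRingEnd ℂ), ← AddChar.map_neg_eq_conj, mul_sub, sub_eq_add_neg, AddChar.map_add_eq_mul]
      ring
    simp only [e1]
    rw [Finset.sum_comm, Finset.mul_sum]
    refine Finset.sum_congr rfl fun j _ => ?_
    rw [Finset.sum_comm]
    simp only [← Finset.mul_sum, char_sum, sub_eq_zero]
    simp only [mul_ite, mul_zero, Finset.sum_ite_eq, mem_univ, if_true]
    rw [Complex.mul_conj']
    ring
  exact_mod_cast h

theorem BB_far {ι : Type*} [Fintype ι] [DecidableEq ι] (m : ZMod p → ℕ) (M : ℕ)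
    (hM : M = Fintype.card ι) (hM0 : 0 < M) (hm : ∑ j, m j = M) (s : ι → ZMod p) (V : ℝ)
    (hV : ∀ x : ZMod p → ℂ, (∀ j, ‖x j‖ = 1) →
      ∏ l, ‖∑ j, ((p * m j / M : ℝ) : ℂ) * x j * ZMod.stdAddChar (s l * j)‖ ≤ (p : ℝ) ^ M * V) :
    ‖BB m s‖ ≤ ((TT ι m).card : ℝ) * (((M : ℝ) + 1) ^ p * V) := by
  classical
  set r : ZMod p → ℝ := fun j => p * m j / M with hr
  have hMr : (0 : ℝ) < M := by exact_mod_cast hM0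
  have hp : (0 : ℝ) < p := by exact_mod_cast Nat.pos_of_ne_zero (NeZero.ne p)
  have hρ : 0 < ∏ j, r j ^ m j := by
    refine Finset.prod_pos fun j _ => ?_
    rcases Nat.eq_zero_or_pos (m j) with h | h
    · simp [h]
    · have : (0 : ℝ) < m j := by exact_mod_cast h
      simp only [hr]; positivity
  have h1 : ‖((∏ j, r j ^ m j : ℝ) : ℂ) * BB m s‖ ≤ (p : ℝ) ^ M * V := by
    have e1 : ((∏ j, r j ^ m j : ℝ) : ℂ) * BB m s
        = ∑ a : ι → ZMod p with cnt a = m, ∏ l, (((r (a l) : ℝ) : ℂ) * ZMod.stdAddChar (s l * a l)) := by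
      unfold BB
      rw [Finset.mul_sum]
      refine Finset.sum_congr rfl fun a ha => ?_
      have ha : cnt a = m := by simpa [TT] using ha
      rw [Finset.prod_mul_distrib, stdChar_sum]
      congr 1
      rw [prod_cnt a (fun j => ((r j : ℝ) : ℂ)), ha]
      push_cast; rfl
    rw [e1]
    refine extract (fun a => cnt a) m _ _ fun x hx => ?_
    refine le_trans (le_of_eq ?_) (hV x hx)
    rw [← norm_prod, Finset.prod_univ_sum, Fintype.piFinset_univ]
    congr 1
    refine Finset.sum_congr rfl fun a _ => ?_
    rw [← prod_cnt a x, ← Finset.prod_mul_distrib]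
    refine Finset.prod_congr rfl fun l _ => by ring
  have h2 := types_lower (ι := ι) m M hM hM0 hm
  have h3 : ∏ j, ((m j : ℝ) / M) ^ m j = (∏ j, r j ^ m j) / (p : ℝ) ^ M := by
    rw [eq_div_iff (by positivity), ← hm, ← Finset.prod_pow_eq_pow_sum, ← Finset.prod_mul_distrib]
    refine Finset.prod_congr rfl fun j _ => ?_
    rw [← mul_pow]; simp only [hr]; rw [hm]; congr 1; ring
  rw [h3, ZMod.card] at h2
  rw [norm_mul, Complex.norm_real, Real.norm_of_nonneg hρ.le] at h1
  have hV0 : 0 ≤ V := by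
    have : 0 ≤ (p : ℝ) ^ M * V := le_trans (by positivity) h1
    exact nonneg_of_mul_nonneg_right this (by positivity)
  set ρ := ∏ j, r j ^ m j
  have h4 : ρ * ‖BB m s‖ ≤ ρ * (((TT ι m).card : ℝ) * (((M : ℝ) + 1) ^ p * V)) := by
    calc _ ≤ (p : ℝ) ^ M * V * 1 := by rw [mul_one]; exact h1
      _ ≤ (p : ℝ) ^ M * V * (((M : ℝ) + 1) ^ p * (((TT ι m).card : ℝ) * (ρ / (p : ℝ) ^ M))) :=
        mul_le_mul_of_nonneg_left h2 (mul_nonneg (by positivity) hV0)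
      _ = _ := by field_simp
  exact le_of_mul_le_mul_left h4 hρ

theorem gibbs {κ : Type*} [Fintype κ] [DecidableEq κ] (N : ℕ) (hN : 0 < N) (t : Fin N → κ)
    (y : κ → ℝ) (hy : ∀ j, 0 ≤ y j) (W : ℝ) (hW : ∑ j, y j ≤ W) :
    ∏ k, y (t k) ≤ W ^ N * ∏ k, ((cnt t (t k) : ℝ) / N) := by
  have hNr : (0 : ℝ) < N := by exact_mod_cast hN
  have hc : ∀ k, (0 : ℝ) < cnt t (t k) := by
    intro k
    have : 0 < cnt t (t k) := Finset.card_pos.2 ⟨k, by simp⟩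
    exact_mod_cast this
  set z : Fin N → ℝ := fun k => y (t k) / ((cnt t (t k) : ℝ) / N) with hz
  have hz0 : ∀ k, 0 ≤ z k := fun k => div_nonneg (hy _) (div_nonneg (hc k).le hNr.le)
  have hW0 : 0 ≤ W := (Finset.sum_nonneg fun j _ => hy j).trans hW
  have h2 := Real.geom_mean_le_arith_mean (univ : Finset (Fin N)) (fun _ => 1) z (fun _ _ => by norm_num)
    (by simp; exact hN) (fun k _ => hz0 k)
  simp only [Real.rpow_one, one_mul, Finset.sum_const, Finset.card_univ, Fintype.card_fin,
    nsmul_eq_mul, mul_one] at h2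
  have h3 : (∑ k, z k) / N ≤ W := by
    rw [div_le_iff₀ hNr]
    have : ∑ k, z k = N * ∑ j, (if cnt t j = 0 then 0 else y j) := by
      simp only [hz]
      rw [sum_cnt_mul t (fun j => y j / ((cnt t j : ℝ) / N)), Finset.mul_sum]
      refine Finset.sum_congr rfl fun j _ => ?_
      split_ifs with h
      · simp [h]
      · have : (cnt t j : ℝ) ≠ 0 := by exact_mod_cast h
        field_simp
    rw [this, mul_comm]
    refine mul_le_mul_of_nonneg_right (le_trans (Finset.sum_le_sum fun j _ => ?_) hW) hNr.le
    split_ifs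
    · exact hy j
    · exact le_rfl
  have h4 : ∏ k, z k ≤ W ^ N := by
    have h5 := h2.trans h3
    have h6 : 0 ≤ ∏ k, z k := Finset.prod_nonneg fun k _ => hz0 k
    calc ∏ k, z k = ((∏ k, z k) ^ ((N : ℝ)⁻¹)) ^ N := by
          rw [Real.rpow_inv_natCast_pow h6 hN.ne']
      _ ≤ W ^ N := by
          gcongr
  calc ∏ k, y (t k) = (∏ k, z k) * ∏ k, ((cnt t (t k) : ℝ) / N) := by
        rw [← Finset.prod_mul_distrib]
        refine Finset.prod_congr rfl fun k _ => ?_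
        simp only [hz]
        have := hc k
        field_simp
    _ ≤ _ := mul_le_mul_of_nonneg_right h4
        (Finset.prod_nonneg fun k _ => div_nonneg (hc k).le hNr.le)

/-- self-probability of a sequence -/
noncomputable def qq {κ : Type*} [DecidableEq κ] {N : ℕ} (t : Fin N → κ) : ℝ :=
  ∏ k, ((cnt t (t k) : ℝ) / N)

theorem cnt_le {κ : Type*} [DecidableEq κ] {N : ℕ} (t : Fin N → κ) (j : κ) : cnt t j ≤ N := by
  unfold cnt
  exact (Finset.card_le_univ _).trans (by simp)

theorem qq_nonneg {κ : Type*} [DecidableEq κ] {N : ℕ} (t : Fin N → κ) : 0 ≤ qq t :=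
  Finset.prod_nonneg fun k _ => by positivity

theorem sum_qq {κ : Type*} [Fintype κ] [DecidableEq κ] (N : ℕ) (hN : 0 < N) :
    ∑ t : Fin N → κ, qq t ≤ ((N : ℝ) + 1) ^ Fintype.card κ := by
  have hNr : (0 : ℝ) < N := by exact_mod_cast hN
  have hmaps : ∀ t ∈ (univ : Finset (Fin N → κ)), cnt t ∈ Fintype.piFinset (fun _ : κ => range (N + 1)) := by
    intro t _
    rw [Fintype.mem_piFinset]
    intro j
    rw [mem_range, Nat.lt_succ_iff]
    exact cnt_le t j
  rw [← Finset.sum_fiberwise_of_maps_to hmaps]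
  calc _ ≤ ∑ ν ∈ Fintype.piFinset (fun _ : κ => range (N + 1)), (1 : ℝ) := by
        refine Finset.sum_le_sum fun ν _ => ?_
        by_cases hν : ∑ j, ν j = N
        · have := types_upper (ι := Fin N) ν (fun j => (ν j : ℝ) / N) (fun j => by positivity)
            (by rw [← Finset.sum_div, ← Nat.cast_sum, hν]; field_simp)
          refine le_trans (le_of_eq ?_) this
          rw [Finset.sum_congr rfl (g := fun _ => ∏ j, ((ν j : ℝ) / N) ^ ν j)]
          · rw [Finset.sum_const, nsmul_eq_mul]; rfl
          · intro t ht
            have ht' : cnt t = ν := by simpa using ht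
            unfold qq
            rw [prod_cnt t (fun j => (cnt t j : ℝ) / N), ht']
        · rw [Finset.sum_eq_zero]
          · norm_num
          · intro t ht
            have ht' : cnt t = ν := by simpa using ht
            exact absurd (by rw [← ht', sum_cnt]; simp) hν
    _ = _ := by simp

theorem qq_far {κ : Type*} [Fintype κ] [DecidableEq κ] (N K : ℕ) (hN : 0 < N) (hK : K ≤ N)
    (t : Fin N → κ) (ht : ∀ j, K ≤ (univ.filter (fun k => t k ≠ j)).card) :
    qq t ≤ (1 / 2) ^ K := by
  have hNr : (0 : ℝ) < N := by exact_mod_cast hN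
  have hq1 : ∀ j, (cnt t j : ℝ) / N ≤ 1 := by
    intro j
    rw [div_le_one hNr]; exact_mod_cast cnt_le t j
  have hq0 : ∀ j, 0 ≤ (cnt t j : ℝ) / N := fun j => by positivity
  obtain ⟨S, hS, hSq⟩ : ∃ S : Finset (Fin N), K ≤ S.card ∧ ∀ k ∈ S, (cnt t (t k) : ℝ) / N ≤ 1 / 2 := by
    by_cases h : ∃ j, N < 2 * cnt t j
    · obtain ⟨j, hj⟩ := h
      refine ⟨univ.filter (fun k => t k ≠ j), ht j, fun k hk => ?_⟩
      have hk' : t k ≠ j := by simpa using hk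
      have h1 : cnt t (t k) + cnt t j ≤ N := by
        have h2 := sum_cnt t
        rw [Fintype.card_fin] at h2
        have h3 : ∑ i ∈ {t k, j}, cnt t i ≤ ∑ i, cnt t i :=
          Finset.sum_le_sum_of_subset (Finset.subset_univ _)
        rw [Finset.sum_pair hk', h2] at h3
        exact h3
      rw [div_le_div_iff₀ hNr (by norm_num)]
      have : cnt t (t k) * 2 ≤ 1 * N := by omega
      exact_mod_cast this
    · push Not at h
      refine ⟨univ, by simpa using hK, fun k _ => ?_⟩
      rw [div_le_div_iff₀ hNr (by norm_num)]
      have := h (t k)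
      have : cnt t (t k) * 2 ≤ 1 * N := by omega
      exact_mod_cast this
  unfold qq
  rw [← Finset.prod_mul_prod_compl S]
  calc _ ≤ (∏ k ∈ S, (1 / 2 : ℝ)) * ∏ k ∈ Sᶜ, (1 : ℝ) := by
        refine mul_le_mul (Finset.prod_le_prod (fun k _ => hq0 _) hSq)
          (Finset.prod_le_prod (fun k _ => hq0 _) (fun k _ => hq1 _))
          (Finset.prod_nonneg fun k _ => hq0 _) (by positivity)
    _ = (1 / 2) ^ S.card := by simp
    _ ≤ _ := pow_le_pow_of_le_one (by norm_num) (by norm_num) hS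

end row


section rowest
variable {p : ℕ} [NeZero p]

theorem BB_shift {ι : Type*} [Fintype ι] [DecidableEq ι] (m : ZMod p → ℕ)
    (hc : ∑ j : ZMod p, j * (m j : ZMod p) = 0) (s : ι → ZMod p) (c : ZMod p) :
    BB m (fun l => s l + c) = BB m s := by
  unfold BB
  refine Finset.sum_congr rfl fun a ha => ?_
  rw [mem_TT] at ha
  congr 1
  have h1 : ∑ l, a l = 0 := by
    rw [sum_cnt_mul a (fun j => j), ha, ← hc]
    exact Finset.sum_congr rfl fun j _ => mul_comm _ _
  simp only [add_mul, Finset.sum_add_distrib, ← Finset.mul_sum, h1, mul_zero, add_zero]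

theorem BB_zero {ι : Type*} [Fintype ι] [DecidableEq ι] (m : ZMod p → ℕ) :
    BB m (fun _ : ι => 0) = ((TT ι m).card : ℂ) := by
  unfold BB
  simp

theorem eta_sq (m : ZMod p → ℕ) (M : ℕ) (hM0 : 0 < M) (hm : ∑ j, m j = M) (X : ℝ)
    (hX : X ^ 2 = 1 / p * ∑ j, ((p : ℝ) * m j / M - 1) ^ 2) :
    ∑ s ∈ univ.erase (0 : ZMod p), (‖etaHat m s‖ / M) ^ 2 = X ^ 2 := by
  have hMr : (0 : ℝ) < M := by exact_mod_cast hM0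
  have hp : (0 : ℝ) < p := by exact_mod_cast Nat.pos_of_ne_zero (NeZero.ne p)
  have h1 := planch_id (fun j => (m j : ℂ))
  have h0 : etaHat m (0 : ZMod p) = (M : ℂ) := by
    unfold etaHat; simp [← hm]
  have h2 : ∑ s : ZMod p, ‖etaHat m s‖ ^ 2 = p * ∑ j, (m j : ℝ) ^ 2 := by
    unfold etaHat
    rw [h1]; simp
  rw [← Finset.add_sum_erase _ _ (mem_univ 0), h0] at h2
  have hs : ∑ j, (m j : ℝ) = M := by exact_mod_cast hm
  simp only [div_pow]
  rw [← Finset.sum_div, hX]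
  have h3 : ∑ j, ((p : ℝ) * m j / M - 1) ^ 2 = (p / M) ^ 2 * ∑ j, (m j : ℝ) ^ 2 - 2 * (p / M) * ∑ j, (m j : ℝ) + p := by
    have : ∀ j, ((p : ℝ) * m j / M - 1) ^ 2 = (p / M) ^ 2 * (m j : ℝ) ^ 2 - 2 * (p / M) * (m j : ℝ) + 1 := by
      intro j; ring
    simp only [this, Finset.sum_add_distrib, Finset.sum_sub_distrib, ← Finset.mul_sum]
    simp [ZMod.card]
  rw [h3, hs]
  simp only [Complex.norm_natCast] at h2
  have h4 : ∑ s ∈ univ.erase (0 : ZMod p), ‖etaHat m s‖ ^ 2 = p * ∑ j, (m j : ℝ) ^ 2 - (M : ℝ) ^ 2 := by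
    linarith
  rw [h4]
  field_simp
  ring

/-- sum over sequences with support size k -/
theorem supp_sum (N k : ℕ) (hN : 0 < N) (hk : 0 < k) (w : ZMod p → ℝ) (hw : ∀ s, 0 ≤ w s)
    (hw0 : w 0 = 1) (B : ℝ) (hB0 : 0 < B) (hB : ∑ s ∈ univ.erase (0 : ZMod p), w s ≤ B) :
    ∑ t : Fin N → ZMod p with (univ.filter (fun l => t l ≠ 0)).card = k, ∏ l, w (t l)
      ≤ (3 * N * B / k) ^ k := by
  have hNr : (0 : ℝ) < N := by exact_mod_cast hN
  have hkr : (0 : ℝ) < k := by exact_mod_cast hk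
  set z : ℝ := k / (B * N) with hz
  have hz0 : 0 < z := by positivity
  have h1 : ∑ t : Fin N → ZMod p, ∏ l, (w (t l) * (if t l = 0 then 1 else z))
      = (1 + z * ∑ s ∈ univ.erase (0 : ZMod p), w s) ^ N := by
    rw [sum_all_prod (fun s => w s * (if s = 0 then 1 else z)), Fintype.card_fin,
      ← Finset.add_sum_erase _ _ (mem_univ 0), hw0, Finset.mul_sum]
    congr 2
    · simp
    · refine Finset.sum_congr rfl fun s hs => ?_
      rw [if_neg (Finset.ne_of_mem_erase hs), mul_comm]
  have h2 : z ^ k * ∑ t : Fin N → ZMod p with (univ.filter (fun l => t l ≠ 0)).card = k, ∏ l, w (t l)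
      ≤ (1 + z * B) ^ N := by
    calc _ = ∑ t : Fin N → ZMod p with (univ.filter (fun l => t l ≠ 0)).card = k,
            ∏ l, (w (t l) * (if t l = 0 then 1 else z)) := by
          rw [Finset.mul_sum]
          refine Finset.sum_congr rfl fun t ht => ?_
          rw [mem_filter] at ht
          rw [Finset.prod_mul_distrib, mul_comm]
          congr 1
          rw [← ht.2]
          rw [← Finset.prod_const, Finset.prod_filter]
          refine Finset.prod_congr rfl fun l _ => ?_
          by_cases h : t l = 0 <;> simp [h]
      _ ≤ ∑ t : Fin N → ZMod p, ∏ l, (w (t l) * (if t l = 0 then 1 else z)) := by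
          refine Finset.sum_le_sum_of_subset_of_nonneg (Finset.filter_subset _ _) fun t _ _ => ?_
          refine Finset.prod_nonneg fun l _ => mul_nonneg (hw _) ?_
          split_ifs <;> positivity
      _ = _ := h1
      _ ≤ _ := by
          have : 0 ≤ ∑ s ∈ univ.erase (0 : ZMod p), w s := Finset.sum_nonneg fun s _ => hw s
          gcongr
  have h3 : (1 + z * B) ^ N ≤ 3 ^ k := by
    have e1 : 1 + z * B ≤ Real.exp (z * B) := by
      have := Real.add_one_le_exp (z * B); linarith
    calc _ ≤ (Real.exp (z * B)) ^ N := by gcongr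
      _ = (Real.exp 1) ^ k := by
          rw [← Real.exp_nat_mul, ← Real.exp_nat_mul]
          congr 1
          rw [hz]; field_simp
      _ ≤ _ := by
          have := Real.exp_one_lt_d9
          gcongr
          linarith
  have h4 := h2.trans h3
  rw [mul_comm, ← le_div_iff₀ (by positivity), ← div_pow] at h4
  refine h4.trans (le_of_eq ?_)
  congr 1
  rw [hz]; field_simp

theorem pow_aux (r : ℕ) (Y k g p S : ℝ) (hk : 1 ≤ k) (hY : 0 ≤ Y) (hg : 0 ≤ g) (hp : 0 ≤ p)
    (hgr : g ≤ 2 ^ r * (1 / S)) (ha4 : 96 * (Y / k + p * g) ≤ 1 / 4) :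
    (96 * (Y / k + p * g)) ^ (r + 1) ≤ 96 * (Y + p / S) * (1 / 2) ^ r := by
  have h3 : (1 : ℝ) ≤ 2 ^ r := one_le_pow₀ (by norm_num)
  have hYk : Y / k ≤ Y := div_le_self hY hk
  have hY2 : Y ≤ 2 ^ r * Y := by nlinarith
  have hYk0 : 0 ≤ Y / k := by positivity
  have hpg0 : 0 ≤ p * g := by positivity
  have h4 : (96 * (Y / k + p * g)) ^ r ≤ (1 / 4) ^ r := pow_le_pow_left₀ (by positivity) ha4 r
  have h5 : 96 * (Y / k + p * g) ≤ 96 * (2 ^ r * Y + p * (2 ^ r * (1 / S))) := by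
    have := mul_le_mul_of_nonneg_left hgr hp
    linarith
  rw [pow_succ]
  refine (mul_le_mul h4 h5 (by positivity) (by positivity)).trans (le_of_eq ?_)
  have e1 : (1 / 4 : ℝ) ^ r = (1 / 2) ^ r * (1 / 2) ^ r := by rw [← mul_pow]; norm_num
  have e2 : (1 / 2 : ℝ) ^ r * 2 ^ r = 1 := by rw [← mul_pow]; norm_num
  rw [e1]
  generalize (1 / 2 : ℝ) ^ r = a at *
  generalize (2 : ℝ) ^ r = b at *
  linear_combination (96 * a * (Y + p / S)) * e2

theorem near_k (d N k : ℕ) (hd : 3 ≤ d) (hN : 0 < N) (hk : 0 < k) (m : ZMod p → ℕ)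
    (hm : ∑ j, m j = d * N) (X : ℝ) (hX0 : 0 ≤ X)
    (hX : X ^ 2 = 1 / p * ∑ j, ((p : ℝ) * m j / ((d * N : ℕ) : ℝ) - 1) ^ 2)
    (hY : 768 * (N * X ^ 3) ≤ 1) (hK : (768 * (p : ℝ)) ^ 2 * k ≤ N) :
    ∑ t : Fin N → ZMod p with (univ.filter (fun l => t l ≠ 0)).card = k,
        ‖BB m (fun l : Fin N × Fin d => t l.1)‖
      ≤ ((TT (Fin N × Fin d) m).card : ℝ) * (96 * (N * X ^ 3 + p / √N) * (1 / 2) ^ (k - 1)) := by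
  have hNr : (0 : ℝ) < N := by exact_mod_cast hN
  have hN1 : (1 : ℝ) ≤ N := by exact_mod_cast hN
  have hkr : (0 : ℝ) < k := by exact_mod_cast hk
  have hp1 : (1 : ℝ) ≤ p := by exact_mod_cast Nat.pos_of_ne_zero (NeZero.ne p)
  have hM0 : 0 < d * N := by positivity
  have hMr : (0 : ℝ) < ((d * N : ℕ) : ℝ) := by exact_mod_cast hM0
  set g : ℝ := √((k : ℝ) / N) with hg
  have hg0 : 0 < g := Real.sqrt_pos.2 (by positivity)
  have hg2 : g ^ 2 = k / N := Real.sq_sqrt (by positivity)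
  have hpg : 768 * p * g ≤ 1 := by
    have : (768 * p * g) ^ 2 ≤ 1 ^ 2 := by
      rw [mul_pow, hg2, one_pow, ← mul_div_assoc, div_le_one hNr]; exact hK
    exact le_of_sq_le_sq this (by norm_num) |> fun h => h
  have hX8 : X ≤ 1 / 8 := by
    have h1 : X ^ 3 ≤ N * X ^ 3 := by
      have : 0 ≤ X ^ 3 := by positivity
      nlinarith
    by_contra h
    push Not at h
    have : (1 / 8 : ℝ) ^ 3 < X ^ 3 := by gcongr
    norm_num at this
    linarith
  have hg8 : g ≤ 1 / 768 := by nlinarith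
  have hsq := eta_sq m (d * N) hM0 hm X hX
  set η : ZMod p → ℝ := fun s => ‖etaHat m s‖ / ((d * N : ℕ) : ℝ) with hη
  have hη0 : ∀ s, 0 ≤ η s := fun s => by positivity
  have hηX : ∀ s, s ≠ 0 → η s ≤ X := by
    intro s hs
    have h1 : η s ^ 2 ≤ X ^ 2 := by
      rw [← hsq]
      exact Finset.single_le_sum (f := fun s => η s ^ 2) (fun _ _ => sq_nonneg _)
        (Finset.mem_erase.2 ⟨hs, mem_univ _⟩)
    exact le_of_sq_le_sq h1 hX0 |> fun h => h
  set θ : ZMod p → ℝ := fun s => if s = 0 then 1 else 2 * η s + 2 * g with hθ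
  have hθ0 : θ 0 = 1 := by simp [hθ]
  have hθ1 : ∀ s, θ s ≤ 1 := by
    intro s
    by_cases hs : s = 0
    · simp [hθ, hs]
    · simp only [hθ, hs, if_false]
      have := hηX s hs
      linarith
  have hθg : ∀ s, 2 * g ≤ θ s := by
    intro s
    by_cases hs : s = 0
    · simp only [hθ, hs, if_true]; linarith
    · simp only [hθ, hs, if_false]
      have := hη0 s
      linarith
  have hθp : ∀ s, 0 ≤ θ s := fun s => le_trans (by positivity) (hθg s)
  set A : ℝ := ((TT (Fin N × Fin d) m).card : ℝ) with hA
  have hA0 : 0 ≤ A := Nat.cast_nonneg _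
  have hkN : 2 * k ≤ N := by
    have h768 : (2 : ℝ) ≤ (768 * p) ^ 2 := by nlinarith
    have : (2 * k : ℝ) ≤ N := (mul_le_mul_of_nonneg_right h768 hkr.le).trans hK
    exact_mod_cast this
  have hBB : ∀ t : Fin N → ZMod p, (univ.filter (fun l => t l ≠ 0)).card = k →
      ‖BB m (fun l : Fin N × Fin d => t l.1)‖ ≤ A * ∏ l, (θ (t l)) ^ d := by
    intro t ht
    have h1 := BB_near (ι := Fin N × Fin d) m (d * N) (by simp [mul_comm]) hM0 θ η (2 * g) (by positivity)
      (d * k) (by nlinarith) (by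
        push_cast
        rw [mul_pow, hg2]
        have e : (2 : ℝ) ^ 2 * (k / N) * (d * N) = 4 * (d * k) := by field_simp; norm_num
        rw [e]
        have : (0 : ℝ) ≤ d * k := by positivity
        linarith) (by
        intro s _
        simp only [hη]
        apply le_of_eq; field_simp) hθ0 hθ1 (by
        intro s hs; simp [hθ, hs]) hθg (d * k) le_rfl (fun l => t l.1) (by
        apply le_of_eq
        rw [← ht]
        have : univ.filter (fun l : Fin N × Fin d => t l.1 ≠ 0) = (univ.filter (fun l => t l ≠ 0)) ×ˢ univ := by
          ext ⟨a, b⟩; simp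
        rw [this, Finset.card_product]; simp [mul_comm])
    refine h1.trans (le_of_eq ?_)
    rw [Fintype.prod_prod_type]
    congr 1
    simp
  have hB : ∑ s ∈ univ.erase (0 : ZMod p), (θ s) ^ d ≤ 32 * (X ^ 3 + p * g ^ 3) := by
    have hbd : ∀ s ∈ univ.erase (0 : ZMod p), (θ s) ^ d ≤ 32 * X * η s ^ 2 + 32 * g ^ 3 := by
      intro s hs
      have hs0 := Finset.ne_of_mem_erase hs
      have h1 : θ s ^ d ≤ θ s ^ 3 := pow_le_pow_of_le_one (hθp s) (hθ1 s) hd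
      refine h1.trans ?_
      simp only [hθ, hs0, if_false]
      have h2 := hη0 s
      have h3 := hηX s hs0
      have h4 : (2 * η s + 2 * g) ^ 3 ≤ 32 * η s ^ 3 + 32 * g ^ 3 := by
        nlinarith [mul_nonneg (add_nonneg h2 hg0.le) (sq_nonneg (η s - g))]
      have h5 : η s ^ 3 ≤ X * η s ^ 2 := by
        rw [pow_succ, mul_comm]; gcongr
      linarith
    refine (Finset.sum_le_sum hbd).trans ?_
    rw [Finset.sum_add_distrib, ← Finset.mul_sum, hsq, Finset.sum_const, nsmul_eq_mul]
    have hc : ((univ.erase (0 : ZMod p)).card : ℝ) ≤ p := by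
      have := Finset.card_le_univ (univ.erase (0 : ZMod p))
      rw [ZMod.card] at this
      exact_mod_cast this
    have : ((univ.erase (0 : ZMod p)).card : ℝ) * (32 * g ^ 3) ≤ p * (32 * g ^ 3) := by gcongr
    nlinarith
  have hsupp := supp_sum N k hN hk (fun s => θ s ^ d) (fun s => pow_nonneg (hθp s) d) (by simp [hθ0])
    (32 * (X ^ 3 + p * g ^ 3)) (by positivity) hB
  have hstep : ∑ t : Fin N → ZMod p with (univ.filter (fun l => t l ≠ 0)).card = k,
        ‖BB m (fun l : Fin N × Fin d => t l.1)‖ ≤ A * (3 * N * (32 * (X ^ 3 + p * g ^ 3)) / k) ^ k := by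
    refine le_trans (Finset.sum_le_sum fun t ht => hBB t (mem_filter.1 ht).2) ?_
    rw [← Finset.mul_sum]
    exact mul_le_mul_of_nonneg_left hsupp hA0
  refine hstep.trans (mul_le_mul_of_nonneg_left ?_ hA0)
  set Y : ℝ := N * X ^ 3 with hYdef
  have hY0 : 0 ≤ Y := by positivity
  have ha : 3 * N * (32 * (X ^ 3 + p * g ^ 3)) / k = 96 * (Y / k + p * g) := by
    have : (N : ℝ) * g ^ 3 = k * g := by
      rw [pow_succ, hg2]; field_simp
    calc _ = 96 * (N * X ^ 3 / k + p * (N * g ^ 3) / k) := by ring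
      _ = _ := by rw [this, ← hYdef]; field_simp
  rw [ha]
  have hk1 : (1 : ℝ) ≤ k := by exact_mod_cast hk
  have hYk : Y / k ≤ Y := div_le_self hY0 hk1
  have ha4 : 96 * (Y / k + p * g) ≤ 1 / 4 := by linarith
  have ha0 : 0 ≤ 96 * (Y / k + p * g) := by positivity
  obtain ⟨r, rfl⟩ : ∃ r, k = r + 1 := ⟨k - 1, by omega⟩
  rw [Nat.add_sub_cancel]
  have hgr : g ≤ 2 ^ r * (1 / √N) := by
    rw [hg, Real.sqrt_div (by positivity), div_eq_mul_one_div]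
    refine mul_le_mul_of_nonneg_right ?_ (by positivity)
    rw [Real.sqrt_le_left (by positivity)]
    have h1 : r < 2 ^ r := Nat.lt_two_pow_self
    have h2 : ((r + 1 : ℕ) : ℝ) ≤ 2 ^ r := by exact_mod_cast h1
    have h3 : (1 : ℝ) ≤ 2 ^ r := one_le_pow₀ (by norm_num)
    nlinarith
  exact pow_aux r Y ((r + 1 : ℕ) : ℝ) g p (√N) hk1 hY0 (by positivity) (by positivity) hgr ha4

end rowest


section rowest2
variable {p : ℕ} [NeZero p]

theorem far_t (d N K : ℕ) (hd : 3 ≤ d) (hN : 0 < N) (hKN : K ≤ N) (m : ZMod p → ℕ)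
    (hm : ∑ j, m j = d * N) (X : ℝ)
    (hX : X ^ 2 = 1 / p * ∑ j, ((p : ℝ) * m j / ((d * N : ℕ) : ℝ) - 1) ^ 2)
    (t : Fin N → ZMod p) (ht : ∀ c, K ≤ (univ.filter (fun l => t l ≠ c)).card) :
    ‖BB m (fun l : Fin N × Fin d => t l.1)‖ ≤ ((TT (Fin N × Fin d) m).card : ℝ) *
      ((((d * N : ℕ) : ℝ) + 1) ^ p * (√((1 + X ^ 2) ^ N) ^ d * (qq t * √((1 / 2) ^ K)))) := by
  have hp : (0 : ℝ) < p := by exact_mod_cast Nat.pos_of_ne_zero (NeZero.ne p)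
  have hM0 : 0 < d * N := by positivity
  have hMr : (0 : ℝ) < ((d * N : ℕ) : ℝ) := by exact_mod_cast hM0
  have hq0 := qq_nonneg t
  have hqK := qq_far N K hN hKN t ht
  have hsumr : ∑ j, ((p : ℝ) * m j / ((d * N : ℕ) : ℝ)) ^ 2 = p * (1 + X ^ 2) := by
    rw [hX]
    have h3 : ∀ j, ((p : ℝ) * m j / ((d * N : ℕ) : ℝ) - 1) ^ 2 = ((p : ℝ) * m j / ((d * N : ℕ) : ℝ)) ^ 2
        - 2 * (p / ((d * N : ℕ) : ℝ)) * m j + 1 := by intro j; ring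
    have hs : ∑ j, (m j : ℝ) = ((d * N : ℕ) : ℝ) := by rw [← hm]; push_cast; rfl
    simp only [h3, Finset.sum_add_distrib, Finset.sum_sub_distrib, ← Finset.mul_sum, hs]
    simp only [sum_const, card_univ, ZMod.card, nsmul_eq_mul, mul_one]
    field_simp
    ring
  refine BB_far m (d * N) (by simp [mul_comm]) hM0 hm _ _ ?_
  intro x hx
  set L : ZMod p → ℝ := fun s => ‖∑ j, (((p : ℝ) * m j / ((d * N : ℕ) : ℝ) : ℝ) : ℂ) * x j * ZMod.stdAddChar (s * j)‖ with hL
  have hL0 : ∀ s, 0 ≤ L s := fun s => norm_nonneg _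
  have hpars : ∑ s, L s ^ 2 = p * (p * (1 + X ^ 2)) := by
    simp only [hL]
    rw [planch_id (fun j => (((p : ℝ) * m j / ((d * N : ℕ) : ℝ) : ℝ) : ℂ) * x j), ← hsumr]
    congr 1
    refine Finset.sum_congr rfl fun j _ => ?_
    rw [norm_mul, hx, mul_one, Complex.norm_real, Real.norm_eq_abs, sq_abs]
  have hg := gibbs N hN t (fun s => L s ^ 2) (fun s => sq_nonneg _) _ hpars.le
  set Z : ℝ := ∏ k, L (t k) with hZ
  have hZ0 : 0 ≤ Z := Finset.prod_nonneg fun k _ => hL0 _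
  have hprod : ∏ l : Fin N × Fin d, L (t l.1) = Z ^ d := by
    rw [Fintype.prod_prod_type]
    simp only [Finset.prod_const, Finset.card_univ, Fintype.card_fin]
    rw [Finset.prod_pow]
  change ∏ l : Fin N × Fin d, L (t l.1) ≤ _
  rw [hprod]
  have hg2 : Z ^ 2 ≤ (p * (p * (1 + X ^ 2))) ^ N * qq t := by
    rw [hZ, ← Finset.prod_pow]; exact hg
  have hZle : Z ≤ (p : ℝ) ^ N * (√((1 + X ^ 2) ^ N) * √(qq t)) := by
    rw [← Real.sqrt_mul (by positivity)]
    have e : (p : ℝ) ^ N = √(((p : ℝ) ^ N) ^ 2) := (Real.sqrt_sq (by positivity)).symm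
    rw [e, ← Real.sqrt_mul (by positivity)]
    refine Real.le_sqrt_of_sq_le (hg2.trans (le_of_eq ?_))
    rw [← mul_assoc, mul_pow, mul_pow]; ring
  have hqle : √(qq t) ^ d ≤ qq t * √((1 / 2) ^ K) := by
    have h1 : √(qq t) ≤ 1 := by
      rw [Real.sqrt_le_one]
      exact hqK.trans (pow_le_one₀ (by norm_num) (by norm_num))
    calc √(qq t) ^ d ≤ √(qq t) ^ 3 := pow_le_pow_of_le_one (Real.sqrt_nonneg _) h1 hd
      _ = qq t * √(qq t) := by rw [pow_succ, Real.sq_sqrt hq0]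
      _ ≤ _ := mul_le_mul_of_nonneg_left (Real.sqrt_le_sqrt hqK) hq0
  calc Z ^ d ≤ ((p : ℝ) ^ N * (√((1 + X ^ 2) ^ N) * √(qq t))) ^ d := pow_le_pow_left₀ hZ0 hZle d
    _ = (p : ℝ) ^ (d * N) * (√((1 + X ^ 2) ^ N) ^ d * √(qq t) ^ d) := by
        rw [mul_pow, mul_pow, ← pow_mul, mul_comm N d]
    _ ≤ _ := by
        refine mul_le_mul_of_nonneg_left (mul_le_mul_of_nonneg_left hqle (by positivity)) (by positivity)

theorem row_est (d N K : ℕ) (hd : 3 ≤ d) (hN : 0 < N) (m : ZMod p → ℕ)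
    (hm : ∑ j, m j = d * N) (hc : ∑ j : ZMod p, j * (m j : ZMod p) = 0) (X : ℝ) (hX0 : 0 ≤ X)
    (hX : X ^ 2 = 1 / p * ∑ j, ((p : ℝ) * m j / ((d * N : ℕ) : ℝ) - 1) ^ 2)
    (hY : 768 * (N * X ^ 3) ≤ 1) (hK : (768 * (p : ℝ)) ^ 2 * K ≤ N) :
    |(p : ℝ) ^ N * rowCount p d N m / (p * ((TT (Fin N × Fin d) m).card : ℝ)) - 1| ≤
      192 * (N * X ^ 3 + p / √N) +
      (((d * N : ℕ) : ℝ) + 1) ^ p * ((N : ℝ) + 1) ^ p * √((1 + X ^ 2) ^ N) ^ d * √((1 / 2) ^ K) := by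
  classical
  have hp : (0 : ℝ) < p := by exact_mod_cast Nat.pos_of_ne_zero (NeZero.ne p)
  have hp1 : (1 : ℝ) ≤ p := by exact_mod_cast Nat.pos_of_ne_zero (NeZero.ne p)
  have hNr : (0 : ℝ) < N := by exact_mod_cast hN
  have hA0 : 0 < (TT (Fin N × Fin d) m).card := card_TT_pos m (by rw [hm]; simp [mul_comm])
  set A : ℝ := ((TT (Fin N × Fin d) m).card : ℝ) with hA
  have hAr : 0 < A := by rw [hA]; exact_mod_cast hA0
  set Bt : (Fin N → ZMod p) → ℂ := fun t => BB m (fun l : Fin N × Fin d => t l.1) with hBt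
  have hKN : 2 * K < N := by
    rcases Nat.eq_zero_or_pos K with h | h
    · subst h; simpa using hN
    · have hKr : (0 : ℝ) < K := by exact_mod_cast h
      have h768 : (3 : ℝ) ≤ (768 * p) ^ 2 := by nlinarith
      have : (2 * K : ℝ) < N := by
        have := (mul_le_mul_of_nonneg_right h768 hKr.le).trans hK
        linarith
      exact_mod_cast this
  let near : ZMod p → Finset (Fin N → ZMod p) := fun c => univ.filter (fun t => (univ.filter (fun l => t l ≠ c)).card ≤ K)
  have hdisj : ∀ c ∈ (univ : Finset (ZMod p)), ∀ c' ∈ (univ : Finset (ZMod p)), c ≠ c' → Disjoint (near c) (near c') := by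
    intro c _ c' _ hcc
    rw [Finset.disjoint_left]
    intro t ht ht'
    simp only [near, mem_filter, mem_univ, true_and] at ht ht'
    have hU : (univ : Finset (Fin N)) ⊆ (univ.filter (fun l => t l ≠ c)) ∪ (univ.filter (fun l => t l ≠ c')) := by
      intro l _
      simp only [mem_union, mem_filter, mem_univ, true_and]
      by_contra h
      push Not at h
      exact hcc (h.1.symm.trans h.2)
    have h1 := (Finset.card_le_card hU).trans (Finset.card_union_le _ _)
    rw [Finset.card_univ, Fintype.card_fin] at h1
    omega
  -- near sum around zero
  have hn0 : ‖∑ t ∈ near 0, Bt t - A‖ ≤ A * (192 * (N * X ^ 3 + p / √N)) := by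
    have h0mem : (fun _ => 0) ∈ near 0 := by simp [near]
    have hB0 : Bt (fun _ => 0) = A := by simp only [hBt]; rw [BB_zero, hA]; simp
    rw [← Finset.add_sum_erase _ _ h0mem, hB0, add_sub_cancel_left]
    refine (norm_sum_le _ _).trans ?_
    have hsub : ∑ t ∈ (near 0).erase (fun _ => 0), ‖Bt t‖ ≤ ∑ k ∈ Finset.Icc 1 K,
        ∑ t : Fin N → ZMod p with (univ.filter (fun l => t l ≠ 0)).card = k, ‖Bt t‖ := by
      have hmaps : ∀ t ∈ (near 0).erase (fun _ => 0), (univ.filter (fun l => t l ≠ 0)).card ∈ Finset.Icc 1 K := by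
        intro t ht
        rw [Finset.mem_erase] at ht
        have h2 : (univ.filter (fun l => t l ≠ 0)).card ≤ K := by simpa [near] using ht.2
        rw [Finset.mem_Icc]
        refine ⟨?_, h2⟩
        rw [Nat.one_le_iff_ne_zero]
        intro h3
        apply ht.1
        funext l
        by_contra h4
        rw [Finset.card_eq_zero] at h3
        have : l ∈ univ.filter (fun l => t l ≠ 0) := by simpa using h4
        rw [h3] at this
        simp at this
      rw [← Finset.sum_fiberwise_of_maps_to hmaps]
      refine Finset.sum_le_sum fun k _ => ?_
      refine Finset.sum_le_sum_of_subset_of_nonneg ?_ (fun _ _ _ => norm_nonneg _)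
      intro t ht
      rw [mem_filter] at ht ⊢
      exact ⟨mem_univ _, ht.2⟩
    refine hsub.trans ?_
    have hk : ∀ k ∈ Finset.Icc 1 K, ∑ t : Fin N → ZMod p with (univ.filter (fun l => t l ≠ 0)).card = k, ‖Bt t‖
        ≤ A * (96 * (N * X ^ 3 + p / √N) * (1 / 2) ^ (k - 1)) := by
      intro k hk
      rw [Finset.mem_Icc] at hk
      refine near_k d N k hd hN hk.1 m hm X hX0 hX hY (le_trans ?_ hK)
      have : (k : ℝ) ≤ K := by exact_mod_cast hk.2
      gcongr
    refine (Finset.sum_le_sum hk).trans ?_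
    rw [← Finset.mul_sum, ← Finset.mul_sum]
    have hgeom : ∑ k ∈ Finset.Icc 1 K, (1 / 2 : ℝ) ^ (k - 1) ≤ 2 := by
      have e : ∑ k ∈ Finset.Icc 1 K, (1 / 2 : ℝ) ^ (k - 1) = ∑ k ∈ Finset.range K, (1 / 2 : ℝ) ^ k := by
        rw [← Finset.Ico_add_one_right_eq_Icc, Finset.sum_Ico_eq_sum_range]
        simp
      rw [e, geom_sum_eq (by norm_num)]
      have : (0 : ℝ) ≤ (1 / 2) ^ K := by positivity
      rw [div_le_iff_of_neg (by norm_num)]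
      linarith
    refine mul_le_mul_of_nonneg_left ?_ hAr.le
    have : 0 ≤ N * X ^ 3 + p / √N := by positivity
    nlinarith
  have hshift : ∀ c, ∑ t ∈ near c, Bt t = ∑ t ∈ near 0, Bt t := by
    intro c
    refine Finset.sum_bij' (fun t _ => fun l => t l + (-c)) (fun t _ => fun l => t l + c) ?_ ?_ ?_ ?_ ?_
    · intro t ht
      simp only [near, mem_filter, mem_univ, true_and, ← sub_eq_add_neg, ne_eq, sub_eq_zero] at ht ⊢
      exact ht
    · intro t ht
      simp only [near, mem_filter, mem_univ, true_and, ne_eq, add_eq_right] at ht ⊢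
      exact ht
    · intro t _; funext l; simp
    · intro t _; funext l; simp
    · intro t _
      simp only [hBt]
      exact (BB_shift m hc (fun l : Fin N × Fin d => t l.1) (-c)).symm
  set U := (univ : Finset (ZMod p)).biUnion near with hU
  have hUsum : ∑ t ∈ U, Bt t = p * ∑ t ∈ near 0, Bt t := by
    rw [hU, Finset.sum_biUnion hdisj]
    simp only [hshift, Finset.sum_const, Finset.card_univ, ZMod.card, nsmul_eq_mul]
  set F : ℝ := (((d * N : ℕ) : ℝ) + 1) ^ p * ((N : ℝ) + 1) ^ p * √((1 + X ^ 2) ^ N) ^ d * √((1 / 2) ^ K) with hF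
  have hF0 : 0 ≤ F := by positivity
  have hfar : ‖∑ t ∈ Uᶜ, Bt t‖ ≤ A * F := by
    refine (norm_sum_le _ _).trans ?_
    have hb : ∀ t ∈ Uᶜ, ‖Bt t‖ ≤ A * ((((d * N : ℕ) : ℝ) + 1) ^ p * (√((1 + X ^ 2) ^ N) ^ d * (qq t * √((1 / 2) ^ K)))) := by
      intro t ht
      refine far_t d N K hd hN (by omega) m hm X hX t ?_
      intro c
      by_contra h
      push Not at h
      rw [Finset.mem_compl] at ht
      apply ht
      rw [hU, Finset.mem_biUnion]
      exact ⟨c, mem_univ _, by simp only [near, mem_filter, mem_univ, true_and]; exact h.le⟩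
    refine (Finset.sum_le_sum hb).trans ?_
    rw [← Finset.mul_sum]
    refine mul_le_mul_of_nonneg_left ?_ hAr.le
    have hs : ∑ t ∈ Uᶜ, qq t ≤ ((N : ℝ) + 1) ^ p := by
      have := sum_qq (κ := ZMod p) N hN
      rw [ZMod.card] at this
      exact (Finset.sum_le_sum_of_subset_of_nonneg (Finset.subset_univ _) (fun t _ _ => qq_nonneg t)).trans this
    rw [← Finset.mul_sum, ← Finset.mul_sum, ← Finset.sum_mul]
    calc _ ≤ (((d * N : ℕ) : ℝ) + 1) ^ p * (√((1 + X ^ 2) ^ N) ^ d * (((N : ℝ) + 1) ^ p * √((1 / 2) ^ K))) := by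
          gcongr
      _ = _ := by rw [hF]; ring
  have htot := rowCount_eq d N m
  rw [← Finset.sum_add_sum_compl U] at htot
  change _ = ∑ t ∈ U, Bt t + ∑ t ∈ Uᶜ, Bt t at htot
  rw [hUsum] at htot
  have hE : (((p : ℝ) ^ N * rowCount p d N m - p * A : ℝ) : ℂ) = p * (∑ t ∈ near 0, Bt t - A) + ∑ t ∈ Uᶜ, Bt t := by
    push_cast
    rw [htot]; ring
  have hE2 : |(p : ℝ) ^ N * rowCount p d N m - p * A| ≤ p * (A * (192 * (N * X ^ 3 + p / √N))) + A * F := by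
    rw [← Real.norm_eq_abs, ← Complex.norm_real, hE]
    refine (norm_add_le _ _).trans (add_le_add ?_ hfar)
    rw [norm_mul, Complex.norm_natCast]
    exact mul_le_mul_of_nonneg_left hn0 hp.le
  have hpA : 0 < p * A := by positivity
  have e1 : (p : ℝ) ^ N * rowCount p d N m / (p * A) - 1 = ((p : ℝ) ^ N * rowCount p d N m - p * A) / (p * A) := by
    field_simp
  rw [e1, abs_div, abs_of_pos hpA, div_le_iff₀ hpA]
  refine hE2.trans ?_
  have : A * F ≤ F * (p * A) := by
    have : 0 ≤ A * F := by positivity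
    nlinarith
  nlinarith

end rowest2


section comb
variable {p : ℕ} [NeZero p]

/-- symmetrised count matrix of a sequence of pairs -/
def cntM {E : ℕ} (f : Fin E → ZMod p × ZMod p) (i j : ZMod p) : ℕ := cnt f (i, j) + cnt f (j, i)

/-- degree vector -/
def Rf {E : ℕ} (f : Fin E → ZMod p × ZMod p) (i : ZMod p) : ℕ :=
  cnt (fun l => (f l).1) i + cnt (fun l => (f l).2) i

theorem sum_cnt_fst {E : ℕ} (f : Fin E → ZMod p × ZMod p) (i : ZMod p) :
    ∑ j, cnt f (i, j) = cnt (fun l => (f l).1) i := by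
  unfold cnt
  rw [Finset.card_eq_sum_card_fiberwise (f := fun l => (f l).2) (t := univ) (fun _ _ => mem_univ _)]
  refine Finset.sum_congr rfl fun j _ => ?_
  rw [Finset.filter_filter]
  congr 1
  ext l
  simp [Prod.ext_iff]

theorem sum_cnt_snd {E : ℕ} (f : Fin E → ZMod p × ZMod p) (i : ZMod p) :
    ∑ j, cnt f (j, i) = cnt (fun l => (f l).2) i := by
  unfold cnt
  rw [Finset.card_eq_sum_card_fiberwise (f := fun l => (f l).1) (t := univ) (fun _ _ => mem_univ _)]
  refine Finset.sum_congr rfl fun j _ => ?_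
  rw [Finset.filter_filter]
  congr 1
  ext l
  simp [Prod.ext_iff, and_comm]

theorem sum_cntM {E : ℕ} (f : Fin E → ZMod p × ZMod p) (i : ZMod p) :
    ∑ j, cntM f i j = Rf f i := by
  unfold cntM Rf
  rw [Finset.sum_add_distrib, sum_cnt_fst, sum_cnt_snd]

theorem sum_Rf {E : ℕ} (f : Fin E → ZMod p × ZMod p) : ∑ i, Rf f i = 2 * E := by
  unfold Rf
  rw [Finset.sum_add_distrib, sum_cnt, sum_cnt]
  simp; ring

theorem cntM_symm {E : ℕ} (f : Fin E → ZMod p × ZMod p) (i j : ZMod p) : cntM f i j = cntM f j i := by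
  unfold cntM; ring

theorem cntM_even {E : ℕ} (f : Fin E → ZMod p × ZMod p) (i : ZMod p) : Even (cntM f i i) := ⟨_, rfl⟩

/-- number of pair sequences with given degrees -/
theorem card_Rf (E : ℕ) (R : ZMod p → ℕ) :
    (univ.filter (fun f : Fin E → ZMod p × ZMod p => Rf f = R)).card = (TT (Fin E ⊕ Fin E) R).card := by
  refine Finset.card_bij' (fun f _ => Sum.elim (fun l => (f l).1) (fun l => (f l).2))
    (fun a _ => fun l => (a (Sum.inl l), a (Sum.inr l))) ?_ ?_ ?_ ?_
  · intro f hf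
    rw [mem_TT, ← (mem_filter.1 hf).2]
    funext i
    unfold cnt Rf cnt
    simp only [Finset.card_filter, Fintype.sum_sum_type, Sum.elim_inl, Sum.elim_inr]
    rfl
  · intro a ha
    rw [mem_TT] at ha
    simp only [mem_filter, mem_univ, true_and]
    rw [← ha]
    funext i
    unfold Rf cnt
    simp only [Finset.card_filter, Fintype.sum_sum_type]
  · intro f _; rfl
  · intro a _; funext l; cases l <;> rfl

/-- sorting a pair -/
def srt (z : ZMod p × ZMod p) : ZMod p × ZMod p := if z.1.val ≤ z.2.val then z else (z.2, z.1)

/-- upper triangular type -/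
def kM (M : ZMod p → ZMod p → ℕ) (z : ZMod p × ZMod p) : ℕ :=
  if z.1.val < z.2.val then M z.1 z.2 else if z.1 = z.2 then M z.1 z.1 / 2 else 0

/-- fibre weights -/
def wS (z : ZMod p × ZMod p) : ℕ := if z.1.val < z.2.val then 2 else if z.1 = z.2 then 1 else 0

theorem card_srt (z : ZMod p × ZMod p) : (univ.filter (fun y => srt y = z)).card = wS z := by
  obtain ⟨a, b⟩ := z
  unfold wS
  simp only
  split_ifs with h1 h2
  · have hab : a ≠ b := by rintro rfl; exact lt_irrefl _ h1
    have : univ.filter (fun y => srt y = (a, b)) = {(a, b), (b, a)} := by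
      ext ⟨x, y⟩
      rw [mem_filter]
      simp only [mem_univ, true_and, mem_insert, mem_singleton]
      unfold srt
      simp only
      split_ifs with h
      · constructor
        · intro e; exact Or.inl e
        · rintro (e | e)
          · exact e
          · rw [Prod.mk.injEq] at e; obtain ⟨rfl, rfl⟩ := e; omega
      · simp only [Prod.mk.injEq]
        constructor
        · rintro ⟨rfl, rfl⟩; exact Or.inr ⟨rfl, rfl⟩
        · rintro (⟨rfl, rfl⟩ | ⟨rfl, rfl⟩)
          · exact absurd h1.le h
          · exact ⟨rfl, rfl⟩
    rw [this, Finset.card_pair]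
    simp [hab]
  · subst h2
    have : univ.filter (fun y => srt y = (a, a)) = {(a, a)} := by
      ext ⟨x, y⟩
      rw [mem_filter]
      simp only [mem_univ, true_and, mem_singleton]
      unfold srt
      simp only
      split_ifs with h
      · rfl
      · simp only [Prod.mk.injEq]; tauto
    rw [this, Finset.card_singleton]
  · rw [Finset.card_eq_zero, Finset.filter_eq_empty_iff]
    rintro ⟨x, y⟩ _
    simp only [srt]
    split_ifs with h
    · rw [Prod.mk.injEq]; rintro ⟨rfl, rfl⟩
      exact h2 (ZMod.val_injective p (le_antisymm h (not_lt.1 h1)))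
    · simp only [Prod.mk.injEq]; rintro ⟨rfl, rfl⟩
      exact h1 (not_le.1 h)

theorem cnt_srt {E : ℕ} (f : Fin E → ZMod p × ZMod p) (z : ZMod p × ZMod p) :
    cnt (fun l => srt (f l)) z =
      if z.1.val < z.2.val then cntM f z.1 z.2 else if z.1 = z.2 then cnt f z else 0 := by
  obtain ⟨a, b⟩ := z
  have h1 : cnt (fun l => srt (f l)) (a, b) = ∑ y ∈ univ.filter (fun y => srt y = (a, b)), cnt f y := by
    unfold cnt
    rw [Finset.card_eq_sum_card_fiberwise (f := f) (t := univ.filter (fun y => srt y = (a, b)))]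
    · refine Finset.sum_congr rfl fun y hy => ?_
      rw [Finset.filter_filter]
      congr 1
      ext l
      simp only [mem_filter, mem_univ, true_and] at hy ⊢
      constructor
      · exact fun h => h.2
      · intro h; exact ⟨by rw [h, hy], h⟩
    · intro l hl
      simpa using hl
  have h2 := card_srt (a, b)
  unfold wS at h2
  simp only at h2 ⊢
  rw [h1]
  split_ifs at h2 ⊢ with h3 h4
  · have hab : a ≠ b := by rintro rfl; exact lt_irrefl _ h3
    have hsub : ({(a, b), (b, a)} : Finset (ZMod p × ZMod p)) ⊆ univ.filter (fun y => srt y = (a, b)) := by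
      intro y hy
      simp only [mem_insert, mem_singleton] at hy
      rw [mem_filter]
      refine ⟨mem_univ _, ?_⟩
      unfold srt
      rcases hy with rfl | rfl
      · simp [h3.le]
      · simp [h3]
    have heq := Finset.eq_of_subset_of_card_le hsub (by rw [h2, Finset.card_pair (by simp [hab])])
    rw [← heq, Finset.sum_pair (by simp [hab])]
    rfl
  · subst h4
    have hsub : ({(a, a)} : Finset (ZMod p × ZMod p)) ⊆ univ.filter (fun y => srt y = (a, a)) := by
      intro y hy
      simp only [mem_singleton] at hy
      subst hy
      rw [mem_filter]
      refine ⟨mem_univ _, ?_⟩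
      simp [srt]
    have heq := Finset.eq_of_subset_of_card_le hsub (by rw [h2, Finset.card_singleton])
    rw [← heq, Finset.sum_singleton]
  · rw [Finset.card_eq_zero] at h2
    rw [h2, Finset.sum_empty]

theorem cntM_iff {E : ℕ} (M : ZMod p → ZMod p → ℕ) (hs : ∀ i j, M i j = M j i) (he : ∀ i, Even (M i i))
    (f : Fin E → ZMod p × ZMod p) : cntM f = M ↔ cnt (fun l => srt (f l)) = kM M := by
  constructor
  · intro h
    funext z
    rw [cnt_srt]
    unfold kM
    rw [← h]
    split_ifs with h1 h2
    · rfl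
    · unfold cntM
      obtain ⟨a, b⟩ := z
      simp only at h2
      subst h2
      simp only
      omega
    · rfl
  · intro h
    have hlt : ∀ i j : ZMod p, i.val < j.val → cntM f i j = M i j := by
      intro i j hij
      have := congrFun h (i, j)
      rw [cnt_srt] at this
      unfold kM at this
      simpa [hij] using this
    funext i j
    rcases lt_trichotomy i.val j.val with h1 | h1 | h1
    · exact hlt i j h1
    · have h2 := ZMod.val_injective p h1
      subst h2
      have := congrFun h (i, i)
      rw [cnt_srt] at this
      unfold kM at this
      simp only [lt_irrefl, if_false, if_true] at this
      obtain ⟨r, hr⟩ := he i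
      unfold cntM
      omega
    · rw [cntM_symm, hs]; exact hlt j i h1

theorem card_cntM (E : ℕ) (M : ZMod p → ZMod p → ℕ) (hs : ∀ i j, M i j = M j i) (he : ∀ i, Even (M i i)) :
    (univ.filter (fun f : Fin E → ZMod p × ZMod p => cntM f = M)).card
      = (TT (Fin E) (kM M)).card * ∏ z, wS z ^ kM M z := by
  classical
  have hmaps : ∀ f ∈ (univ.filter (fun f : Fin E → ZMod p × ZMod p => cntM f = M)),
      (fun l => srt (f l)) ∈ TT (Fin E) (kM M) := by
    intro f hf
    rw [mem_TT]
    exact (cntM_iff M hs he f).1 (mem_filter.1 hf).2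
  rw [Finset.card_eq_sum_card_fiberwise hmaps, ← smul_eq_mul, ← Finset.sum_const]
  refine Finset.sum_congr rfl fun g hg => ?_
  rw [mem_TT] at hg
  rw [← hg, ← prod_cnt g wS]
  have : (univ.filter (fun f : Fin E → ZMod p × ZMod p => cntM f = M)).filter (fun f => (fun l => srt (f l)) = g)
      = Fintype.piFinset (fun l => univ.filter (fun y => srt y = g l)) := by
    ext f
    rw [mem_filter, mem_filter, Fintype.mem_piFinset]
    simp only [mem_univ, true_and, mem_filter]
    constructor
    · intro h l; exact congrFun h.2 l
    · intro h
      have h' : (fun l => srt (f l)) = g := funext h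
      exact ⟨(cntM_iff M hs he f).2 (by rw [h', hg]), h'⟩
  rw [this, Fintype.card_piFinset]
  simp only [card_srt]

/-- decomposition of a product over pairs -/
theorem prod_pairs {R : Type*} [CommMonoid R] (F : ZMod p × ZMod p → R) :
    ∏ z, F z = (∏ z ∈ univ.filter (fun q : ZMod p × ZMod p => q.1.val < q.2.val), F z) *
      (∏ i, F (i, i)) * (∏ z ∈ univ.filter (fun q : ZMod p × ZMod p => q.1.val < q.2.val), F (z.2, z.1)) := by
  classical
  rw [← Finset.prod_filter_mul_prod_filter_not univ (fun q : ZMod p × ZMod p => q.1.val < q.2.val), mul_assoc]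
  congr 1
  rw [← Finset.prod_filter_mul_prod_filter_not _ (fun q : ZMod p × ZMod p => q.1 = q.2)]
  congr 1
  · refine Finset.prod_bij' (fun z _ => z.1) (fun i _ => (i, i)) ?_ ?_ ?_ ?_ ?_
    · intro z _; exact mem_univ _
    · intro i _; simp
    · rintro ⟨a, b⟩ h; simp at h; simp [h.2]
    · intro i _; rfl
    · rintro ⟨a, b⟩ h; simp at h; simp [h.2]
  · refine Finset.prod_bij' (fun z _ => (z.2, z.1)) (fun z _ => (z.2, z.1)) ?_ ?_ ?_ ?_ ?_
    · rintro ⟨a, b⟩ h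
      simp only [mem_filter, mem_univ, true_and] at h ⊢
      exact lt_of_le_of_ne (not_lt.1 h.1) (fun e => h.2 (ZMod.val_injective p e).symm)
    · rintro ⟨a, b⟩ h
      simp only [mem_filter, mem_univ, true_and] at h ⊢
      exact ⟨not_lt.2 h.le, fun e => by subst e; exact lt_irrefl _ h⟩
    · intro z _; rfl
    · intro z _; rfl
    · intro z _; rfl

theorem sum_pairs {R : Type*} [AddCommMonoid R] (F : ZMod p × ZMod p → R) :
    ∑ z, F z = (∑ z ∈ univ.filter (fun q : ZMod p × ZMod p => q.1.val < q.2.val), F z) +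
      (∑ i, F (i, i)) + (∑ z ∈ univ.filter (fun q : ZMod p × ZMod p => q.1.val < q.2.val), F (z.2, z.1)) :=
  prod_pairs (R := Multiplicative R) F

theorem sum_kM (E : ℕ) (M : ZMod p → ZMod p → ℕ) (hs : ∀ i j, M i j = M j i) (he : ∀ i, Even (M i i))
    (ht : ∑ i, ∑ j, M i j = 2 * E) :
    (∑ z ∈ univ.filter (fun q : ZMod p × ZMod p => q.1.val < q.2.val), M z.1 z.2) + ∑ i, M i i / 2 = E ∧
     ∑ z, kM M z = E := by
  have h1 : (∑ z ∈ univ.filter (fun q : ZMod p × ZMod p => q.1.val < q.2.val), M z.1 z.2) + ∑ i, M i i / 2 = E := by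
    have h2 := sum_pairs (fun z : ZMod p × ZMod p => M z.1 z.2)
    rw [Fintype.sum_prod_type, ht] at h2
    simp only at h2
    have h3 : ∑ z ∈ univ.filter (fun q : ZMod p × ZMod p => q.1.val < q.2.val), M z.2 z.1
        = ∑ z ∈ univ.filter (fun q : ZMod p × ZMod p => q.1.val < q.2.val), M z.1 z.2 :=
      Finset.sum_congr rfl fun z _ => hs _ _
    have h4 : ∑ i, M i i = 2 * ∑ i, M i i / 2 := by
      rw [Finset.mul_sum]
      refine Finset.sum_congr rfl fun i _ => ?_
      obtain ⟨r, hr⟩ := he i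
      omega
    rw [h3, h4] at h2
    omega
  refine ⟨h1, ?_⟩
  rw [sum_pairs, ← h1]
  have e1 : ∑ z ∈ univ.filter (fun q : ZMod p × ZMod p => q.1.val < q.2.val), kM M z
    = ∑ z ∈ univ.filter (fun q : ZMod p × ZMod p => q.1.val < q.2.val), M z.1 z.2 := by
    refine Finset.sum_congr rfl fun z hz => ?_
    simp [kM, (mem_filter.1 hz).2]
  have e2 : ∑ z ∈ univ.filter (fun q : ZMod p × ZMod p => q.1.val < q.2.val), kM M (z.2, z.1) = 0 := by
    refine Finset.sum_eq_zero fun z hz => ?_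
    have := (mem_filter.1 hz).2
    have h' : z.2 ≠ z.1 := fun e => by rw [e] at this; exact lt_irrefl _ this
    simp [kM, not_lt.2 this.le, h']
  rw [e1, e2, add_zero]
  simp [kM]

theorem card_cntM_fact (E : ℕ) (M : ZMod p → ZMod p → ℕ) (hs : ∀ i j, M i j = M j i) (he : ∀ i, Even (M i i))
    (ht : ∑ i, ∑ j, M i j = 2 * E) :
    (univ.filter (fun f : Fin E → ZMod p × ZMod p => cntM f = M)).card *
      ((∏ z ∈ univ.filter (fun q : ZMod p × ZMod p => q.1.val < q.2.val), (M z.1 z.2).factorial) *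
        (∏ i, (M i i / 2).factorial)) * (∏ i, 2 ^ (M i i / 2)) = 2 ^ E * E.factorial := by
  obtain ⟨h1, h2⟩ := sum_kM E M hs he ht
  have hT := card_TT (ι := Fin E) (kM M) (by rw [h2]; simp)
  rw [Fintype.card_fin] at hT
  have e1 : ∏ z, (kM M z).factorial = (∏ z ∈ univ.filter (fun q : ZMod p × ZMod p => q.1.val < q.2.val), (M z.1 z.2).factorial) *
        (∏ i, (M i i / 2).factorial) := by
    rw [prod_pairs]
    have e2 : ∏ z ∈ univ.filter (fun q : ZMod p × ZMod p => q.1.val < q.2.val), (kM M (z.2, z.1)).factorial = 1 := by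
      refine Finset.prod_eq_one fun z hz => ?_
      have := (mem_filter.1 hz).2
      have h' : z.2 ≠ z.1 := fun e => by rw [e] at this; exact lt_irrefl _ this
      simp [kM, not_lt.2 this.le, h']
    rw [e2, mul_one]
    congr 1
    · refine Finset.prod_congr rfl fun z hz => ?_
      simp [kM, (mem_filter.1 hz).2]
    · simp [kM]
  have e3 : ∏ z, wS z ^ kM M z = 2 ^ (∑ z ∈ univ.filter (fun q : ZMod p × ZMod p => q.1.val < q.2.val), M z.1 z.2) := by
    rw [prod_pairs]
    have e2 : ∏ z ∈ univ.filter (fun q : ZMod p × ZMod p => q.1.val < q.2.val), wS (z.2, z.1) ^ (kM M (z.2, z.1)) = 1 := by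
      refine Finset.prod_eq_one fun z hz => ?_
      have := (mem_filter.1 hz).2
      have h' : z.2 ≠ z.1 := fun e => by rw [e] at this; exact lt_irrefl _ this
      simp [kM, not_lt.2 this.le, h']
    rw [e2, mul_one, ← Finset.prod_pow_eq_pow_sum]
    have e4 : ∏ i : ZMod p, wS (i, i) ^ kM M (i, i) = 1 := Finset.prod_eq_one fun i _ => by simp [wS]
    rw [e4, mul_one]
    refine Finset.prod_congr rfl fun z hz => ?_
    simp [kM, wS, (mem_filter.1 hz).2]
  rw [card_cntM E M hs he, e3, Finset.prod_pow_eq_pow_sum, ← e1, ← hT]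
  set S := ∑ z ∈ univ.filter (fun q : ZMod p × ZMod p => q.1.val < q.2.val), M z.1 z.2
  have e5 : (2 : ℕ) ^ E = 2 ^ S * 2 ^ (∑ i, M i i / 2) := by rw [← pow_add]; congr 1; exact h1.symm
  rw [e5]; ring

end comb


section ident
variable {p : ℕ} [NeZero p]

/-- weight of a pair sequence -/
noncomputable def hh (d n : ℕ) {E : ℕ} (f : Fin E → ZMod p × ZMod p) : ℝ :=
  ((p : ℝ) ^ n)⁻¹ * ((univ.filter (fun a : Fin n → ZMod p => ∀ i, Rf f i = d * cnt a i)).card : ℝ) /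
    ((univ.filter (fun f' : Fin E → ZMod p × ZMod p => Rf f' = Rf f)).card : ℝ)

/-- row factor -/
noncomputable def rho (d : ℕ) (M : ZMod p → ZMod p → ℕ) (i : ZMod p) : ℝ :=
  (p : ℝ) ^ ((∑ j, M i j) / d) * rowCount p d ((∑ j, M i j) / d) (M i) /
    (p * ((TT (Fin ((∑ j, M i j) / d) × Fin d) (M i)).card : ℝ))

theorem hh_nonneg (d n : ℕ) {E : ℕ} (f : Fin E → ZMod p × ZMod p) : 0 ≤ hh d n f := by
  unfold hh
  exact div_nonneg (mul_nonneg (by positivity) (Nat.cast_nonneg _)) (Nat.cast_nonneg _)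

theorem hh_eq (d n : ℕ) (hd : 0 < d) {E : ℕ} (f : Fin E → ZMod p × ZMod p) (hdiv : ∀ i, d ∣ Rf f i) :
    hh d n f = ((p : ℝ) ^ n)⁻¹ * ((TT (Fin n) (fun i => Rf f i / d)).card : ℝ) /
      ((TT (Fin E ⊕ Fin E) (Rf f)).card : ℝ) := by
  unfold hh
  rw [card_Rf]
  congr 4
  ext a
  rw [mem_TT]
  simp only [mem_filter, mem_univ, true_and]
  constructor
  · intro h; funext i; rw [h i]; exact (Nat.mul_div_cancel_left _ hd).symm
  · intro h i; rw [h]; exact (Nat.mul_div_cancel' (hdiv i)).symm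

theorem term_identity (d n E : ℕ) (hd : 0 < d) (hE : 2 * E = d * n) (M : ZMod p → ZMod p → ℕ)
    (hs : ∀ i j, M i j = M j i) (he : ∀ i, Even (M i i)) (ht : ∑ i, ∑ j, M i j = d * n)
    (hdiv : ∀ i, d ∣ ∑ j, M i j) :
    ((2 : ℝ) ^ E * (E.factorial : ℝ) / ((d * n).factorial : ℝ)) *
      (((n.factorial : ℝ) / ∏ i : ZMod p, (((∑ j, M i j) / d).factorial : ℝ)) *
              (∏ q ∈ Finset.univ.filter (fun q : ZMod p × ZMod p => q.1.val < q.2.val),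
                  ((M q.1 q.2).factorial : ℝ)) *
              (∏ i : ZMod p,
                  ((M i i).factorial : ℝ) /
                    (2 ^ (M i i / 2) * ((M i i / 2).factorial : ℝ))) *
              (∏ i : ZMod p, (rowCount p d ((∑ j, M i j) / d) (M i) : ℝ)))
    = ∑ f : Fin E → ZMod p × ZMod p with cntM f = M, (p : ℝ) ^ p * hh d n f * ∏ i, rho d (cntM f) i := by
  have hp : (0 : ℝ) < p := by exact_mod_cast Nat.pos_of_ne_zero (NeZero.ne p)
  have hfp : ∀ k : ℕ, (0 : ℝ) < k.factorial := fun k => by exact_mod_cast Nat.factorial_pos k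
  set ν : ZMod p → ℕ := fun i => (∑ j, M i j) / d with hν
  have hdν : ∀ i, d * ν i = ∑ j, M i j := fun i => Nat.mul_div_cancel' (hdiv i)
  have hνs : ∑ i, ν i = n := by
    apply Nat.eq_of_mul_eq_mul_left hd
    rw [Finset.mul_sum, ← ht]
    exact Finset.sum_congr rfl fun i _ => hdν i
  have h1 := card_cntM_fact E M hs he (by rw [ht, hE])
  have h2 := card_TT (ι := Fin n) ν (by rw [hνs]; simp)
  have h3 := card_TT (ι := Fin E ⊕ Fin E) (fun i => ∑ j, M i j) (by rw [ht, ← hE]; simp; ring)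
  have h4 : ∀ i, (TT (Fin (ν i) × Fin d) (M i)).card * ∏ j, (M i j).factorial = (∑ j, M i j).factorial := by
    intro i
    have := card_TT (ι := Fin (ν i) × Fin d) (M i) (by rw [← hdν]; simp [mul_comm])
    rw [this, ← hdν]; simp [mul_comm]
  have h5 := prod_pairs (fun z : ZMod p × ZMod p => (M z.1 z.2).factorial)
  rw [Fintype.prod_prod_type] at h5
  simp only at h5
  have h5' : ∏ z ∈ univ.filter (fun q : ZMod p × ZMod p => q.1.val < q.2.val), (M z.2 z.1).factorial
        = ∏ z ∈ univ.filter (fun q : ZMod p × ZMod p => q.1.val < q.2.val), (M z.1 z.2).factorial :=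
      Finset.prod_congr rfl fun z _ => by rw [hs]
  rw [h5'] at h5
  have h6 : (∏ i, (TT (Fin (ν i) × Fin d) (M i)).card) * ∏ i, ∏ j, (M i j).factorial = ∏ i, (∑ j, M i j).factorial := by
    rw [← Finset.prod_mul_distrib]
    exact Finset.prod_congr rfl fun i _ => h4 i
  rw [h5] at h6
  -- sum on the right
  have hsum : ∀ f ∈ univ.filter (fun f : Fin E → ZMod p × ZMod p => cntM f = M),
      (p : ℝ) ^ p * hh d n f * ∏ i, rho d (cntM f) i
       = (p : ℝ) ^ p * (((p : ℝ) ^ n)⁻¹ * ((TT (Fin n) ν).card : ℝ) / ((TT (Fin E ⊕ Fin E) (fun i => ∑ j, M i j)).card : ℝ)) * ∏ i, rho d M i := by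
    intro f hf
    have hf' := (mem_filter.1 hf).2
    have hR : Rf f = fun i => ∑ j, M i j := by funext i; rw [← sum_cntM, hf']
    rw [hh_eq d n hd f (by rw [hR]; exact hdiv), hR, hf']
  rw [Finset.sum_congr rfl hsum, Finset.sum_const, nsmul_eq_mul]
  have hrho : ∏ i, rho d M i = (p : ℝ) ^ n * (∏ i, (rowCount p d (ν i) (M i) : ℝ)) / ((p : ℝ) ^ p * ((∏ i, (TT (Fin (ν i) × Fin d) (M i)).card : ℕ) : ℝ)) := by
    unfold rho
    rw [Finset.prod_div_distrib, Finset.prod_mul_distrib, Finset.prod_mul_distrib, Finset.prod_pow_eq_pow_sum,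
      Finset.prod_const, Finset.card_univ, ZMod.card]
    push_cast
    rw [← hνs]
  rw [hrho]
  simp only [Fintype.card_fin, Fintype.card_sum] at h2 h3
  rw [show E + E = d * n by omega] at h3
  have g1 : ((univ.filter (fun f : Fin E → ZMod p × ZMod p => cntM f = M)).card : ℝ) *
      ((∏ z ∈ univ.filter (fun q : ZMod p × ZMod p => q.1.val < q.2.val), ((M z.1 z.2).factorial : ℝ)) *
        (∏ i, ((M i i / 2).factorial : ℝ))) * (∏ i, (2 : ℝ) ^ (M i i / 2)) = 2 ^ E * (E.factorial : ℝ) := by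
    exact_mod_cast h1
  have g2 : ((TT (Fin n) ν).card : ℝ) * ∏ i, ((ν i).factorial : ℝ) = (n.factorial : ℝ) := by exact_mod_cast h2
  have g3 : ((TT (Fin E ⊕ Fin E) (fun i => ∑ j, M i j)).card : ℝ) * ((∏ i, (∑ j, M i j).factorial : ℕ) : ℝ) = ((d * n).factorial : ℝ) := by
    exact_mod_cast h3
  have g6 : ((∏ i, (TT (Fin (ν i) × Fin d) (M i)).card : ℕ) : ℝ) * ((∏ z ∈ univ.filter (fun q : ZMod p × ZMod p => q.1.val < q.2.val), ((M z.1 z.2).factorial : ℝ)) *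
      (∏ i, ((M i i).factorial : ℝ)) * (∏ z ∈ univ.filter (fun q : ZMod p × ZMod p => q.1.val < q.2.val), ((M z.1 z.2).factorial : ℝ)))
      = ((∏ i, (∑ j, M i j).factorial : ℕ) : ℝ) := by exact_mod_cast h6
  rw [Finset.prod_div_distrib, Finset.prod_mul_distrib]
  change _ * ((_ / ∏ i, ((ν i).factorial : ℝ)) * _ * _ * ∏ i, (rowCount p d (ν i) (M i) : ℝ)) = _
  have p1 : 0 < ∏ i, ((ν i).factorial : ℝ) := Finset.prod_pos fun i _ => hfp _
  have p2 : 0 < ∏ z ∈ univ.filter (fun q : ZMod p × ZMod p => q.1.val < q.2.val), ((M z.1 z.2).factorial : ℝ) :=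
    Finset.prod_pos fun i _ => hfp _
  have p3 : 0 < ∏ i, ((M i i).factorial : ℝ) := Finset.prod_pos fun i _ => hfp _
  have p4 : 0 < ∏ i, ((M i i / 2).factorial : ℝ) := Finset.prod_pos fun i _ => hfp _
  have p5 : 0 < ∏ i, (2 : ℝ) ^ (M i i / 2) := Finset.prod_pos fun i _ => by positivity
  have p6 : (0 : ℝ) < ((d * n).factorial : ℝ) := hfp _
  have p7 : (0 : ℝ) < ((∏ i, (∑ j, M i j).factorial : ℕ) : ℝ) := by
    exact_mod_cast Finset.prod_pos fun i _ => Nat.factorial_pos _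
  generalize (∏ i, ((ν i).factorial : ℝ)) = V at *
  generalize (∏ z ∈ univ.filter (fun q : ZMod p × ZMod p => q.1.val < q.2.val), ((M z.1 z.2).factorial : ℝ)) = T at *
  generalize (∏ i, ((M i i).factorial : ℝ)) = G at *
  generalize (∏ i, ((M i i / 2).factorial : ℝ)) = H at *
  generalize (∏ i, (2 : ℝ) ^ (M i i / 2)) = P2 at *
  generalize (((∏ i, (∑ j, M i j).factorial : ℕ) : ℝ)) = W at *
  generalize (((∏ i, (TT (Fin (ν i) × Fin d) (M i)).card : ℕ) : ℝ)) = AA at *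
  generalize ((TT (Fin E ⊕ Fin E) (fun i => ∑ j, M i j)).card : ℝ) = Ar at *
  generalize ((TT (Fin n) ν).card : ℝ) = An at *
  generalize ((univ.filter (fun f : Fin E → ZMod p × ZMod p => cntM f = M)).card : ℝ) = F at *
  generalize (((d * n).factorial : ℝ)) = Q at *
  generalize (∏ i, (rowCount p d (ν i) (M i) : ℝ)) = Cc at *
  have hAA : AA ≠ 0 := by rintro rfl; rw [zero_mul] at g6; exact p7.ne g6
  have hAr : Ar ≠ 0 := by rintro rfl; rw [zero_mul] at g3; exact p6.ne g3
  rw [← g1, ← g2, ← g3, ← g6]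
  field_simp

/-- main regrouping -/
theorem main_sum (d n E : ℕ) (hd : 0 < d) (hE : 2 * E = d * n) (S : Set (ZMod p → ZMod p → ℕ))
    (Q : (ZMod p → ZMod p → ℕ) → Prop) [DecidablePred Q] (hS : ∀ M, M ∈ S ↔ ((∀ i j, M i j = M j i) ∧ (∀ i, Even (M i i)) ∧
                (∑ i : ZMod p, ∑ j : ZMod p, M i j) = d * n ∧
                (∀ i, d ∣ ∑ j, M i j) ∧ Q M)) (G : (ZMod p → ZMod p → ℕ) → ℝ) (c : ℝ)
    (hG : ∀ M ∈ S, c * G M = ∑ f : Fin E → ZMod p × ZMod p with cntM f = M, (p : ℝ) ^ p * hh d n f * ∏ i, rho d (cntM f) i) :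
    c * ∑ᶠ M ∈ S, G M = ∑ f : Fin E → ZMod p × ZMod p with Q (cntM f), (p : ℝ) ^ p * hh d n f * ∏ i, rho d (cntM f) i := by
  classical
  have htot : ∀ f : Fin E → ZMod p × ZMod p, ∑ i, ∑ j, cntM f i j = d * n := by
    intro f
    simp only [sum_cntM, sum_Rf, hE]
  have hS' : S = ↑((univ.filter (fun f : Fin E → ZMod p × ZMod p => cntM f ∈ S)).image cntM) := by
    ext M
    simp only [coe_image, coe_filter, mem_univ, true_and, Set.mem_image, Set.mem_setOf_eq]
    constructor
    · intro hM
      obtain ⟨h1, h2, h3, h4, h5⟩ := (hS M).1 hM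
      have hc := card_cntM_fact E M h1 h2 (by rw [h3, hE])
      have : 0 < (univ.filter (fun f : Fin E → ZMod p × ZMod p => cntM f = M)).card := by
        rcases Nat.eq_zero_or_pos (univ.filter (fun f : Fin E → ZMod p × ZMod p => cntM f = M)).card with h | h
        · rw [h, zero_mul, zero_mul] at hc
          have : 0 < 2 ^ E * E.factorial := by positivity
          omega
        · exact h
      obtain ⟨f, hf⟩ := Finset.card_pos.1 this
      have hf' := (mem_filter.1 hf).2
      exact ⟨f, by rw [hf']; exact hM, hf'⟩
    · rintro ⟨f, hf, rfl⟩; exact hf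
  have e0 : ∑ᶠ M ∈ S, G M = ∑ M ∈ (univ.filter (fun f : Fin E → ZMod p × ZMod p => cntM f ∈ S)).image cntM, G M := by
    conv_lhs => rw [hS']
    exact finsum_mem_coe_finset _ _
  rw [e0, Finset.mul_sum]
  have e1 : ∀ M ∈ (univ.filter (fun f : Fin E → ZMod p × ZMod p => cntM f ∈ S)).image cntM, c * G M
      = ∑ f ∈ (univ.filter (fun f : Fin E → ZMod p × ZMod p => cntM f ∈ S)).filter (fun f => cntM f = M),
        (p : ℝ) ^ p * hh d n f * ∏ i, rho d (cntM f) i := by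
    intro M hM
    have hMS : M ∈ S := by rw [hS']; exact hM
    rw [hG M hMS]
    refine Finset.sum_congr ?_ fun _ _ => rfl
    ext f
    simp only [mem_filter, mem_univ, true_and]
    constructor
    · intro h; exact ⟨by rw [h]; exact hMS, h⟩
    · exact fun h => h.2
  rw [Finset.sum_congr rfl e1, Finset.sum_fiberwise_of_maps_to (fun f hf => Finset.mem_image_of_mem _ hf)]
  refine Finset.sum_subset ?_ ?_
  · intro f hf
    simp only [mem_filter, mem_univ, true_and] at hf ⊢
    exact ((hS _).1 hf).2.2.2.2
  · intro f hf hf'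
    simp only [mem_filter, mem_univ, true_and] at hf hf'
    have hz : hh d n f = 0 := by
      unfold hh
      have : (univ.filter (fun a : Fin n → ZMod p => ∀ i, Rf f i = d * cnt a i)) = ∅ := by
        rw [Finset.filter_eq_empty_iff]
        intro a _ ha
        apply hf'
        rw [hS]
        refine ⟨cntM_symm f, cntM_even f, htot f, fun i => ?_, hf⟩
        rw [sum_cntM, ha i]; exact dvd_mul_right _ _
      rw [this]; simp
    rw [hz]; ring

end ident


section fourier
variable {p : ℕ} [NeZero p]

theorem card_Rf_pos (E : ℕ) (R : ZMod p → ℕ) (hR : ∑ i, R i = 2 * E) :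
    0 < (univ.filter (fun f : Fin E → ZMod p × ZMod p => Rf f = R)).card := by
  rw [card_Rf]
  exact card_TT_pos R (by rw [hR]; simp; ring)

/-- swapping the sums -/
theorem hh_sum (d n E : ℕ) (g : (Fin E → ZMod p × ZMod p) → ℂ) :
    ∑ f, (hh d n f : ℂ) * g f = ((p : ℂ) ^ n)⁻¹ * ∑ a : Fin n → ZMod p,
      (∑ f : Fin E → ZMod p × ZMod p with Rf f = (fun i => d * cnt a i), g f) /
        ((univ.filter (fun f : Fin E → ZMod p × ZMod p => Rf f = (fun i => d * cnt a i))).card : ℂ) := by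
  have h1 : ∀ f : Fin E → ZMod p × ZMod p, (hh d n f : ℂ) * g f = ((p : ℂ) ^ n)⁻¹ * ∑ a : Fin n → ZMod p,
      if Rf f = (fun i => d * cnt a i) then g f / ((univ.filter (fun f' : Fin E → ZMod p × ZMod p => Rf f' = (fun i => d * cnt a i))).card : ℂ) else 0 := by
    intro f
    unfold hh
    have : ∀ a : Fin n → ZMod p, (if Rf f = (fun i => d * cnt a i) then g f / ((univ.filter (fun f' : Fin E → ZMod p × ZMod p => Rf f' = (fun i => d * cnt a i))).card : ℂ) else 0)
        = (if Rf f = (fun i => d * cnt a i) then g f / ((univ.filter (fun f' : Fin E → ZMod p × ZMod p => Rf f' = Rf f)).card : ℂ) else 0) := by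
      intro a
      split_ifs with h
      · rw [← h]
      · rfl
    simp only [this]
    rw [← Finset.sum_filter, Finset.sum_const, nsmul_eq_mul]
    push_cast
    have e : univ.filter (fun a : Fin n → ZMod p => ∀ i, Rf f i = d * cnt a i)
        = univ.filter (fun a : Fin n → ZMod p => Rf f = fun i => d * cnt a i) := by
      ext a; simp [funext_iff]
    rw [e]; ring
  simp only [h1, ← Finset.mul_sum]
  rw [Finset.sum_comm]
  congr 1
  refine Finset.sum_congr rfl fun a _ => ?_
  rw [Finset.sum_div, Finset.sum_filter]

theorem sum_dcnt (d n E : ℕ) (hE : 2 * E = d * n) (a : Fin n → ZMod p) : ∑ i, d * cnt a i = 2 * E := by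
  rw [← Finset.mul_sum, sum_cnt, hE]; simp

theorem hh_sum_R (d n E : ℕ) (hE : 2 * E = d * n) (G : (ZMod p → ℕ) → ℂ) :
    ∑ f : Fin E → ZMod p × ZMod p, (hh d n f : ℂ) * G (Rf f) = ((p : ℂ) ^ n)⁻¹ * ∑ a : Fin n → ZMod p, G (fun i => d * cnt a i) := by
  rw [hh_sum]
  congr 1
  refine Finset.sum_congr rfl fun a _ => ?_
  rw [Finset.sum_congr rfl (g := fun _ => G (fun i => d * cnt a i)) (fun f hf => by rw [(mem_filter.1 hf).2]),
    Finset.sum_const, nsmul_eq_mul]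
  have := card_Rf_pos E (fun i => d * cnt a i) (sum_dcnt d n E hE a)
  have h' : ((univ.filter (fun f : Fin E → ZMod p × ZMod p => Rf f = (fun i => d * cnt a i))).card : ℂ) ≠ 0 := by
    exact_mod_cast this.ne'
  field_simp

theorem hh_total (d n E : ℕ) (hE : 2 * E = d * n) : ∑ f : Fin E → ZMod p × ZMod p, hh d n f = 1 := by
  have hp : (p : ℂ) ≠ 0 := by exact_mod_cast (NeZero.ne p)
  have h := hh_sum_R (p := p) d n E hE (fun _ => 1)
  have e : ∑ a : Fin n → ZMod p, (1 : ℂ) = (p : ℂ) ^ n := by simp [ZMod.card]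
  rw [e, inv_mul_cancel₀ (pow_ne_zero _ hp)] at h
  simp only [mul_one] at h
  exact_mod_cast h

/-- character phases -/
def phi (u : ZMod p → ZMod p) (z : ZMod p × ZMod p) : ZMod p := u z.1 * z.2 + u z.2 * z.1

theorem fourier_f {E : ℕ} (f : Fin E → ZMod p × ZMod p) :
    ∑ u : ZMod p → ZMod p, ∏ l, (ZMod.stdAddChar (phi u (f l)) : ℂ)
      = if (∀ i, ∑ j : ZMod p, j * (cntM f i j : ZMod p) = 0) then (p : ℂ) ^ p else 0 := by
  have h1 : ∀ u : ZMod p → ZMod p, ∑ l, phi u (f l) = ∑ i, u i * ∑ j : ZMod p, j * (cntM f i j : ZMod p) := by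
    intro u
    rw [sum_cnt_mul f (phi u)]
    unfold phi cntM
    simp only [mul_add, Finset.sum_add_distrib, Nat.cast_add, Finset.mul_sum]
    rw [Fintype.sum_prod_type, Fintype.sum_prod_type]
    congr 1
    · refine Finset.sum_congr rfl fun i _ => Finset.sum_congr rfl fun j _ => by ring
    · rw [Finset.sum_comm]
      refine Finset.sum_congr rfl fun i _ => Finset.sum_congr rfl fun j _ => by ring
  have h2 : ∀ u : ZMod p → ZMod p, ∏ l, (ZMod.stdAddChar (phi u (f l)) : ℂ)
      = ∏ i, (ZMod.stdAddChar (u i * ∑ j : ZMod p, j * (cntM f i j : ZMod p)) : ℂ) := by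
    intro u
    rw [← stdChar_sum, h1, stdChar_sum]
  simp only [h2]
  have e2 := Finset.prod_univ_sum (fun _ : ZMod p => (univ : Finset (ZMod p)))
    (fun i t => (ZMod.stdAddChar (t * ∑ j : ZMod p, j * (cntM f i j : ZMod p)) : ℂ))
  rw [Fintype.piFinset_univ] at e2
  rw [← e2]
  simp only [char_sum]
  split_ifs with hh
  · simp [hh, ZMod.card]
  · push Not at hh
    obtain ⟨k, hk⟩ := hh
    exact Finset.prod_eq_zero (mem_univ k) (by simp [hk])

theorem additive_sum (d n E : ℕ) (hE : 2 * E = d * n) (hn : 0 < n) (hg : Nat.gcd p d = 1) (u : ZMod p → ZMod p)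
    (hu : ∀ z, phi u z = u 0 * (z.1 + z.2)) :
    ∑ f : Fin E → ZMod p × ZMod p, (hh d n f : ℂ) * ∏ l, (ZMod.stdAddChar (phi u (f l)) : ℂ)
      = if u 0 = 0 then 1 else 0 := by
  have hp : (p : ℂ) ≠ 0 := by exact_mod_cast (NeZero.ne p)
  have h1 : ∀ f : Fin E → ZMod p × ZMod p, ∏ l, (ZMod.stdAddChar (phi u (f l)) : ℂ)
      = ∏ i, (ZMod.stdAddChar (u 0 * i) : ℂ) ^ (Rf f i) := by
    intro f
    simp only [hu, mul_add, AddChar.map_add_eq_mul, Finset.prod_mul_distrib]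
    rw [prod_cnt (fun l => (f l).1) (fun i => (ZMod.stdAddChar (u 0 * i) : ℂ)),
      prod_cnt (fun l => (f l).2) (fun i => (ZMod.stdAddChar (u 0 * i) : ℂ)), ← Finset.prod_mul_distrib]
    refine Finset.prod_congr rfl fun i _ => ?_
    unfold Rf; rw [pow_add]
  simp only [h1]
  rw [hh_sum_R d n E hE (fun R => ∏ i, (ZMod.stdAddChar (u 0 * i) : ℂ) ^ (R i))]
  have h2 : ∀ a : Fin n → ZMod p, ∏ i, (ZMod.stdAddChar (u 0 * i) : ℂ) ^ (d * cnt a i)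
      = ∏ l, (ZMod.stdAddChar (a l * (u 0 * (d : ZMod p))) : ℂ) := by
    intro a
    rw [prod_cnt a (fun i => (ZMod.stdAddChar (i * (u 0 * (d : ZMod p))) : ℂ))]
    refine Finset.prod_congr rfl fun i _ => ?_
    rw [pow_mul, ← AddChar.map_nsmul_eq_pow]
    congr 2
    rw [nsmul_eq_mul]; ring
  simp only [h2]
  rw [sum_all_prod (fun i : ZMod p => (ZMod.stdAddChar (i * (u 0 * (d : ZMod p))) : ℂ)), char_sum, Fintype.card_fin]
  have hdu : IsUnit (d : ZMod p) := (ZMod.isUnit_iff_coprime d p).2 (by rw [Nat.coprime_comm]; exact hg)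
  have : (u 0 * (d : ZMod p) = 0) ↔ u 0 = 0 := hdu.mul_left_eq_zero
  simp only [this]
  split_ifs
  · exact inv_mul_cancel₀ (pow_ne_zero _ hp)
  · rw [zero_pow hn.ne', mul_zero]

theorem two_point (z w : ℂ) (hz : ‖z‖ = 1) (hw : ‖w‖ = 1) (δ : ℝ) (hδ0 : 0 ≤ δ) (hδ1 : δ ≤ 1) (h : 2 * δ ≤ ‖z - w‖)
    (A B : ℝ) (hA : 1 / 4 ≤ A) (hB : 1 / 4 ≤ B) : ‖(A : ℂ) * z + B * w‖ ≤ A + B - δ ^ 2 / 4 := by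
  have hpar := parallelogram_law_with_norm ℂ z w
  rw [hz, hw] at hpar
  have h1 : ‖z + w‖ ≤ 2 - δ ^ 2 := by
    refine le_of_sq_le_sq ?_ (by nlinarith)
    have : (2 * δ) ^ 2 ≤ ‖z - w‖ ^ 2 := by gcongr
    nlinarith [sq_nonneg (δ ^ 2)]
  have e : (A : ℂ) * z + B * w = ((1 / 4 : ℝ) : ℂ) * (z + w) + (((A - 1 / 4 : ℝ) : ℂ) * z + ((B - 1 / 4 : ℝ) : ℂ) * w) := by
    push_cast; ring
  rw [e]
  refine (norm_add_le _ _).trans ?_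
  have h2 : ‖((A - 1 / 4 : ℝ) : ℂ) * z + ((B - 1 / 4 : ℝ) : ℂ) * w‖ ≤ (A - 1 / 4) + (B - 1 / 4) := by
    refine (norm_add_le _ _).trans ?_
    rw [norm_mul, norm_mul, hz, hw, Complex.norm_real, Complex.norm_real, Real.norm_of_nonneg (by linarith),
      Real.norm_of_nonneg (by linarith), mul_one, mul_one]
  rw [norm_mul, Complex.norm_real, Real.norm_of_nonneg (by norm_num)]
  linarith

theorem char_far (a : ZMod p) (ha : a ≠ 0) : 4 / (p : ℝ) ≤ ‖(ZMod.stdAddChar a : ℂ) - 1‖ := by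
  have hp : (0 : ℝ) < p := by exact_mod_cast Nat.pos_of_ne_zero (NeZero.ne p)
  have hv : 0 < a.val := Nat.pos_of_ne_zero (fun h => ha ((ZMod.val_eq_zero a).1 h))
  have hv2 : a.val < p := ZMod.val_lt a
  have h1 : (ZMod.stdAddChar a : ℂ) = Complex.exp (Complex.I * ((2 * Real.pi * a.val / p : ℝ) : ℂ)) := by
    have h := ZMod.stdAddChar_coe (N := p) (a.val : ℤ)
    have e : ((a.val : ℤ) : ZMod p) = a := by
      rw [Int.cast_natCast, ZMod.natCast_zmod_val]
    rw [e] at h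
    rw [h]
    congr 1
    push_cast; ring
  rw [h1, Complex.norm_exp_I_mul_ofReal_sub_one, Real.norm_eq_abs]
  have hvr : (1 : ℝ) ≤ a.val := by exact_mod_cast hv
  have hv2r : (a.val : ℝ) + 1 ≤ p := by exact_mod_cast hv2
  generalize (a.val : ℝ) = v at hvr hv2r
  have hπ := Real.pi_pos
  refine le_trans ?_ (le_abs_self _)
  have e : 2 * Real.pi * v / p / 2 = Real.pi * v / p := by field_simp
  rw [e]
  have key : 2 * (1 / (p : ℝ)) ≤ Real.sin (Real.pi * v / p) := by
    by_cases hc : 2 * v ≤ p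
    · refine le_trans ?_ (Real.mul_le_sin (by positivity) ?_)
      · have : 2 / Real.pi * (Real.pi * v / p) = 2 * (v / p) := by field_simp
        rw [this]; gcongr
      · rw [div_le_div_iff₀ hp (by norm_num)]; nlinarith
    · push Not at hc
      rw [← Real.sin_pi_sub]
      have e2 : Real.pi - Real.pi * v / p = Real.pi * (p - v) / p := by field_simp
      rw [e2]
      have : 0 < (p : ℝ) - v := by linarith
      refine le_trans ?_ (Real.mul_le_sin (by positivity) ?_)
      · have : 2 / Real.pi * (Real.pi * (p - v) / p) = 2 * ((p - v) / p) := by field_simp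
        rw [this]; gcongr; linarith
      · rw [div_le_div_iff₀ hp (by norm_num)]; nlinarith
  have : 4 / (p : ℝ) = 2 * (2 * (1 / (p : ℝ))) := by ring
  rw [this]; linarith

end fourier


theorem norm_sum_gain {ι : Type*} [Fintype ι] [DecidableEq ι] (F : ι → ℂ) (s t : ι) (hst : s ≠ t) (g : ℝ)
    (h : ‖F s + F t‖ ≤ ‖F s‖ + ‖F t‖ - g) : ‖∑ i, F i‖ ≤ ∑ i, ‖F i‖ - g := by
  have hs : t ∈ univ.erase s := by simp [hst.symm]
  rw [← Finset.add_sum_erase _ F (mem_univ s), ← Finset.add_sum_erase _ F hs, ← add_assoc,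
    ← Finset.add_sum_erase _ (fun i => ‖F i‖) (mem_univ s), ← Finset.add_sum_erase _ (fun i => ‖F i‖) hs, ← add_assoc]
  refine (norm_add_le _ _).trans ?_
  have := norm_sum_le ((univ.erase s).erase t) F
  linarith

section fourpt
variable {p : ℕ} [NeZero p]

theorem four_point (u : ZMod p → ZMod p) (x : ZMod p) (hx0 : x ≠ 0) (hx : 2 * x * (u x - u 0) ≠ 0)
    (r : ZMod p → ℝ) (hr : ∀ i, 1 / 2 ≤ r i) (hrs : ∑ i, r i = p) (ω : ZMod p → ℂ) (hω : ∀ i, ‖ω i‖ = 1) :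
    ‖∑ z : ZMod p × ZMod p, ((r z.1 * r z.2 : ℝ) : ℂ) * (ω z.1 * ω z.2 * (ZMod.stdAddChar (phi u z) : ℂ))‖
      ≤ (p : ℝ) ^ 2 * (1 - 1 / (4 * (p : ℝ) ^ 4)) := by
  have hp : (0 : ℝ) < p := by exact_mod_cast Nat.pos_of_ne_zero (NeZero.ne p)
  have hp1 : (1 : ℝ) ≤ p := by exact_mod_cast Nat.pos_of_ne_zero (NeZero.ne p)
  set Z : ZMod p × ZMod p → ℂ := fun z => ω z.1 * ω z.2 * (ZMod.stdAddChar (phi u z) : ℂ) with hZ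
  have hZn : ∀ z, ‖Z z‖ = 1 := by
    intro z; simp only [hZ, norm_mul, hω, norm_char, mul_one]
  have hA : ∀ z : ZMod p × ZMod p, 1 / 4 ≤ r z.1 * r z.2 := by
    intro z
    have h1 := hr z.1
    have h2 := hr z.2
    nlinarith
  have hFn : ∀ z : ZMod p × ZMod p, ‖((r z.1 * r z.2 : ℝ) : ℂ) * Z z‖ = r z.1 * r z.2 := by
    intro z
    rw [norm_mul, hZn, mul_one, Complex.norm_real, Real.norm_of_nonneg (by linarith [hA z])]
  have hsum : ∑ z : ZMod p × ZMod p, ‖((r z.1 * r z.2 : ℝ) : ℂ) * Z z‖ = (p : ℝ) ^ 2 := by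
    simp only [hFn]
    rw [Fintype.sum_prod_type]
    simp only [← Finset.mul_sum, ← Finset.sum_mul]
    rw [hrs]; ring
  have hfin : (p : ℝ) ^ 2 * (1 - 1 / (4 * (p : ℝ) ^ 4)) = (p : ℝ) ^ 2 - (1 / (p : ℝ)) ^ 2 / 4 := by
    field_simp
  have hδ1 : 1 / (p : ℝ) ≤ 1 := by rw [div_le_one hp]; exact hp1
  have key : ∀ s t : ZMod p × ZMod p, s ≠ t → 2 * (1 / (p : ℝ)) ≤ ‖Z s - Z t‖ →
      ‖∑ z : ZMod p × ZMod p, ((r z.1 * r z.2 : ℝ) : ℂ) * Z z‖ ≤ (p : ℝ) ^ 2 * (1 - 1 / (4 * (p : ℝ) ^ 4)) := by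
    intro s t hst h
    rw [hfin, ← hsum]
    refine norm_sum_gain (fun z : ZMod p × ZMod p => ((r z.1 * r z.2 : ℝ) : ℂ) * Z z) s t hst _ ?_
    simp only [hFn]
    exact two_point (Z s) (Z t) (hZn s) (hZn t) (1 / p) (by positivity) hδ1 h _ _ (hA s) (hA t)
  have hfar := char_far (p := p) (2 * x * (u x - u 0)) hx
  have hid : Z (x, x) * Z (0, 0) - Z (x, 0) ^ 2 = Z (x, 0) ^ 2 * ((ZMod.stdAddChar (2 * x * (u x - u 0)) : ℂ) - 1) := by
    have e : (ZMod.stdAddChar (phi u (x, x)) : ℂ) * (ZMod.stdAddChar (phi u (0, 0)) : ℂ)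
        = (ZMod.stdAddChar (phi u (x, 0)) : ℂ) ^ 2 * (ZMod.stdAddChar (2 * x * (u x - u 0)) : ℂ) := by
      rw [pow_two, ← AddChar.map_add_eq_mul, ← AddChar.map_add_eq_mul, ← AddChar.map_add_eq_mul]
      congr 1
      simp only [phi]; ring
    simp only [hZ]
    linear_combination (ω x ^ 2 * ω 0 ^ 2) * e
  change ‖∑ z : ZMod p × ZMod p, ((r z.1 * r z.2 : ℝ) : ℂ) * Z z‖ ≤ _
  clear_value Z
  have h4 : 4 / (p : ℝ) ≤ ‖Z (x, x) * Z (0, 0) - Z (x, 0) ^ 2‖ := by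
    rw [hid, norm_mul, norm_pow, hZn, one_pow, one_mul]; exact hfar
  have h5 : ‖Z (x, x) * Z (0, 0) - Z (x, 0) ^ 2‖ ≤ ‖Z (0, 0) - Z (x, 0)‖ + ‖Z (x, x) - Z (x, 0)‖ := by
    have : Z (x, x) * Z (0, 0) - Z (x, 0) ^ 2 = Z (x, x) * (Z (0, 0) - Z (x, 0)) + Z (x, 0) * (Z (x, x) - Z (x, 0)) := by ring
    rw [this]
    refine (norm_add_le _ _).trans ?_
    rw [norm_mul, norm_mul, hZn, hZn, one_mul, one_mul]
  have e4 : 4 / (p : ℝ) = 2 * (1 / p) + 2 * (1 / p) := by ring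
  by_cases hc : 2 * (1 / (p : ℝ)) ≤ ‖Z (0, 0) - Z (x, 0)‖
  · exact key (0, 0) (x, 0) (by simp [hx0.symm]) hc
  · push Not at hc
    exact key (x, x) (x, 0) (by simp [hx0]) (by linarith)

theorem nonadd (E : ℕ) (hE : 0 < E) (u : ZMod p → ZMod p) (x : ZMod p) (hx0 : x ≠ 0) (hx : 2 * x * (u x - u 0) ≠ 0)
    (R : ZMod p → ℕ) (hR : ∑ i, R i = 2 * E) (hr : ∀ i, (1 : ℝ) / 2 ≤ p * R i / (2 * E : ℕ)) :
    ‖∑ f : Fin E → ZMod p × ZMod p with Rf f = R, ∏ l, (ZMod.stdAddChar (phi u (f l)) : ℂ)‖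
      ≤ ((univ.filter (fun f : Fin E → ZMod p × ZMod p => Rf f = R)).card : ℝ) *
        ((((2 * E : ℕ) : ℝ) + 1) ^ p * (1 - 1 / (4 * (p : ℝ) ^ 4)) ^ E) := by
  have hp : (0 : ℝ) < p := by exact_mod_cast Nat.pos_of_ne_zero (NeZero.ne p)
  have hE' : (0 : ℝ) < (2 * E : ℕ) := by exact_mod_cast (by omega : 0 < 2 * E)
  set r : ZMod p → ℝ := fun i => p * R i / (2 * E : ℕ) with hrd
  have hrs : ∑ i, r i = p := by
    simp only [hrd]
    rw [← Finset.sum_div, ← Finset.mul_sum, ← Nat.cast_sum, hR]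
    field_simp
  have hP : 0 < ∏ i, r i ^ R i := Finset.prod_pos fun i _ => pow_pos (by linarith [hr i]) _
  have hlow := types_lower (ι := Fin E ⊕ Fin E) R (2 * E) (by simp; ring) (by omega) hR
  rw [ZMod.card, ← card_Rf] at hlow
  have hprod : ∏ j, ((R j : ℝ) / (2 * E : ℕ)) ^ R j = (∏ i, r i ^ R i) / (p : ℝ) ^ (2 * E) := by
    rw [← hR, ← Finset.prod_pow_eq_pow_sum, ← Finset.prod_div_distrib]
    refine Finset.prod_congr rfl fun i _ => ?_
    rw [← div_pow]
    congr 1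
    rw [hR]
    simp only [hrd]; field_simp
  rw [hprod] at hlow
  have hext := extract (Ω := Fin E → ZMod p × ZMod p) (fun f => Rf f) R
    (fun f => ((∏ i, r i ^ (Rf f i) : ℝ) : ℂ) * ∏ l, (ZMod.stdAddChar (phi u (f l)) : ℂ))
    (((p : ℝ) ^ 2 * (1 - 1 / (4 * (p : ℝ) ^ 4))) ^ E) ?_
  · have hc : ∑ f : Fin E → ZMod p × ZMod p with Rf f = R, ((∏ i, r i ^ (Rf f i) : ℝ) : ℂ) * ∏ l, (ZMod.stdAddChar (phi u (f l)) : ℂ)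
        = ((∏ i, r i ^ (R i) : ℝ) : ℂ) * ∑ f : Fin E → ZMod p × ZMod p with Rf f = R, ∏ l, (ZMod.stdAddChar (phi u (f l)) : ℂ) := by
      rw [Finset.mul_sum]
      refine Finset.sum_congr rfl fun f hf => ?_
      rw [(mem_filter.1 hf).2]
    rw [hc, norm_mul, Complex.norm_real, Real.norm_of_nonneg hP.le, mul_pow, ← pow_mul] at hext
    have hg : (0 : ℝ) ≤ (1 - 1 / (4 * (p : ℝ) ^ 4)) ^ E := by
      apply pow_nonneg
      have hp1 : (1 : ℝ) ≤ p := by exact_mod_cast Nat.pos_of_ne_zero (NeZero.ne p)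
      have : (1 : ℝ) ≤ (p : ℝ) ^ 4 := one_le_pow₀ hp1
      rw [sub_nonneg, div_le_one (by positivity)]; linarith
    generalize (univ.filter (fun f : Fin E → ZMod p × ZMod p => Rf f = R)).card = c at hlow ⊢
    generalize ‖∑ f : Fin E → ZMod p × ZMod p with Rf f = R, ∏ l, (ZMod.stdAddChar (phi u (f l)) : ℂ)‖ = X at hext ⊢
    generalize (1 - 1 / (4 * (p : ℝ) ^ 4)) ^ E = g at *
    generalize ∏ i, r i ^ R i = P at *
    generalize (((2 * E : ℕ) : ℝ) + 1) ^ p = B at *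
    have hpp : 0 < (p : ℝ) ^ (2 * E) := by positivity
    generalize (p : ℝ) ^ (2 * E) = D at *
    have h1 : X ≤ D * g / P := by rw [le_div_iff₀ hP]; linarith
    refine h1.trans ?_
    have h2 : D / P ≤ B * c := by
      rw [div_le_iff₀ hP]
      have : D * 1 ≤ D * (B * (c * (P / D))) := mul_le_mul_of_nonneg_left hlow hpp.le
      have e : D * (B * (c * (P / D))) = B * c * P := by field_simp
      linarith
    calc D * g / P = D / P * g := by ring
      _ ≤ B * c * g := mul_le_mul_of_nonneg_right h2 hg
      _ = c * (B * g) := by ring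
  · intro ω hω
    have e : ∀ f : Fin E → ZMod p × ZMod p, ((∏ i, r i ^ (Rf f i) : ℝ) : ℂ) * (∏ l, (ZMod.stdAddChar (phi u (f l)) : ℂ)) *
        ∏ j, ω j ^ (Rf f j) = ∏ l, (((r (f l).1 * r (f l).2 : ℝ) : ℂ) * (ω (f l).1 * ω (f l).2 * (ZMod.stdAddChar (phi u (f l)) : ℂ))) := by
      intro f
      have h1 : ∀ y : ZMod p → ℂ, ∏ i, y i ^ (Rf f i) = ∏ l, (y (f l).1 * y (f l).2) := by
        intro y
        rw [Finset.prod_mul_distrib, prod_cnt (fun l => (f l).1) y, prod_cnt (fun l => (f l).2) y, ← Finset.prod_mul_distrib]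
        refine Finset.prod_congr rfl fun i _ => ?_
        unfold Rf; rw [pow_add]
      have h2 : ((∏ i, r i ^ (Rf f i) : ℝ) : ℂ) = ∏ i, ((r i : ℂ)) ^ (Rf f i) := by push_cast; rfl
      rw [h2, h1, h1, ← Finset.prod_mul_distrib, ← Finset.prod_mul_distrib]
      refine Finset.prod_congr rfl fun l _ => ?_
      push_cast; ring
    simp only [e]
    rw [sum_all_prod (ι := Fin E) (fun z : ZMod p × ZMod p => ((r z.1 * r z.2 : ℝ) : ℂ) * (ω z.1 * ω z.2 * (ZMod.stdAddChar (phi u z) : ℂ))),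
      norm_pow, Fintype.card_fin]
    exact pow_le_pow_left₀ (norm_nonneg _) (four_point u x hx0 hx r hr hrs ω hω) E

end fourpt


theorem z2a : ∀ a : ZMod 2, a = 0 ∨ a = 1 := by decide
theorem z2b : ∀ (a b s t : ZMod 2), (if a = 0 then s else t) * b + (if b = 0 then s else t) * a = s * (a + b) := by decide
theorem z2c : (univ.filter (fun u : ZMod 2 → ZMod 2 => ((2 : ℕ) = 2 ∨ ∀ x, u x = u 0) ∧ u 0 = 0)).card = 2 := by
  decide

section szero
variable {p : ℕ} [Fact p.Prime]

theorem additive_phi (u : ZMod p → ZMod p) (h : p = 2 ∨ ∀ x, u x = u 0) (z : ZMod p × ZMod p) :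
    phi u z = u 0 * (z.1 + z.2) := by
  rcases h with h | h
  · subst h
    obtain ⟨a, b⟩ := z
    simp only [phi]
    generalize hu0 : u 0 = s
    generalize hu1 : u 1 = t
    have hA : ∀ a : ZMod 2, u a = if a = 0 then s else t := by
      intro a
      rw [← hu0, ← hu1]
      rcases z2a a with h | h <;> simp [h]
    rw [hA, hA]
    clear hu0 hu1 hA
    exact z2b a b s t
  · simp only [phi, h]; ring

theorem count_additive :
    (((univ.filter (fun u : ZMod p → ZMod p => (p = 2 ∨ ∀ x, u x = u 0) ∧ u 0 = 0)).card : ℕ) : ℝ) = 1 + if p = 2 then 1 else 0 := by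
  by_cases h : p = 2
  · subst h
    have e : (((univ.filter (fun u : ZMod 2 → ZMod 2 => ((2 : ℕ) = 2 ∨ ∀ x, u x = u 0) ∧ u 0 = 0)).card : ℕ) : ℝ) = ((2 : ℕ) : ℝ) :=
      congrArg (fun x : ℕ => (x : ℝ)) z2c
    rw [if_pos rfl]
    have e3 : (1 + 1 : ℝ) = ((2 : ℕ) : ℝ) := by norm_num
    rw [e3, ← e]
  · have : univ.filter (fun u : ZMod p → ZMod p => (p = 2 ∨ ∀ x, u x = u 0) ∧ u 0 = 0) = {0} := by
      ext u
      simp only [mem_filter, mem_univ, true_and, mem_singleton, h, false_or]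
      constructor
      · rintro ⟨h1, h2⟩; funext x; rw [h1, h2]; rfl
      · rintro rfl; simp
    rw [this]; simp [h]

theorem S0_est (d n E : ℕ) (hd : 0 < d) (hE : 2 * E = d * n) (hn : 0 < n) (hg : Nat.gcd p d = 1)
    (Eb : (Fin E → ZMod p × ZMod p) → Prop) [DecidablePred Eb]
    (hEb : ∀ f, Eb f → ∀ i, (1 : ℝ) / 2 ≤ p * Rf f i / (2 * E : ℕ)) :
    |∑ f with (∀ i, ∑ j : ZMod p, j * (cntM f i j : ZMod p) = 0) ∧ Eb f, (p : ℝ) ^ p * hh d n f - (1 + if p = 2 then 1 else 0)|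
      ≤ (p : ℝ) ^ p * (∑ f with ¬ Eb f, hh d n f + (((2 * E : ℕ) : ℝ) + 1) ^ p * (1 - 1 / (4 * (p : ℝ) ^ 4)) ^ E) := by
  classical
  have hE0 : 0 < E := by
    have : 0 < d * n := Nat.mul_pos hd hn
    omega
  have hp1 : (1 : ℝ) ≤ p := by exact_mod_cast Nat.pos_of_ne_zero (NeZero.ne p)
  have hpc : (p : ℂ) ≠ 0 := by exact_mod_cast (NeZero.ne p)
  set T := ∑ f with ¬ Eb f, hh d n f with hT
  set B := (((2 * E : ℕ) : ℝ) + 1) ^ p * (1 - 1 / (4 * (p : ℝ) ^ 4)) ^ E with hB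
  have hB0 : 0 ≤ B := by
    refine mul_nonneg (by positivity) (pow_nonneg ?_ _)
    have : (1 : ℝ) ≤ (p : ℝ) ^ 4 := one_le_pow₀ hp1
    rw [sub_nonneg, div_le_one (by positivity)]; linarith
  have hT0 : 0 ≤ T := Finset.sum_nonneg fun f _ => hh_nonneg d n f
  let χ : (ZMod p → ZMod p) → (Fin E → ZMod p × ZMod p) → ℂ := fun u f => ∏ l, (ZMod.stdAddChar (phi u (f l)) : ℂ)
  have hχ : ∀ u f, ‖χ u f‖ = 1 := by
    intro u f; simp only [χ, norm_prod, norm_char, Finset.prod_const_one]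
  -- any restriction that contains Eb
  have hres : ∀ (P : (Fin E → ZMod p × ZMod p) → Prop) [DecidablePred P] (u : ZMod p → ZMod p), (∀ f, Eb f → P f) →
      ‖∑ f with Eb f, (hh d n f : ℂ) * χ u f - ∑ f with P f, (hh d n f : ℂ) * χ u f‖ ≤ T := by
    intro P _ u hP
    have e : ∑ f with P f, (hh d n f : ℂ) * χ u f = ∑ f with Eb f, (hh d n f : ℂ) * χ u f
        + ∑ f with ¬ Eb f, if P f then (hh d n f : ℂ) * χ u f else 0 := by
      rw [Finset.sum_filter, ← Finset.sum_filter_add_sum_filter_not univ Eb]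
      congr 1
      refine Finset.sum_congr rfl fun f hf => ?_
      rw [if_pos (hP f (mem_filter.1 hf).2)]
    rw [e, sub_add_cancel_left, norm_neg]
    refine (norm_sum_le _ _).trans (Finset.sum_le_sum fun f _ => ?_)
    split_ifs
    · rw [norm_mul, hχ, mul_one, Complex.norm_real, Real.norm_of_nonneg (hh_nonneg d n f)]
    · rw [norm_zero]; exact hh_nonneg d n f
  have hu : ∀ u : ZMod p → ZMod p, ‖∑ f with Eb f, (hh d n f : ℂ) * χ u f -
      (if ((p = 2 ∨ ∀ x, u x = u 0) ∧ u 0 = 0) then 1 else 0)‖ ≤ T + B := by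
    intro u
    by_cases hA : p = 2 ∨ ∀ x, u x = u 0
    · have h1 := additive_sum d n E hE hn hg u (additive_phi u hA)
      have h2 := hres (fun _ => True) u (fun _ _ => trivial)
      rw [Finset.filter_true] at h2
      simp only [χ] at h2 ⊢
      rw [h1] at h2
      simp only [hA, true_and]
      linarith
    · simp only [hA, false_and, if_false, sub_zero]
      push Not at hA
      obtain ⟨hp2, x, hx⟩ := hA
      have hx0 : x ≠ 0 := by rintro rfl; exact hx rfl
      have h2 : (2 : ZMod p) ≠ 0 := by
        intro h0
        have : ((2 : ℕ) : ZMod p) = 0 := by exact_mod_cast h0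
        rw [ZMod.natCast_eq_zero_iff] at this
        exact hp2 ((Nat.prime_dvd_prime_iff_eq Fact.out Nat.prime_two).1 this)
      have hx2 : 2 * x * (u x - u 0) ≠ 0 := mul_ne_zero (mul_ne_zero h2 hx0) (sub_ne_zero.2 hx)
      have h3 := hres (fun f => ∀ i, (1 : ℝ) / 2 ≤ p * Rf f i / (2 * E : ℕ)) u hEb
      have h4 : ‖∑ f : Fin E → ZMod p × ZMod p with (∀ i, (1 : ℝ) / 2 ≤ p * Rf f i / (2 * E : ℕ)), (hh d n f : ℂ) * χ u f‖ ≤ B := by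
        have e : ∑ f : Fin E → ZMod p × ZMod p with (∀ i, (1 : ℝ) / 2 ≤ p * Rf f i / (2 * E : ℕ)), (hh d n f : ℂ) * χ u f
            = ∑ f, (hh d n f : ℂ) * (if (∀ i, (1 : ℝ) / 2 ≤ p * Rf f i / (2 * E : ℕ)) then χ u f else 0) := by
          rw [Finset.sum_filter]
          refine Finset.sum_congr rfl fun f _ => ?_
          split_ifs <;> simp
        rw [e, hh_sum, norm_mul, norm_inv, norm_pow, Complex.norm_natCast]
        have hppos : (0 : ℝ) < (p : ℝ) ^ n := by positivity
        rw [inv_mul_le_iff₀ hppos]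
        refine (norm_sum_le _ _).trans ?_
        have hb : ∀ a ∈ (univ : Finset (Fin n → ZMod p)), ‖(∑ f : Fin E → ZMod p × ZMod p with Rf f = (fun i => d * cnt a i),
            (if (∀ i, (1 : ℝ) / 2 ≤ p * Rf f i / (2 * E : ℕ)) then χ u f else 0)) /
            ((univ.filter (fun f : Fin E → ZMod p × ZMod p => Rf f = (fun i => d * cnt a i))).card : ℂ)‖ ≤ B := by
          intro a _
          have hpos := card_Rf_pos E (fun i => d * cnt a i) (sum_dcnt d n E hE a)
          by_cases hr : ∀ i, (1 : ℝ) / 2 ≤ p * (d * cnt a i : ℕ) / (2 * E : ℕ)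
          · have e2 : ∑ f : Fin E → ZMod p × ZMod p with Rf f = (fun i => d * cnt a i),
                (if (∀ i, (1 : ℝ) / 2 ≤ p * Rf f i / (2 * E : ℕ)) then χ u f else 0)
                = ∑ f : Fin E → ZMod p × ZMod p with Rf f = (fun i => d * cnt a i), χ u f := by
              refine Finset.sum_congr rfl fun f hf => ?_
              rw [(mem_filter.1 hf).2, if_pos hr]
            rw [e2, norm_div, Complex.norm_natCast, div_le_iff₀ (by exact_mod_cast hpos), mul_comm]
            exact nonadd E hE0 u x hx0 hx2 (fun i => d * cnt a i) (sum_dcnt d n E hE a) hr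
          · have e2 : ∑ f : Fin E → ZMod p × ZMod p with Rf f = (fun i => d * cnt a i),
                (if (∀ i, (1 : ℝ) / 2 ≤ p * Rf f i / (2 * E : ℕ)) then χ u f else 0) = 0 := by
              refine Finset.sum_eq_zero fun f hf => ?_
              rw [(mem_filter.1 hf).2, if_neg hr]
            rw [e2, zero_div, norm_zero]; exact hB0
        refine (Finset.sum_le_sum hb).trans (le_of_eq ?_)
        simp [ZMod.card]
      have := norm_add_le (∑ f with Eb f, (hh d n f : ℂ) * χ u f - ∑ f : Fin E → ZMod p × ZMod p with (∀ i, (1 : ℝ) / 2 ≤ p * Rf f i / (2 * E : ℕ)), (hh d n f : ℂ) * χ u f)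
        (∑ f : Fin E → ZMod p × ZMod p with (∀ i, (1 : ℝ) / 2 ≤ p * Rf f i / (2 * E : ℕ)), (hh d n f : ℂ) * χ u f)
      rw [sub_add_cancel] at this
      linarith
  have hsum : ((∑ f with (∀ i, ∑ j : ZMod p, j * (cntM f i j : ZMod p) = 0) ∧ Eb f, (p : ℝ) ^ p * hh d n f : ℝ) : ℂ)
      = ∑ u : ZMod p → ZMod p, ∑ f with Eb f, (hh d n f : ℂ) * χ u f := by
    rw [Finset.sum_comm]
    have hf : ∀ f : Fin E → ZMod p × ZMod p, ∑ u : ZMod p → ZMod p, (hh d n f : ℂ) * χ u f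
        = (hh d n f : ℂ) * if (∀ i, ∑ j : ZMod p, j * (cntM f i j : ZMod p) = 0) then (p : ℂ) ^ p else 0 := by
      intro f
      rw [← Finset.mul_sum]
      simp only [χ, fourier_f]
    simp only [hf]
    rw [← Finset.filter_filter, Finset.filter_comm, Finset.sum_filter (s := univ.filter Eb)]
    push_cast
    refine Finset.sum_congr rfl fun f _ => ?_
    split_ifs
    · push_cast; ring
    · simp
  have hcnt : (((1 + if p = 2 then 1 else 0 : ℝ)) : ℂ) = ∑ u : ZMod p → ZMod p, (if ((p = 2 ∨ ∀ x, u x = u 0) ∧ u 0 = 0) then 1 else 0 : ℂ) := by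
    rw [← count_additive (p := p), Finset.sum_boole]
    push_cast
    congr
  rw [← Real.norm_eq_abs, ← Complex.norm_real, Complex.ofReal_sub, hsum, hcnt, ← Finset.sum_sub_distrib]
  refine (norm_sum_le _ _).trans ((Finset.sum_le_sum fun u _ => hu u).trans (le_of_eq ?_))
  simp [ZMod.card]
  ring

end szero


theorem pow_eq_exp (x : ℝ) (hx : 0 ≤ x) (k : ℕ) (N : ℝ) (hk : (k : ℝ) = N * x) : x ^ k = Real.exp (N * (x * Real.log x)) := by
  rcases hx.eq_or_lt with h | h
  · subst h
    have : k = 0 := by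
      rw [mul_zero] at hk; exact_mod_cast hk
    subst this; simp
  · rw [← mul_assoc, ← hk, mul_comm, Real.exp_mul, Real.exp_log h, Real.rpow_natCast]

theorem kl_lower (x : ℝ) (hx : 0 ≤ x) : (x - 1) ^ 2 / (2 * (x + 1)) ≤ x * Real.log x + 1 - x := by
  rcases hx.eq_or_lt with h | h
  · subst h; norm_num
  · set s := Real.sqrt x with hs
    have hs0 : 0 < s := Real.sqrt_pos.2 h
    have hxs : x = s ^ 2 := (Real.sq_sqrt hx).symm
    have hl : Real.log x = 2 * Real.log s := by rw [hxs, Real.log_pow]; norm_num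
    have h1 := Real.one_sub_inv_le_log_of_pos hs0
    rw [hl, hxs, div_le_iff₀ (by positivity)]
    have h2 : s - 1 ≤ s * Real.log s := by
      have := mul_le_mul_of_nonneg_left h1 hs0.le
      rwa [mul_sub, mul_one, mul_inv_cancel₀ hs0.ne'] at this
    have h3 : (s - 1) ^ 2 ≤ s ^ 2 * (2 * Real.log s) + 1 - s ^ 2 := by nlinarith
    calc (s ^ 2 - 1) ^ 2 = (s - 1) ^ 2 * (s + 1) ^ 2 := by ring
      _ ≤ (s - 1) ^ 2 * (2 * (s ^ 2 + 1)) := by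
          apply mul_le_mul_of_nonneg_left _ (sq_nonneg _); nlinarith [sq_nonneg (s - 1)]
      _ ≤ _ := mul_le_mul_of_nonneg_right h3 (by positivity)

theorem D_lower {ι : Type*} [Fintype ι] (q : ι → ℝ) (P τ : ℝ) (hP : 0 < P) (hPc : P = Fintype.card ι) (hq : ∀ z, 0 ≤ q z) (hs : ∑ z, q z = 1)
    (hτ : P ^ 2 * τ ≤ 4) (h : τ < ∑ z, (q z - 1 / P) ^ 2) : P * τ / 8 ≤ ∑ z, q z * Real.log (q z) + Real.log P := by
  have h1 : ∑ z, q z * Real.log (q z) + Real.log P = P⁻¹ * ∑ z, ((P * q z) * Real.log (P * q z) + 1 - P * q z) := by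
    have e : ∀ z, (P * q z) * Real.log (P * q z) + 1 - P * q z = P * (q z * Real.log (q z)) + P * Real.log P * q z + (1 - P * q z) := by
      intro z
      rcases (hq z).eq_or_lt with h | h
      · rw [← h]; simp
      · rw [Real.log_mul hP.ne' h.ne']; ring
    simp only [e, Finset.sum_add_distrib, Finset.sum_sub_distrib, ← Finset.mul_sum, hs]
    simp only [Finset.sum_const, Finset.card_univ, nsmul_eq_mul, ← hPc]
    field_simp; ring
  rw [h1]
  have hk : ∀ z, (P * q z - 1) ^ 2 / (2 * (P * q z + 1)) ≤ (P * q z) * Real.log (P * q z) + 1 - P * q z := fun z =>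
    kl_lower _ (mul_nonneg hP.le (hq z))
  have hk0 : ∀ z, 0 ≤ (P * q z) * Real.log (P * q z) + 1 - P * q z := fun z => by
    refine le_trans ?_ (hk z)
    have := mul_nonneg hP.le (hq z)
    positivity
  by_cases hc : ∀ z, P * q z ≤ 3
  · have h2 : ∑ z, P ^ 2 / 8 * (q z - 1 / P) ^ 2 ≤ ∑ z, ((P * q z) * Real.log (P * q z) + 1 - P * q z) := by
      refine Finset.sum_le_sum fun z _ => le_trans ?_ (hk z)
      have e : P ^ 2 / 8 * (q z - 1 / P) ^ 2 = (P * q z - 1) ^ 2 / 8 := by field_simp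
      rw [e]
      have := mul_nonneg hP.le (hq z)
      have := hc z
      gcongr; linarith
    rw [← Finset.mul_sum] at h2
    have h3 : P ^ 2 / 8 * τ ≤ P ^ 2 / 8 * ∑ z, (q z - 1 / P) ^ 2 := by gcongr
    calc P * τ / 8 = P⁻¹ * (P ^ 2 / 8 * τ) := by field_simp
      _ ≤ _ := mul_le_mul_of_nonneg_left (h3.trans h2) (by positivity)
  · push Not at hc
    obtain ⟨z, hz⟩ := hc
    have h2 : (1 : ℝ) / 2 ≤ ∑ z, ((P * q z) * Real.log (P * q z) + 1 - P * q z) := by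
      refine le_trans ?_ (Finset.single_le_sum (f := fun z => (P * q z) * Real.log (P * q z) + 1 - P * q z) (fun z _ => hk0 z) (mem_univ z))
      refine le_trans ?_ (hk z)
      rw [div_le_div_iff₀ (by norm_num) (by linarith)]
      nlinarith
    calc P * τ / 8 = P⁻¹ * (P ^ 2 * τ / 8) := by field_simp
      _ ≤ P⁻¹ * (1 / 2) := mul_le_mul_of_nonneg_left (by linarith) (by positivity)
      _ ≤ _ := mul_le_mul_of_nonneg_left h2 (by positivity)

theorem subadd {κ : Type*} [Fintype κ] (q : κ → κ → ℝ) (r : κ → ℝ) (hq : ∀ i j, 0 ≤ q i j) (hsym : ∀ i j, q i j = q j i)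
    (hr : ∀ i, ∑ j, q i j = r i) (hs : ∑ i, r i = 1) :
    2 * ∑ i, r i * Real.log (r i) ≤ ∑ i, ∑ j, q i j * Real.log (q i j) := by
  have hr0 : ∀ i, 0 ≤ r i := fun i => by rw [← hr]; exact Finset.sum_nonneg fun j _ => hq i j
  have hle : ∀ i j, q i j ≤ r i := fun i j => by
    rw [← hr]; exact Finset.single_le_sum (f := fun j => q i j) (fun j _ => hq i j) (mem_univ j)
  have key : ∀ i j, q i j * Real.log (r i) + q i j * Real.log (r j) + (q i j - r i * r j) ≤ q i j * Real.log (q i j) := by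
    intro i j
    rcases (hq i j).eq_or_lt with h | h
    · rw [← h]; simp; exact mul_nonneg (hr0 i) (hr0 j)
    · have hi : 0 < r i := h.trans_le (hle i j)
      have hj : 0 < r j := h.trans_le (by rw [hsym]; exact hle j i)
      have := Real.log_le_sub_one_of_pos (show 0 < r i * r j / q i j by positivity)
      rw [Real.log_div (by positivity) h.ne', Real.log_mul hi.ne' hj.ne'] at this
      have h2 := mul_le_mul_of_nonneg_left this h.le
      have e : q i j * (r i * r j / q i j - 1) = r i * r j - q i j := by field_simp
      rw [e] at h2
      linarith
  have h1 := Finset.sum_le_sum fun i (_ : i ∈ (univ : Finset κ)) => Finset.sum_le_sum fun j (_ : j ∈ (univ : Finset κ)) => key i j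
  refine le_trans (le_of_eq ?_) h1
  simp only [Finset.sum_add_distrib, Finset.sum_sub_distrib, ← Finset.sum_mul, ← Finset.mul_sum, hr, hs]
  have e2 : ∑ i, ∑ j, q i j * Real.log (r j) = ∑ i, r i * Real.log (r i) := by
    rw [Finset.sum_comm]
    refine Finset.sum_congr rfl fun j _ => ?_
    rw [← Finset.sum_mul]
    congr 1
    rw [← hr]; exact Finset.sum_congr rfl fun i _ => hsym i j
  rw [e2]; ring

section tail
variable {p : ℕ} [NeZero p]

theorem card_cntM_upper (E : ℕ) (M : ZMod p → ZMod p → ℕ) (q : ZMod p → ZMod p → ℝ) (hq : ∀ i j, 0 ≤ q i j)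
    (hsym : ∀ i j, q i j = q j i) (hs : ∑ i, ∑ j, q i j = 1) :
    ((univ.filter (fun f : Fin E → ZMod p × ZMod p => cntM f = M)).card : ℝ) * √(∏ z : ZMod p × ZMod p, q z.1 z.2 ^ M z.1 z.2) ≤ 1 := by
  have h1 := sum_all_prod (ι := Fin E) (fun z : ZMod p × ZMod p => q z.1 z.2)
  rw [Fintype.sum_prod_type, hs, one_pow] at h1
  rw [← h1]
  calc _ = ∑ f : Fin E → ZMod p × ZMod p with cntM f = M, ∏ l, q (f l).1 (f l).2 := by
        rw [Finset.sum_congr rfl (g := fun _ => √(∏ z : ZMod p × ZMod p, q z.1 z.2 ^ M z.1 z.2))]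
        · rw [Finset.sum_const, nsmul_eq_mul]
        · intro f hf
          have hM := (mem_filter.1 hf).2
          symm
          rw [Real.sqrt_eq_iff_mul_self_eq (Finset.prod_nonneg fun z _ => pow_nonneg (hq _ _) _)
            (Finset.prod_nonneg fun l _ => hq _ _)]
          have e1 : ∏ l, q (f l).1 (f l).2 = ∏ z : ZMod p × ZMod p, q z.1 z.2 ^ cnt f z :=
            prod_cnt f (fun z : ZMod p × ZMod p => q z.1 z.2)
          have e2 : ∏ z : ZMod p × ZMod p, q z.1 z.2 ^ cnt f z = ∏ z : ZMod p × ZMod p, q z.1 z.2 ^ cnt f (z.2, z.1) := by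
            rw [← Equiv.prod_comp (Equiv.prodComm (ZMod p) (ZMod p))]
            refine Finset.prod_congr rfl fun z _ => ?_
            simp only [Equiv.prodComm_apply, Prod.fst_swap, Prod.snd_swap]
            rw [hsym]; rfl
          rw [e1]
          nth_rewrite 2 [e2]
          rw [← Finset.prod_mul_distrib]
          refine Finset.prod_congr rfl fun z _ => ?_
          rw [← pow_add, ← hM]; rfl
    _ ≤ _ := Finset.sum_le_sum_of_subset_of_nonneg (Finset.subset_univ _)
        (fun f _ _ => Finset.prod_nonneg fun l _ => hq _ _)

end tail


section tail2
variable {p : ℕ} [NeZero p]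

theorem hh_congr (d n : ℕ) {E : ℕ} (f g : Fin E → ZMod p × ZMod p) (h : cntM f = cntM g) : hh d n f = hh d n g := by
  have : Rf f = Rf g := by
    funext i
    rw [← sum_cntM, ← sum_cntM, h]
  unfold hh
  rw [this]

theorem mass_aux (X V W B n d h g lp : ℝ) (_hX0 : 0 ≤ X) (hV0 : 0 ≤ V) (hW0 : 0 < W) (hB : 0 ≤ B) (hn : 0 ≤ n) (hd : 1 ≤ d)
    (hX : X ≤ Real.exp (-(d * n * g / 2))) (hV : V ≤ Real.exp (-(n * h))) (hW : W⁻¹ ≤ B * Real.exp (d * n * h)) (hgh : 2 * h ≤ g) :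
    X * (Real.exp (-(n * lp)) * V / W) ≤ B * Real.exp (-(n / 2 * (g + 2 * lp))) := by
  have h1 : X * (Real.exp (-(n * lp)) * V / W) ≤
      Real.exp (-(d * n * g / 2)) * (Real.exp (-(n * lp)) * Real.exp (-(n * h)) * (B * Real.exp (d * n * h))) := by
    rw [div_eq_mul_inv]
    gcongr
  refine h1.trans ?_
  have e : Real.exp (-(d * n * g / 2)) * (Real.exp (-(n * lp)) * Real.exp (-(n * h)) * (B * Real.exp (d * n * h)))
      = B * Real.exp (-(d * n * g / 2) + -(n * lp) + -(n * h) + d * n * h) := by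
    simp only [Real.exp_add]; ring
  rw [e]
  refine mul_le_mul_of_nonneg_left (Real.exp_le_exp.2 ?_) hB
  have : 0 ≤ n * (d - 1) * (g - 2 * h) := mul_nonneg (mul_nonneg hn (by linarith)) (by linarith)
  nlinarith

theorem mass (d n E : ℕ) (hd : 0 < d) (hn : 0 < n) (hE : 2 * E = d * n) (f : Fin E → ZMod p × ZMod p)
    (τ : ℝ) (hτ : (p : ℝ) ^ 4 * τ ≤ 4)
    (hf : τ < ∑ i : ZMod p, ∑ j : ZMod p, ((cntM f i j : ℝ) / (d * n) - 1 / (p : ℝ) ^ 2) ^ 2) :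
    ∑ f' : Fin E → ZMod p × ZMod p with cntM f' = cntM f, hh d n f' ≤ (((2 * E : ℕ) : ℝ) + 1) ^ p * Real.exp (-(n * (p : ℝ) ^ 2 * τ / 16)) := by
  have hp : (0 : ℝ) < p := by exact_mod_cast Nat.pos_of_ne_zero (NeZero.ne p)
  have hBp : (0 : ℝ) ≤ (((2 * E : ℕ) : ℝ) + 1) ^ p := by positivity
  by_cases hdiv : ∀ i, d ∣ Rf f i
  swap
  · have h0 : hh d n f = 0 := by
      unfold hh
      rw [Finset.filter_false_of_mem]
      · simp
      · intro a _ h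
        exact hdiv fun i => ⟨_, h i⟩
    rw [Finset.sum_eq_zero]
    · exact mul_nonneg hBp (Real.exp_pos _).le
    · intro f' hf'
      rw [hh_congr d n f' f (mem_filter.1 hf').2, h0]
  rw [Finset.sum_congr rfl (g := fun _ => hh d n f) (fun f' hf' => hh_congr d n f' f (mem_filter.1 hf').2), Finset.sum_const, nsmul_eq_mul]
  rw [hh_eq d n hd f hdiv]
  have hdn : (0 : ℝ) < (d : ℝ) * n := by positivity
  have hdr : (1 : ℝ) ≤ d := by exact_mod_cast hd
  have hnr : (0 : ℝ) < n := by exact_mod_cast hn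
  set q : ZMod p → ZMod p → ℝ := fun i j => (cntM f i j : ℝ) / (d * n) with hq
  set r : ZMod p → ℝ := fun i => (Rf f i : ℝ) / (d * n) with hr
  have hq0 : ∀ i j, 0 ≤ q i j := fun i j => by positivity
  have hr0 : ∀ i, 0 ≤ r i := fun i => by positivity
  have hqs : ∀ i j, q i j = q j i := fun i j => by simp only [hq, cntM_symm f i j]
  have hqr : ∀ i, ∑ j, q i j = r i := fun i => by
    simp only [hq, hr, ← Finset.sum_div, ← Nat.cast_sum, sum_cntM]
  have hEr : ((2 * E : ℕ) : ℝ) = d * n := by rw [hE]; push_cast; rfl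
  have hrs : ∑ i, r i = 1 := by
    simp only [hr, ← Finset.sum_div, ← Nat.cast_sum, sum_Rf]
    rw [hEr]; field_simp
  have hqs1 : ∑ i, ∑ j, q i j = 1 := by simp only [hqr, hrs]
  set h := ∑ i, r i * Real.log (r i) with hh'
  set g := ∑ i, ∑ j, q i j * Real.log (q i j) with hg'
  have hgh : 2 * h ≤ g := subadd q r hq0 hqs hqr hrs
  -- entropy bound
  have hD : (p : ℝ) ^ 2 * τ / 8 ≤ g + 2 * Real.log p := by
    have := D_lower (fun z : ZMod p × ZMod p => q z.1 z.2) ((p : ℝ) ^ 2) τ (by positivity) (by simp [ZMod.card, pow_two]) (fun z => hq0 _ _)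
      (by rw [Fintype.sum_prod_type]; exact hqs1) (by rw [← pow_mul]; exact hτ) (by rw [Fintype.sum_prod_type]; exact hf)
    rw [Fintype.sum_prod_type, Real.log_pow] at this
    exact_mod_cast this
  have hX := card_cntM_upper E (cntM f) q hq0 hqs hqs1
  have hQ : ∏ z : ZMod p × ZMod p, q z.1 z.2 ^ cntM f z.1 z.2 = Real.exp (d * n * g) := by
    rw [hg', ← Fintype.sum_prod_type (f := fun z : ZMod p × ZMod p => q z.1 z.2 * Real.log (q z.1 z.2)), Finset.mul_sum, Real.exp_sum]
    refine Finset.prod_congr rfl fun z _ => pow_eq_exp _ (hq0 _ _) _ _ ?_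
    simp only [hq]; field_simp
  rw [hQ] at hX
  have hsq : √(Real.exp (d * n * g)) = Real.exp (d * n * g / 2) := by
    rw [Real.sqrt_eq_iff_mul_self_eq (Real.exp_pos _).le (Real.exp_pos _).le, ← Real.exp_add]; congr 1; ring
  rw [hsq] at hX
  have hV := types_upper (ι := Fin n) (fun i => Rf f i / d) r hr0 hrs
  have hRd : ∀ i, ((Rf f i / d : ℕ) : ℝ) = n * r i := fun i => by
    have := Nat.div_mul_cancel (hdiv i)
    have e : ((Rf f i / d : ℕ) : ℝ) * d = Rf f i := by exact_mod_cast this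
    simp only [hr]
    rw [← e]; field_simp
  have hVe : ∏ j, r j ^ (Rf f j / d) = Real.exp (n * h) := by
    rw [hh', Finset.mul_sum, Real.exp_sum]
    exact Finset.prod_congr rfl fun i _ => pow_eq_exp _ (hr0 _) _ _ (hRd i)
  rw [hVe] at hV
  have hW := types_lower (ι := Fin E ⊕ Fin E) (Rf f) (2 * E) (by simp; ring) (by rw [hE]; positivity) (sum_Rf f)
  have hWe : ∏ j, ((Rf f j : ℝ) / (2 * E : ℕ)) ^ Rf f j = Real.exp (d * n * h) := by
    rw [hh', Finset.mul_sum, Real.exp_sum, hEr]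
    refine Finset.prod_congr rfl fun i _ => pow_eq_exp _ (hr0 _) _ _ ?_
    simp only [hr]; field_simp
  rw [hWe, ZMod.card] at hW
  have hWpos := card_TT_pos (ι := Fin E ⊕ Fin E) (Rf f) (by rw [sum_Rf]; simp; ring)
  have hpn : ((p : ℝ) ^ n)⁻¹ = Real.exp (-(n * Real.log p)) := by
    rw [Real.exp_neg, mul_comm, Real.exp_mul, Real.exp_log hp, Real.rpow_natCast]
  rw [hpn]
  generalize (univ.filter (fun f' : Fin E → ZMod p × ZMod p => cntM f' = cntM f)).card = X at *
  generalize (TT (Fin n) (fun i => Rf f i / d)).card = V at *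
  generalize (TT (Fin E ⊕ Fin E) (Rf f)).card = W at *
  have hW0 : (0 : ℝ) < W := by exact_mod_cast hWpos
  have key := mass_aux X V W ((((2 * E : ℕ) : ℝ) + 1) ^ p) n d h g (Real.log p) (Nat.cast_nonneg _) (Nat.cast_nonneg _) hW0 hBp hnr.le hdr
    (by rw [Real.exp_neg, ← one_div, le_div_iff₀ (Real.exp_pos _)]; exact hX)
    (by rw [Real.exp_neg, ← one_div, le_div_iff₀ (Real.exp_pos _)]; exact hV)
    (by rw [← one_div, div_le_iff₀ hW0]; linarith) hgh
  refine key.trans (mul_le_mul_of_nonneg_left (Real.exp_le_exp.2 ?_) hBp)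
  have := mul_le_mul_of_nonneg_left hD (show (0 : ℝ) ≤ n / 2 by positivity)
  linarith

theorem tail (d n E : ℕ) (hd : 0 < d) (hn : 0 < n) (hE : 2 * E = d * n) (τ : ℝ) (hτ : (p : ℝ) ^ 4 * τ ≤ 4)
    (Eb : (Fin E → ZMod p × ZMod p) → Prop) [DecidablePred Eb]
    (hEb : ∀ f, Eb f ↔ ∑ i : ZMod p, ∑ j : ZMod p, ((cntM f i j : ℝ) / (d * n) - 1 / (p : ℝ) ^ 2) ^ 2 ≤ τ) :
    ∑ f with ¬ Eb f, hh d n f ≤ (((2 * E : ℕ) : ℝ) + 1) ^ (p ^ 2 + p) * Real.exp (-(n * (p : ℝ) ^ 2 * τ / 16)) := by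
  classical
  set S := univ.filter (fun f : Fin E → ZMod p × ZMod p => ¬ Eb f) with hS
  set I := Fintype.piFinset (fun _ : ZMod p => Fintype.piFinset (fun _ : ZMod p => range (2 * E + 1))) with hI
  have hmaps : ∀ f ∈ S, cntM f ∈ I := by
    intro f _
    rw [hI, Fintype.mem_piFinset]
    intro i
    rw [Fintype.mem_piFinset]
    intro j
    rw [mem_range]
    have h1 : cntM f i j ≤ ∑ j, cntM f i j := Finset.single_le_sum (f := fun j => cntM f i j) (fun _ _ => Nat.zero_le _) (mem_univ j)
    rw [sum_cntM] at h1
    have h2 : Rf f i ≤ ∑ i, Rf f i := Finset.single_le_sum (f := fun i => Rf f i) (fun _ _ => Nat.zero_le _) (mem_univ i)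
    rw [sum_Rf] at h2
    omega
  rw [← Finset.sum_fiberwise_of_maps_to hmaps]
  have hb : ∀ M ∈ I, ∑ f ∈ S with cntM f = M, hh d n f ≤ (((2 * E : ℕ) : ℝ) + 1) ^ p * Real.exp (-(n * (p : ℝ) ^ 2 * τ / 16)) := by
    intro M _
    by_cases hM : ∃ f ∈ S, cntM f = M
    · obtain ⟨f, hf, rfl⟩ := hM
      have h1 := mass d n E hd hn hE f τ hτ (by
        have := (mem_filter.1 hf).2
        rw [hEb] at this
        exact not_le.1 this)
      refine le_trans ?_ h1
      exact Finset.sum_le_sum_of_subset_of_nonneg (Finset.filter_subset_filter _ (Finset.subset_univ _)) (fun f _ _ => hh_nonneg d n f)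
    · push Not at hM
      rw [Finset.sum_eq_zero]
      · positivity
      · intro f hf
        rw [mem_filter] at hf
        exact absurd hf.2 (hM f hf.1)
  refine (Finset.sum_le_sum hb).trans (le_of_eq ?_)
  rw [Finset.sum_const, nsmul_eq_mul]
  have hc : (I.card : ℝ) = (((2 * E : ℕ) : ℝ) + 1) ^ (p ^ 2) := by
    simp only [hI, Fintype.card_piFinset, Finset.prod_const, Finset.card_univ, ZMod.card, card_range]
    push_cast
    rw [pow_two, pow_mul]
  rw [hc, pow_add]; ring

end tail2


section rows
variable {p : ℕ} [NeZero p]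

theorem row_real (q : ZMod p → ℝ) (r s : ℝ) (hr : ∑ j, q j = r) (hs : ∑ j, (q j - 1 / (p : ℝ) ^ 2) ^ 2 = s)
    (hs4 : 4 * (p : ℝ) ^ 3 * s ≤ 1) :
    1 / (2 * (p : ℝ)) ≤ r ∧ 1 / (p : ℝ) * ∑ j, ((p : ℝ) * q j / r - 1) ^ 2 ≤ 4 * (p : ℝ) ^ 3 * s ∧
      r * (1 / (p : ℝ) * ∑ j, ((p : ℝ) * q j / r - 1) ^ 2) ≤ 2 * (p : ℝ) ^ 2 * s := by
  have hp : (0 : ℝ) < p := by exact_mod_cast Nat.pos_of_ne_zero (NeZero.ne p)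
  have hcard : ((univ : Finset (ZMod p)).card : ℝ) = p := by rw [Finset.card_univ, ZMod.card]
  have hs0 : 0 ≤ s := by rw [← hs]; exact Finset.sum_nonneg fun j _ => sq_nonneg _
  have h1 : (r - 1 / p) ^ 2 ≤ p * s := by
    have := sq_sum_le_card_mul_sum_sq (s := (univ : Finset (ZMod p))) (f := fun j => q j - 1 / (p : ℝ) ^ 2)
    rw [hcard, hs, Finset.sum_sub_distrib, hr, Finset.sum_const, nsmul_eq_mul, hcard] at this
    have e : (p : ℝ) * (1 / (p : ℝ) ^ 2) = 1 / p := by field_simp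
    rwa [e] at this
  have h2 : |r - 1 / p| ≤ 1 / (2 * p) := by
    apply abs_le_of_sq_le_sq _ (by positivity)
    refine h1.trans ?_
    rw [div_pow, one_pow, le_div_iff₀ (by positivity)]
    nlinarith
  have hr1 : 1 / (2 * (p : ℝ)) ≤ r := by
    have := (abs_le.1 h2).1
    have e : 1 / (p : ℝ) = 1 / (2 * p) + 1 / (2 * p) := by field_simp; norm_num
    linarith
  have hr0 : 0 < r := lt_of_lt_of_le (by positivity) hr1
  have hexp : ∀ c : ℝ, ∑ j, (q j - c) ^ 2 = ∑ j, q j ^ 2 - 2 * c * r + p * c ^ 2 := by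
    intro c
    have : ∀ j, (q j - c) ^ 2 = q j ^ 2 - 2 * c * q j + c ^ 2 := fun j => by ring
    simp only [this, Finset.sum_add_distrib, Finset.sum_sub_distrib, ← Finset.mul_sum, hr, Finset.sum_const, nsmul_eq_mul, hcard]
  have hv : ∑ j, (q j - r / p) ^ 2 ≤ s := by
    rw [← hs, hexp, hexp]
    have : (∑ j, q j ^ 2 - 2 * (1 / (p : ℝ) ^ 2) * r + p * (1 / (p : ℝ) ^ 2) ^ 2) - (∑ j, q j ^ 2 - 2 * (r / p) * r + p * (r / p) ^ 2)
        = (r - 1 / p) ^ 2 / p := by field_simp; ring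
    have h0 : 0 ≤ (r - 1 / p) ^ 2 / p := by positivity
    linarith
  have hX : 1 / (p : ℝ) * ∑ j, ((p : ℝ) * q j / r - 1) ^ 2 = p / r ^ 2 * ∑ j, (q j - r / p) ^ 2 := by
    rw [Finset.mul_sum, Finset.mul_sum]
    refine Finset.sum_congr rfl fun j _ => ?_
    field_simp
  have hpr : 1 / r ≤ 2 * p := by
    rw [div_le_iff₀ hr0]
    rw [div_le_iff₀ (by positivity)] at hr1
    linarith
  have hpr0 : 0 ≤ 1 / r := by positivity
  rw [hX]
  refine ⟨hr1, ?_, ?_⟩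
  · calc p / r ^ 2 * ∑ j, (q j - r / p) ^ 2 = p * (1 / r) ^ 2 * ∑ j, (q j - r / p) ^ 2 := by field_simp
      _ ≤ p * (2 * p) ^ 2 * s := by gcongr
      _ = _ := by ring
  · calc r * (p / r ^ 2 * ∑ j, (q j - r / p) ^ 2) = p * (1 / r) * ∑ j, (q j - r / p) ^ 2 := by field_simp
      _ ≤ p * (2 * p) * s := by gcongr
      _ = _ := by ring

theorem far_bound (d N n p K : ℕ) (b X2 : ℝ) (hNn : N ≤ n) (hn : d + 1 ≤ n) (hn1 : 2 ≤ n) (hX0 : 0 ≤ X2)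
    (hX : N * X2 ≤ 2 * p ^ 2 * (b * Real.log n)) (hb : 0 ≤ b) (hp : 1 ≤ p) (hK : 4 * (6 + d * b) * p ^ 2 * Real.log n ≤ K) :
    (((d * N : ℕ) : ℝ) + 1) ^ p * ((N : ℝ) + 1) ^ p * √((1 + X2) ^ N) ^ d * √((1 / 2 : ℝ) ^ K) ≤ 1 / (n : ℝ) ^ 2 := by
  have hn0 : (0 : ℝ) < n := by exact_mod_cast (by omega : 0 < n)
  have hnr : (2 : ℝ) ≤ n := by exact_mod_cast hn1
  have hpr : (1 : ℝ) ≤ p := by exact_mod_cast hp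
  set L := Real.log n with hL
  have hL0 : 0 ≤ L := Real.log_nonneg (by linarith)
  have heL : Real.exp (2 * L) = (n : ℝ) ^ 2 := by
    rw [hL, mul_comm, Real.exp_mul, Real.exp_log hn0]; norm_cast
  have hNr : (N : ℝ) ≤ n := by exact_mod_cast hNn
  have hdr : (d : ℝ) + 1 ≤ n := by exact_mod_cast hn
  have hd0 : (0 : ℝ) ≤ d := Nat.cast_nonneg _
  have h1 : (((d * N : ℕ) : ℝ) + 1) ^ p ≤ Real.exp (2 * L * p) := by
    rw [Real.exp_mul, heL, Real.rpow_natCast]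
    gcongr
    push_cast; nlinarith
  have h2 : ((N : ℝ) + 1) ^ p ≤ Real.exp (2 * L * p) := by
    rw [Real.exp_mul, heL, Real.rpow_natCast]
    gcongr
    nlinarith
  have h3 : √((1 + X2) ^ N) ^ d ≤ Real.exp (d * (p ^ 2 * (b * L))) := by
    rw [Real.exp_nat_mul]
    gcongr
    rw [Real.sqrt_le_left (Real.exp_pos _).le, ← Real.exp_nat_mul]
    calc (1 + X2) ^ N ≤ (Real.exp X2) ^ N := by
          gcongr; linarith [Real.add_one_le_exp X2]
      _ = Real.exp (N * X2) := by rw [← Real.exp_nat_mul]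
      _ ≤ _ := Real.exp_le_exp.2 (by push_cast; linarith)
  have h4 : √((1 / 2 : ℝ) ^ K) ≤ Real.exp (-(K / 4)) := by
    rw [Real.sqrt_le_left (Real.exp_pos _).le, ← Real.exp_nat_mul]
    have : (1 / 2 : ℝ) ≤ Real.exp (-(1 / 2)) := by
      have := Real.add_one_le_exp (-(1 / 2 : ℝ))
      linarith
    calc (1 / 2 : ℝ) ^ K ≤ (Real.exp (-(1 / 2))) ^ K := by gcongr
      _ = Real.exp (K * (-(1 / 2))) := by rw [← Real.exp_nat_mul]
      _ ≤ _ := Real.exp_le_exp.2 (by push_cast; linarith)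
  calc _ ≤ Real.exp (2 * L * p) * Real.exp (2 * L * p) * Real.exp (d * (p ^ 2 * (b * L))) * Real.exp (-(K / 4)) := by
        gcongr
    _ = Real.exp (2 * L * p + 2 * L * p + d * (p ^ 2 * (b * L)) + -(K / 4)) := by simp only [Real.exp_add]
    _ ≤ Real.exp (-(2 * L)) := by
        apply Real.exp_le_exp.2
        have e1 : L * p ≤ L * (p : ℝ) ^ 2 := by
          apply mul_le_mul_of_nonneg_left _ hL0; nlinarith
        have e2 : L ≤ L * (p : ℝ) ^ 2 := by
          nlinarith [mul_nonneg hL0 (show (0 : ℝ) ≤ (p : ℝ) ^ 2 - 1 by nlinarith)]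
        have e3 : 4 * (6 + d * b) * (p : ℝ) ^ 2 * L = 24 * (L * (p : ℝ) ^ 2) + 4 * (d * (p ^ 2 * (b * L))) := by ring
        rw [e3] at hK
        linarith
    _ = _ := by rw [Real.exp_neg, heL, one_div]

theorem prod_est {ι : Type*} [Fintype ι] (ρ ε : ι → ℝ) (h : ∀ i, |ρ i - 1| ≤ ε i) (hε : ∑ i, ε i ≤ 1) :
    |∏ i, ρ i - 1| ≤ 2 * ∑ i, ε i := by
  have hε0 : ∀ i, 0 ≤ ε i := fun i => (abs_nonneg _).trans (h i)
  have key : ∀ s : Finset ι, |∏ i ∈ s, ρ i - 1| ≤ Real.exp (∑ i ∈ s, ε i) - 1 := by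
    classical
    intro s
    induction s using Finset.induction_on with
    | empty => simp
    | insert a s ha ih =>
      rw [Finset.prod_insert ha, Finset.sum_insert ha, Real.exp_add]
      have e : ρ a * ∏ i ∈ s, ρ i - 1 = ρ a * (∏ i ∈ s, ρ i - 1) + (ρ a - 1) := by ring
      rw [e]
      refine (abs_add_le _ _).trans ?_
      rw [abs_mul]
      have h1 : |ρ a| ≤ Real.exp (ε a) := by
        have h2 := Real.add_one_le_exp (ε a)
        have h3 := abs_add_le (ρ a - 1) 1
        rw [sub_add_cancel, abs_one] at h3
        linarith [h a]
      have h4 : |ρ a - 1| ≤ Real.exp (ε a) - 1 := by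
        have h2 := Real.add_one_le_exp (ε a)
        linarith [h a]
      have h5 : 1 ≤ Real.exp (∑ i ∈ s, ε i) := Real.one_le_exp (Finset.sum_nonneg fun i _ => hε0 i)
      have h6 := mul_le_mul h1 ih (abs_nonneg _) (Real.exp_pos _).le
      nlinarith
  refine (key univ).trans ?_
  have hs0 : 0 ≤ ∑ i, ε i := Finset.sum_nonneg fun i _ => hε0 i
  generalize ∑ i, ε i = x at *
  have := Real.abs_exp_sub_one_le (x := x) (by rw [abs_of_nonneg hs0]; exact hε)
  rw [abs_of_nonneg hs0] at this
  exact (le_abs_self _).trans this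

end rows


section rowsE
variable {p : ℕ} [NeZero p]

theorem row_low (d n : ℕ) (M : ZMod p → ZMod p → ℕ) (i : ZMod p) (τ : ℝ)
    (hτ : 4 * (p : ℝ) ^ 3 * τ ≤ 1)
    (hEb : ∑ i : ZMod p, ∑ j : ZMod p, ((M i j : ℝ) / (d * n) - 1 / (p : ℝ) ^ 2) ^ 2 ≤ τ) :
    1 / (2 * (p : ℝ)) ≤ ((∑ j, M i j : ℕ) : ℝ) / (d * n) := by
  have hs : ∑ j : ZMod p, ((M i j : ℝ) / (d * n) - 1 / (p : ℝ) ^ 2) ^ 2 ≤ τ := by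
    refine le_trans ?_ hEb
    exact Finset.single_le_sum (f := fun i => ∑ j : ZMod p, ((M i j : ℝ) / (d * n) - 1 / (p : ℝ) ^ 2) ^ 2)
      (fun i _ => Finset.sum_nonneg fun j _ => sq_nonneg _) (Finset.mem_univ i)
  have h := (row_real (p := p) (fun j => (M i j : ℝ) / (d * n)) (((∑ j, M i j : ℕ) : ℝ) / (d * n)) _
    (by push_cast; rw [Finset.sum_div]) rfl (le_trans (by gcongr) hτ)).1
  exact h

theorem row_one (d n K : ℕ) (hd : 3 ≤ d) (hn : d + 1 ≤ n) (hp : 1 ≤ p) (m : ZMod p → ℕ) (N : ℕ)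
    (hN : ∑ j, m j = d * N) (hNn : N ≤ n) (hc : ∑ j : ZMod p, j * (m j : ZMod p) = 0)
    (b s Y u : ℝ) (hb : 0 ≤ b) (hY0 : 0 ≤ Y) (hu0 : 0 ≤ u)
    (hs : ∑ j : ZMod p, ((m j : ℝ) / (d * n) - 1 / (p : ℝ) ^ 2) ^ 2 = s)
    (hsb : s * n ≤ b * Real.log n)
    (h1 : 4 * (p : ℝ) ^ 3 * (b * Real.log n) ≤ n)
    (hY : 4 * (p : ℝ) ^ 3 * (b * Real.log n) = Y ^ 2 * n)
    (hYZ : 768 * (2 * (p : ℝ) ^ 2 * (b * Real.log n) * Y) ≤ 1)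
    (hu : 2 * (p : ℝ) ^ 3 ≤ u ^ 2 * n)
    (hK : 4 * (6 + d * b) * (p : ℝ) ^ 2 * Real.log n ≤ K)
    (hK2 : (768 * (p : ℝ)) ^ 2 * K * (2 * p) ≤ n) :
    |(p : ℝ) ^ N * rowCount p d N m / (p * ((TT (Fin N × Fin d) m).card : ℝ)) - 1|
      ≤ 192 * (2 * (p : ℝ) ^ 2 * (s * n) * Y + u) + 1 / (n : ℝ) ^ 2 := by
  have hn0 : (0 : ℝ) < n := by exact_mod_cast (by omega : 0 < n)
  have hd0 : (0 : ℝ) < d := by exact_mod_cast (by omega : 0 < d)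
  have hp0 : (0 : ℝ) < p := by exact_mod_cast hp
  have hs0 : 0 ≤ s := by rw [← hs]; exact Finset.sum_nonneg fun j _ => sq_nonneg _
  have hsum : ∑ j : ZMod p, (m j : ℝ) / (d * n) = (N : ℝ) / n := by
    rw [← Finset.sum_div]
    have : (∑ j : ZMod p, (m j : ℝ)) = d * N := by exact_mod_cast hN
    rw [this]; field_simp
  have hs4 : 4 * (p : ℝ) ^ 3 * s ≤ 1 := by
    have : 4 * (p : ℝ) ^ 3 * s * n ≤ 1 * n := by
      calc 4 * (p : ℝ) ^ 3 * s * n = 4 * (p : ℝ) ^ 3 * (s * n) := by ring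
        _ ≤ 4 * (p : ℝ) ^ 3 * (b * Real.log n) := by gcongr
        _ ≤ 1 * n := by linarith
    exact le_of_mul_le_mul_right this hn0
  obtain ⟨r1, r2, r3⟩ := row_real (p := p) _ _ _ hsum hs hs4
  have hNlow : (n : ℝ) ≤ 2 * p * N := by
    rw [div_le_div_iff₀ (by positivity) hn0] at r1; linarith
  have hN0 : (0 : ℝ) < N := by
    by_contra h
    have : 2 * (p : ℝ) * N ≤ 0 := mul_nonpos_of_nonneg_of_nonpos (by positivity) (by linarith)
    linarith
  have hterm : ∀ j, (p : ℝ) * ((m j : ℝ) / (d * n)) / ((N : ℝ) / n) = (p : ℝ) * m j / ((d * N : ℕ) : ℝ) := by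
    intro j; push_cast; field_simp
  simp only [hterm] at r2 r3
  set A : ℝ := 1 / (p : ℝ) * ∑ j, ((p : ℝ) * m j / ((d * N : ℕ) : ℝ) - 1) ^ 2 with hA
  have hA0 : 0 ≤ A := by
    rw [hA]; exact mul_nonneg (by positivity) (Finset.sum_nonneg fun j _ => sq_nonneg _)
  have hX2 : √A ^ 2 = A := Real.sq_sqrt hA0
  have hXY : √A ≤ Y := by
    apply Real.sqrt_le_iff.mpr
    refine ⟨hY0, le_trans r2 ?_⟩
    have : 4 * (p : ℝ) ^ 3 * s * n ≤ Y ^ 2 * n := by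
      calc 4 * (p : ℝ) ^ 3 * s * n = 4 * (p : ℝ) ^ 3 * (s * n) := by ring
        _ ≤ 4 * (p : ℝ) ^ 3 * (b * Real.log n) := by gcongr
        _ = _ := hY
    exact le_of_mul_le_mul_right this hn0
  have hNA : N * A ≤ 2 * (p : ℝ) ^ 2 * (s * n) := by
    have : N * A = n * ((N : ℝ) / n * A) := by field_simp
    rw [this]
    calc n * ((N : ℝ) / n * A) ≤ n * (2 * (p : ℝ) ^ 2 * s) := by gcongr
      _ = _ := by ring
  have hNX : N * √A ^ 3 ≤ 2 * (p : ℝ) ^ 2 * (s * n) * Y := by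
    calc N * √A ^ 3 = N * √A ^ 2 * √A := by ring
      _ = N * A * √A := by rw [hX2]
      _ ≤ _ := by gcongr
  have hlog : 0 ≤ b * Real.log n := by
    refine le_trans ?_ hsb; positivity
  have hfar := far_bound d N n p K b A hNn hn (by omega) hA0
    (le_trans hNA (by gcongr)) hb hp hK
  have hpu : (p : ℝ) / √N ≤ u := by
    rw [div_le_iff₀ (Real.sqrt_pos.mpr hN0)]
    refine (abs_le_of_sq_le_sq' ?_ (by positivity)).2
    rw [mul_pow, Real.sq_sqrt hN0.le]
    have h3 : 2 * (p : ℝ) * (p : ℝ) ^ 2 ≤ 2 * (p : ℝ) * (u ^ 2 * N) := by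
      calc 2 * (p : ℝ) * (p : ℝ) ^ 2 = 2 * (p : ℝ) ^ 3 := by ring
        _ ≤ u ^ 2 * n := hu
        _ ≤ u ^ 2 * (2 * p * N) := by gcongr
        _ = _ := by ring
    exact le_of_mul_le_mul_left h3 (by positivity)
  have hre := row_est (p := p) d N K hd (by exact_mod_cast hN0) m hN hc (√A) (Real.sqrt_nonneg _) hX2
    (by
      refine le_trans ?_ hYZ
      have : 2 * (p : ℝ) ^ 2 * (s * n) * Y ≤ 2 * (p : ℝ) ^ 2 * (b * Real.log n) * Y := by gcongr
      linarith)
    (by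
      have : 2 * (p : ℝ) * ((768 * (p : ℝ)) ^ 2 * K) ≤ 2 * (p : ℝ) * N := by
        calc 2 * (p : ℝ) * ((768 * (p : ℝ)) ^ 2 * K) = (768 * (p : ℝ)) ^ 2 * K * (2 * p) := by ring
          _ ≤ (n : ℝ) := hK2
          _ ≤ _ := hNlow
      exact le_of_mul_le_mul_left this (by positivity))
  rw [hX2] at hre
  refine le_trans hre ?_
  linarith

theorem rows_est (d n K : ℕ) (hd : 3 ≤ d) (hn : d + 1 ≤ n) (hp : 1 ≤ p) (M : ZMod p → ZMod p → ℕ)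
    (ht : ∑ i : ZMod p, ∑ j : ZMod p, M i j = d * n) (hdiv : ∀ i, d ∣ ∑ j, M i j)
    (hc : ∀ i, ∑ j : ZMod p, j * (M i j : ZMod p) = 0)
    (b Y u Z : ℝ) (hb : 0 ≤ b) (hY0 : 0 ≤ Y) (hu0 : 0 ≤ u)
    (hEb : ∑ i : ZMod p, ∑ j : ZMod p, ((M i j : ℝ) / (d * n) - 1 / (p : ℝ) ^ 2) ^ 2 ≤ b * Real.log n / n)
    (h1 : 4 * (p : ℝ) ^ 3 * (b * Real.log n) ≤ n)
    (hY : 4 * (p : ℝ) ^ 3 * (b * Real.log n) = Y ^ 2 * n)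
    (hYZ : 2 * (p : ℝ) ^ 2 * (b * Real.log n) * Y = 4 * Z)
    (hZ : 3072 * Z ≤ 1)
    (hu : 2 * (p : ℝ) ^ 3 ≤ u ^ 2 * n) (huZ : p * u ≤ 2 * Z) (hnZ : p / (n : ℝ) ^ 2 ≤ Z)
    (hK : 4 * (6 + d * b) * (p : ℝ) ^ 2 * Real.log n ≤ K)
    (hK2 : (768 * (p : ℝ)) ^ 2 * K * (2 * p) ≤ n) :
    |∏ i, rho d M i - 1| ≤ 2306 * Z := by
  have hn0 : (0 : ℝ) < n := by exact_mod_cast (by omega : 0 < n)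
  set s : ZMod p → ℝ := fun i => ∑ j : ZMod p, ((M i j : ℝ) / (d * n) - 1 / (p : ℝ) ^ 2) ^ 2 with hs
  have hs0 : ∀ i, 0 ≤ s i := fun i => Finset.sum_nonneg fun j _ => sq_nonneg _
  have hst : (∑ i, s i) * n ≤ b * Real.log n := by
    rwa [le_div_iff₀ hn0] at hEb
  have hsi : ∀ i, s i ≤ ∑ i, s i := fun i =>
    Finset.single_le_sum (f := s) (fun i _ => hs0 i) (Finset.mem_univ i)
  have hrow : ∀ i, |rho d M i - 1| ≤ 192 * (2 * (p : ℝ) ^ 2 * (s i * n) * Y + u) + 1 / (n : ℝ) ^ 2 := by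
    intro i
    have hN : ∑ j, M i j = d * ((∑ j, M i j) / d) := (Nat.mul_div_cancel' (hdiv i)).symm
    refine row_one d n K hd hn hp (M i) _ hN ?_ (hc i) b (s i) Y u hb hY0 hu0 rfl ?_ h1 hY
      (by linarith) hu hK hK2
    · apply Nat.div_le_of_le_mul
      rw [← ht]
      exact Finset.single_le_sum (f := fun i => ∑ j, M i j) (fun _ _ => Nat.zero_le _) (Finset.mem_univ i)
    · refine le_trans ?_ hst
      exact mul_le_mul_of_nonneg_right (hsi i) hn0.le
  have hsum : ∑ i, (192 * (2 * (p : ℝ) ^ 2 * (s i * n) * Y + u) + 1 / (n : ℝ) ^ 2) ≤ 1153 * Z := by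
    have e : ∑ i, (192 * (2 * (p : ℝ) ^ 2 * (s i * n) * Y + u) + 1 / (n : ℝ) ^ 2)
        = 192 * (2 * (p : ℝ) ^ 2 * ((∑ i, s i) * n) * Y + p * u) + p / (n : ℝ) ^ 2 := by
      rw [Finset.sum_add_distrib, ← Finset.mul_sum, Finset.sum_add_distrib, ← Finset.sum_mul, ← Finset.mul_sum,
        ← Finset.sum_mul]
      simp [ZMod.card]
      ring
    rw [e]
    have : 2 * (p : ℝ) ^ 2 * ((∑ i, s i) * n) * Y ≤ 4 * Z := by
      rw [← hYZ]; gcongr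
    linarith
  have hZ0 : 0 ≤ Z := le_trans (by positivity) hnZ
  refine le_trans (prod_est _ _ hrow (by linarith)) (by linarith)

end rowsE


section core
variable {p : ℕ} [Fact p.Prime]

theorem hh_dvd (d n : ℕ) {E : ℕ} (f : Fin E → ZMod p × ZMod p) (h : hh d n f ≠ 0) (i : ZMod p) :
    d ∣ ∑ j, cntM f i j := by
  rw [sum_cntM]
  by_contra hc
  apply h
  unfold hh
  have : (univ.filter (fun a : Fin n → ZMod p => ∀ i, Rf f i = d * cnt a i)) = ∅ := by
    apply Finset.filter_eq_empty_iff.mpr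
    intro a _ ha
    exact hc ⟨_, ha i⟩
  rw [this]; simp

theorem core_sum (d n E K : ℕ) (hd : 3 ≤ d) (hn : d + 1 ≤ n) (hE : 2 * E = d * n) (hg : Nat.gcd p d = 1)
    (b Y u Z δ : ℝ) (hb : 0 ≤ b) (hY0 : 0 ≤ Y) (hu0 : 0 ≤ u)
    (h1 : 4 * (p : ℝ) ^ 3 * (b * Real.log n) ≤ n)
    (h4 : (p : ℝ) ^ 4 * (b * Real.log n / n) ≤ 4)
    (hY : 4 * (p : ℝ) ^ 3 * (b * Real.log n) = Y ^ 2 * n)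
    (hYZ : 2 * (p : ℝ) ^ 2 * (b * Real.log n) * Y = 4 * Z)
    (hZ : 3072 * Z ≤ 1)
    (hu : 2 * (p : ℝ) ^ 3 ≤ u ^ 2 * n) (huZ : p * u ≤ 2 * Z) (hnZ : p / (n : ℝ) ^ 2 ≤ Z)
    (hK : 4 * (6 + d * b) * (p : ℝ) ^ 2 * Real.log n ≤ K)
    (hK2 : (768 * (p : ℝ)) ^ 2 * K * (2 * p) ≤ n)
    (hδ : (p : ℝ) ^ p * ((((2 * E : ℕ) : ℝ) + 1) ^ (p ^ 2 + p) * Real.exp (-(n * (p : ℝ) ^ 2 * (b * Real.log n / n) / 16))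
      + (((2 * E : ℕ) : ℝ) + 1) ^ p * (1 - 1 / (4 * (p : ℝ) ^ 4)) ^ E) ≤ δ) (hδ1 : δ ≤ 2)
    (Q : (ZMod p → ZMod p → ℕ) → Prop) [DecidablePred Q]
    (hQ : ∀ M, Q M ↔ (∀ i, ∑ j : ZMod p, j * (M i j : ZMod p) = 0) ∧
      ∑ i : ZMod p, ∑ j : ZMod p, ((M i j : ℝ) / (d * n) - 1 / (p : ℝ) ^ 2) ^ 2 ≤ b * Real.log n / n) :
    |∑ f : Fin E → ZMod p × ZMod p with Q (cntM f), (p : ℝ) ^ p * hh d n f * ∏ i, rho d (cntM f) i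
      - (1 + if p = 2 then 1 else 0)| ≤ δ + 9224 * Z := by
  classical
  have hn0 : (0 : ℝ) < n := by exact_mod_cast (by omega : 0 < n)
  have hd0 : (0 : ℝ) < d := by exact_mod_cast (by omega : 0 < d)
  have hp1 : 1 ≤ p := (Fact.out : p.Prime).one_le
  have hp0 : (0 : ℝ) < p := by exact_mod_cast hp1
  have hZ0 : 0 ≤ Z := le_trans (by positivity) hnZ
  have hτ : 4 * (p : ℝ) ^ 3 * (b * Real.log n / n) ≤ 1 := by
    rw [mul_div_assoc', div_le_one hn0]; exact h1
  set Eb : (Fin E → ZMod p × ZMod p) → Prop := fun f =>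
    ∑ i : ZMod p, ∑ j : ZMod p, ((cntM f i j : ℝ) / (d * n) - 1 / (p : ℝ) ^ 2) ^ 2 ≤ b * Real.log n / n with hEb
  have hEbl : ∀ f, Eb f → ∀ i, (1 : ℝ) / 2 ≤ p * Rf f i / (2 * E : ℕ) := by
    intro f hf i
    have := row_low d n (cntM f) i _ hτ hf
    rw [sum_cntM, div_le_div_iff₀ (by positivity) (by positivity)] at this
    rw [hE]; push_cast
    rw [div_le_div_iff₀ (by positivity) (by positivity)]
    linarith
  have hS0 := S0_est (p := p) d n E (by omega) hE (by omega) hg Eb hEbl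
  have hT := tail (p := p) d n E (by omega) (by omega) hE _ h4 Eb (fun f => Iff.rfl)
  have hS0' : |∑ f : Fin E → ZMod p × ZMod p with (∀ i, ∑ j : ZMod p, j * (cntM f i j : ZMod p) = 0) ∧ Eb f,
      (p : ℝ) ^ p * hh d n f - (1 + if p = 2 then 1 else 0)| ≤ δ := by
    refine le_trans hS0 (le_trans ?_ hδ)
    gcongr
  have hfil : (Finset.univ.filter fun f : Fin E → ZMod p × ZMod p => (∀ i, ∑ j : ZMod p, j * (cntM f i j : ZMod p) = 0) ∧ Eb f)
      = Finset.univ.filter (fun f : Fin E → ZMod p × ZMod p => Q (cntM f)) := by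
    ext f; simp only [Finset.mem_filter, hQ, hEb]
  rw [hfil] at hS0'
  set S0 := ∑ f : Fin E → ZMod p × ZMod p with Q (cntM f), (p : ℝ) ^ p * hh d n f with hS0d
  have hite : (1 + if p = 2 then 1 else 0 : ℝ) ≤ 2 := by split_ifs <;> norm_num
  have hS04 : S0 ≤ 4 := by
    have := (abs_le.mp hS0').2; linarith
  have hdiff : |∑ f : Fin E → ZMod p × ZMod p with Q (cntM f), (p : ℝ) ^ p * hh d n f * ∏ i, rho d (cntM f) i - S0|
      ≤ 2306 * Z * S0 := by
    rw [hS0d, ← Finset.sum_sub_distrib, Finset.mul_sum]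
    refine le_trans (Finset.abs_sum_le_sum_abs _ _) (Finset.sum_le_sum fun f hf => ?_)
    have hQf := (hQ _).mp (Finset.mem_filter.mp hf).2
    by_cases h0 : hh d n f = 0
    · simp [h0]
    have hr := rows_est d n K hd hn hp1 (cntM f) (by simp only [sum_cntM, sum_Rf, hE])
      (hh_dvd d n f h0) hQf.1 b Y u Z hb hY0 hu0 hQf.2 h1 hY hYZ hZ hu huZ hnZ hK hK2
    have hh0 := hh_nonneg d n f
    have e : (p : ℝ) ^ p * hh d n f * ∏ i, rho d (cntM f) i - (p : ℝ) ^ p * hh d n f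
      = ((p : ℝ) ^ p * hh d n f) * (∏ i, rho d (cntM f) i - 1) := by ring
    rw [e, abs_mul, abs_of_nonneg (by positivity : (0 : ℝ) ≤ (p : ℝ) ^ p * hh d n f), mul_comm]
    exact mul_le_mul_of_nonneg_right hr (by positivity)
  have := abs_sub_le (∑ f : Fin E → ZMod p × ZMod p with Q (cntM f), (p : ℝ) ^ p * hh d n f * ∏ i, rho d (cntM f) i)
    S0 (1 + if p = 2 then 1 else 0)
  have h5 : 2306 * Z * S0 ≤ 2306 * Z * 4 := by gcongr
  linarith

/-- The row-zero condition is automatic on the equidistributed part. -/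
theorem row_zero_lt (d n : ℕ) (hd : 0 < d) (hn : 0 < n) (M : ZMod p → ZMod p → ℕ) (τ : ℝ)
    (hτ : 4 * (p : ℝ) ^ 3 * τ ≤ 1) (ht : ∑ i : ZMod p, ∑ j : ZMod p, M i j = d * n)
    (hEb : ∑ i : ZMod p, ∑ j : ZMod p, ((M i j : ℝ) / (d * n) - 1 / (p : ℝ) ^ 2) ^ 2 ≤ τ) :
    (∑ j : ZMod p, M 0 j) / d < n := by
  have hp0 : (0 : ℝ) < p := by exact_mod_cast (Fact.out : p.Prime).pos
  have hn0 : (0 : ℝ) < n := by exact_mod_cast hn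
  have hd0 : (0 : ℝ) < d := by exact_mod_cast hd
  haveI : Fact (1 < p) := ⟨(Fact.out : p.Prime).one_lt⟩
  have h1 := row_low d n M 1 τ hτ hEb
  have hpos : 0 < ∑ j, M 1 j := by
    by_contra h
    have h0 : ∑ j, M 1 j = 0 := by omega
    rw [h0] at h1
    have : 0 < 1 / (2 * (p : ℝ)) := by positivity
    simp at h1
    linarith [inv_pos.mpr hp0]
  have h01 : (0 : ZMod p) ≠ 1 := zero_ne_one
  have hle : ∑ j, M 0 j + ∑ j, M 1 j ≤ ∑ i : ZMod p, ∑ j : ZMod p, M i j := by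
    rw [← Finset.sum_pair (f := fun i => ∑ j, M i j) h01]
    exact Finset.sum_le_sum_of_subset (Finset.subset_univ _)
  rw [Nat.div_lt_iff_lt_mul hd]
  rw [ht] at hle
  rw [Nat.mul_comm n d]; omega

end core


theorem ev_log (A : ℝ) (hA : 0 < A) (D : ℕ) : ∃ N : ℕ, 0 < N ∧ ∀ n : ℕ, N ≤ n →
    D ≤ n ∧ 1 ≤ Real.log n ∧ A * Real.log n ^ 3 ≤ (n : ℝ) ^ ((1 : ℝ) / 8) := by
  have h1 := isLittleO_log_rpow_rpow_atTop (3 : ℝ) (by norm_num : (0 : ℝ) < 1 / 8)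
  have h2 := h1.def (inv_pos.mpr hA)
  have h3 := tendsto_natCast_atTop_atTop (R := ℝ) |>.eventually h2
  have h4 := (Real.tendsto_log_atTop.comp (tendsto_natCast_atTop_atTop (R := ℝ))).eventually_ge_atTop 1
  obtain ⟨N, hN⟩ := Filter.eventually_atTop.mp (h3.and (h4.and (Filter.eventually_ge_atTop D)))
  refine ⟨N + 1, by omega, fun n hn => ?_⟩
  obtain ⟨a, c, e⟩ := hN n (by omega)
  simp only [Function.comp] at c
  refine ⟨e, c, ?_⟩
  have h0 : (0 : ℝ) ≤ (n : ℝ) ^ ((1 : ℝ) / 8) := Real.rpow_nonneg (Nat.cast_nonneg _) _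
  rw [Real.norm_of_nonneg h0, Real.norm_of_nonneg (Real.rpow_nonneg (by linarith) _)] at a
  have e3 : Real.log (n : ℝ) ^ (3 : ℝ) = Real.log n ^ 3 := by
    exact_mod_cast Real.rpow_natCast (Real.log n) 3
  rw [e3] at a
  calc A * Real.log n ^ 3 ≤ A * (A⁻¹ * (n : ℝ) ^ ((1 : ℝ) / 8)) := by gcongr
    _ = _ := by field_simp

theorem delta_bd (d n E p : ℕ) (b : ℝ) (hd : 3 ≤ d) (hn : d + 1 ≤ n) (hE : 2 * E = d * n) (hp : 2 ≤ p) (hpn : p ≤ n)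
    (hb : 100 ≤ b) (hL : 1 ≤ Real.log n) (h16 : 16 * (p : ℝ) ^ 5 * Real.log n ≤ n) :
    (p : ℝ) ^ p * ((((2 * E : ℕ) : ℝ) + 1) ^ (p ^ 2 + p) * Real.exp (-(n * (p : ℝ) ^ 2 * (b * Real.log n / n) / 16))
      + (((2 * E : ℕ) : ℝ) + 1) ^ p * (1 - 1 / (4 * (p : ℝ) ^ 4)) ^ E) ≤ 2 / n := by
  have hn0 : (0 : ℝ) < n := by exact_mod_cast (by omega : 0 < n)
  have hp2 : (2 : ℝ) ≤ p := by exact_mod_cast hp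
  set L := Real.log n with hLd
  have hen : Real.exp L = n := Real.exp_log hn0
  have hpp : (p : ℝ) ^ p ≤ Real.exp (p * L) := by
    rw [Real.exp_nat_mul, hen]
    gcongr
  have hbase : (((2 * E : ℕ) : ℝ) + 1) ≤ Real.exp (2 * L) := by
    have : (2 : ℝ) * L = ((2 : ℕ) : ℝ) * L := by norm_num
    rw [this, Real.exp_nat_mul, hen]
    have : 2 * E + 1 ≤ n ^ 2 := by
      rw [hE]; nlinarith
    exact_mod_cast this
  have hb0 : (0 : ℝ) ≤ ((2 * E : ℕ) : ℝ) + 1 := by positivity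
  have hpow : ∀ k : ℕ, (((2 * E : ℕ) : ℝ) + 1) ^ k ≤ Real.exp (k * (2 * L)) := by
    intro k; rw [Real.exp_nat_mul]; gcongr
  have hinv : (1 : ℝ) / n = Real.exp (-L) := by rw [Real.exp_neg, hen, one_div]
  have t1 : (p : ℝ) ^ p * ((((2 * E : ℕ) : ℝ) + 1) ^ (p ^ 2 + p) * Real.exp (-(n * (p : ℝ) ^ 2 * (b * L / n) / 16)))
      ≤ 1 / n := by
    have e : n * (p : ℝ) ^ 2 * (b * L / n) / 16 = (p : ℝ) ^ 2 * b * L / 16 := by field_simp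
    rw [e, hinv]
    calc _ ≤ Real.exp (p * L) * (Real.exp (((p ^ 2 + p : ℕ) : ℝ) * (2 * L)) * Real.exp (-((p : ℝ) ^ 2 * b * L / 16))) := by
          gcongr; exact hpow _
      _ = Real.exp (p * L + (((p ^ 2 + p : ℕ) : ℝ) * (2 * L) + -((p : ℝ) ^ 2 * b * L / 16))) := by
          rw [Real.exp_add, Real.exp_add]
      _ ≤ _ := by
          apply Real.exp_le_exp.mpr
          push_cast
          have h2 : (p : ℝ) ^ 2 * 100 * L ≤ (p : ℝ) ^ 2 * b * L := by gcongr
          have h3 : 0 ≤ (17 / 4 * (p : ℝ) ^ 2 - 3 * p - 1) * L := mul_nonneg (by nlinarith) (by linarith)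
          nlinarith
  have hx0 : (0 : ℝ) < 4 * (p : ℝ) ^ 4 := by positivity
  have t2 : (p : ℝ) ^ p * ((((2 * E : ℕ) : ℝ) + 1) ^ p * (1 - 1 / (4 * (p : ℝ) ^ 4)) ^ E) ≤ 1 / n := by
    have hx1 : 1 / (4 * (p : ℝ) ^ 4) ≤ 1 := by
      rw [div_le_one hx0]
      have : (1 : ℝ) ≤ (p : ℝ) ^ 4 := one_le_pow₀ (by linarith)
      linarith
    have hE' : (n : ℝ) ≤ E := by
      have : n ≤ E := by nlinarith
      exact_mod_cast this
    have hq : (1 - 1 / (4 * (p : ℝ) ^ 4)) ^ E ≤ Real.exp (E * (-(1 / (4 * (p : ℝ) ^ 4)))) := by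
      rw [Real.exp_nat_mul]
      have := Real.add_one_le_exp (-(1 / (4 * (p : ℝ) ^ 4)))
      exact pow_le_pow_left₀ (by linarith) (by linarith) _
    have hq0 : 0 ≤ (1 - 1 / (4 * (p : ℝ) ^ 4)) ^ E := pow_nonneg (by linarith) _
    rw [hinv]
    calc _ ≤ Real.exp (p * L) * (Real.exp ((p : ℝ) * (2 * L)) * Real.exp (E * (-(1 / (4 * (p : ℝ) ^ 4))))) := by
          gcongr; exact hpow _
      _ = Real.exp (p * L + ((p : ℝ) * (2 * L) + E * (-(1 / (4 * (p : ℝ) ^ 4))))) := by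
          rw [Real.exp_add, Real.exp_add]
      _ ≤ _ := by
          apply Real.exp_le_exp.mpr
          have h5 : 4 * p * L ≤ E * (1 / (4 * (p : ℝ) ^ 4)) := by
            rw [mul_one_div, le_div_iff₀ hx0]
            calc 4 * p * L * (4 * (p : ℝ) ^ 4) = 16 * (p : ℝ) ^ 5 * L := by ring
              _ ≤ (n : ℝ) := h16
              _ ≤ _ := hE'
          have : 0 ≤ ((p : ℝ) - 1) * L := mul_nonneg (by linarith) (by linarith)
          nlinarith
  rw [mul_add]
  calc _ ≤ 1 / (n : ℝ) + 1 / n := add_le_add t1 t2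
    _ = _ := by ring

theorem params (d n p : ℕ) (b : ℝ) (hn : d + 1 ≤ n) (hp : 2 ≤ p) (hb : 100 ≤ b) (hL : 1 ≤ Real.log n)
    (hpy : (p : ℝ) ≤ (n : ℝ) ^ ((1 : ℝ) / 8))
    (hA : (3072 ^ 2 * b ^ 3 + 768 ^ 2 * 10 * (6 + d * b)) * Real.log n ^ 3 ≤ (n : ℝ) ^ ((1 : ℝ) / 8)) :
    ∃ (K : ℕ) (Y u Z : ℝ), 0 ≤ Y ∧ 0 ≤ u ∧
    4 * (p : ℝ) ^ 3 * (b * Real.log n) ≤ n ∧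
    (p : ℝ) ^ 4 * (b * Real.log n / n) ≤ 4 ∧
    4 * (p : ℝ) ^ 3 * (b * Real.log n) = Y ^ 2 * n ∧
    2 * (p : ℝ) ^ 2 * (b * Real.log n) * Y = 4 * Z ∧
    3072 * Z ≤ 1 ∧
    2 * (p : ℝ) ^ 3 ≤ u ^ 2 * n ∧ p * u ≤ 2 * Z ∧ p / (n : ℝ) ^ 2 ≤ Z ∧
    4 * (6 + d * b) * (p : ℝ) ^ 2 * Real.log n ≤ K ∧
    (768 * (p : ℝ)) ^ 2 * K * (2 * p) ≤ n ∧ 16 * (p : ℝ) ^ 5 * Real.log n ≤ n ∧ p ≤ n ∧ 1 / (n : ℝ) ≤ Z ∧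
    Z ≤ √(b ^ 3) * ((p : ℝ) ^ 4 * (Real.log n) ^ ((3 : ℝ) / 2) / √n) := by
  have hn0 : (0 : ℝ) < n := by exact_mod_cast (by omega : 0 < n)
  have hp2 : (2 : ℝ) ≤ p := by exact_mod_cast hp
  set L := Real.log n with hLd
  set y := (n : ℝ) ^ ((1 : ℝ) / 8) with hyd
  have hy8 : y ^ 8 = n := by
    rw [hyd, ← Real.rpow_natCast, ← Real.rpow_mul hn0.le]; norm_num
  have hy0 : 0 ≤ y := by linarith
  have hb0 : 0 ≤ b := by linarith
  have hdb : 0 ≤ (d : ℝ) * b := by positivity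
  have hL3 : L ≤ L ^ 3 := by nlinarith [mul_nonneg (by linarith : 0 ≤ L - 1) (by linarith : 0 ≤ L), mul_nonneg (mul_nonneg (by linarith : 0 ≤ L - 1) (by linarith : 0 ≤ L)) (by linarith : 0 ≤ L)]
  have hgen : ∀ (k : ℕ) (x : ℝ), k ≤ 7 → 0 ≤ x → x ≤ y → (p : ℝ) ^ k * x ≤ n := by
    intro k x hk hx hxy
    calc (p : ℝ) ^ k * x ≤ (p : ℝ) ^ 7 * x := by gcongr; linarith
      _ ≤ y ^ 7 * y := by gcongr
      _ = n := by rw [← hy8]; ring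
  have hb3 : b ≤ b ^ 3 := by nlinarith [mul_nonneg (by linarith : 0 ≤ b - 1) (by linarith : 0 ≤ b), mul_nonneg (mul_nonneg (by linarith : 0 ≤ b - 1) (by linarith : 0 ≤ b)) (by linarith : 0 ≤ b)]
  have hB1 : 3072 ^ 2 * b ^ 3 * L ^ 3 ≤ y := by
    have : 0 ≤ 768 ^ 2 * 10 * (6 + d * b) * L ^ 3 := by positivity
    linarith
  have hB2 : 768 ^ 2 * 10 * (6 + d * b) * L ≤ y := by
    have h1 : 0 ≤ 3072 ^ 2 * b ^ 3 * L ^ 3 := by positivity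
    have h2 : 768 ^ 2 * 10 * (6 + d * b) * L ≤ 768 ^ 2 * 10 * (6 + d * b) * L ^ 3 := by gcongr
    linarith
  have hB3 : 4 * (b * L) ≤ y := by
    have : b * L ≤ b ^ 3 * L ^ 3 := by gcongr
    have h0 : 0 ≤ b * L := by positivity
    linarith
  have hB4 : 16 * L ≤ y := by
    have : 100 * L ≤ b * L := by gcongr
    linarith
  have hbL : 100 ≤ b * L := by nlinarith
  have hbL0 : 0 ≤ b * L := by linarith
  have hbL1 : 1 ≤ (b * L) ^ 3 := one_le_pow₀ (by linarith)
  set Y := √(4 * (p : ℝ) ^ 3 * (b * L) / n) with hY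
  have hY2 : Y ^ 2 = 4 * (p : ℝ) ^ 3 * (b * L) / n := Real.sq_sqrt (by positivity)
  set u := √(2 * (p : ℝ) ^ 3 / n) with hu
  have hu2 : u ^ 2 = 2 * (p : ℝ) ^ 3 / n := Real.sq_sqrt (by positivity)
  have hY0 : 0 ≤ Y := Real.sqrt_nonneg _
  have hu0 : 0 ≤ u := Real.sqrt_nonneg _
  obtain ⟨Z, hZ⟩ : ∃ Z, Z = (p : ℝ) ^ 2 * (b * L) * Y / 2 := ⟨_, rfl⟩
  have hZ0 : 0 ≤ Z := by rw [hZ]; positivity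
  have hZ2 : Z ^ 2 = (p : ℝ) ^ 7 * (b * L) ^ 3 / n := by
    have : Z ^ 2 = (p : ℝ) ^ 4 * (b * L) ^ 2 * Y ^ 2 / 4 := by rw [hZ]; ring
    rw [this, hY2]; field_simp
  have hn1 : (1 : ℝ) ≤ n := by exact_mod_cast (by omega : 1 ≤ n)
  have hp7 : ∀ k ≤ 7, (p : ℝ) ^ k ≤ (p : ℝ) ^ 7 * (b * L) ^ 3 := by
    intro k hk
    calc (p : ℝ) ^ k ≤ (p : ℝ) ^ 7 := by gcongr; linarith
      _ ≤ _ := le_mul_of_one_le_right (by positivity) hbL1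
  have hpn : (p : ℝ) ≤ n := by
    have := hgen 1 1 (by norm_num) (by norm_num) (by linarith)
    simpa using this
  refine ⟨⌈4 * (6 + d * b) * (p : ℝ) ^ 2 * L⌉₊, Y, u, Z, hY0, hu0, ?_, ?_, ?_, ?_, ?_, ?_, ?_, ?_, Nat.le_ceil _, ?_, ?_, ?_, ?_, ?_⟩
  · have := hgen 3 _ (by norm_num) (by positivity) hB3
    linarith
  · have := hgen 4 _ (by norm_num) (by positivity) hB3
    rw [mul_div_assoc', div_le_iff₀ hn0]
    linarith
  · rw [hY2]; field_simp
  · rw [hZ]; ring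
  · have : (3072 * Z) ^ 2 ≤ 1 ^ 2 := by
      rw [mul_pow, hZ2, one_pow, mul_div_assoc', div_le_one hn0]
      have := hgen 7 _ (by norm_num) (by positivity) hB1
      calc _ = (p : ℝ) ^ 7 * (3072 ^ 2 * b ^ 3 * L ^ 3) := by ring
        _ ≤ _ := this
    exact (abs_le_of_sq_le_sq' this (by norm_num)).2
  · rw [hu2]; apply le_of_eq; field_simp
  · have : (p * u) ^ 2 ≤ (2 * Z) ^ 2 := by
      rw [mul_pow, mul_pow, hZ2, hu2, mul_div_assoc', mul_div_assoc']
      apply div_le_div_of_nonneg_right _ hn0.le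
      have := hp7 5 (by norm_num)
      have h0 : 0 ≤ (p : ℝ) ^ 5 := by positivity
      calc _ = 2 * (p : ℝ) ^ 5 := by ring
        _ ≤ _ := by linarith
    exact (abs_le_of_sq_le_sq' this (by positivity)).2
  · have : (p / (n : ℝ) ^ 2) ^ 2 ≤ Z ^ 2 := by
      rw [hZ2, div_pow, div_le_div_iff₀ (by positivity) hn0]
      have := hp7 2 (by norm_num)
      have hnn : (n : ℝ) ≤ ((n : ℝ) ^ 2) ^ 2 := by
        rw [← pow_mul]; exact le_self_pow₀ hn1 (by norm_num)
      gcongr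
    exact (abs_le_of_sq_le_sq' this hZ0).2
  · have hc := Nat.ceil_lt_add_one (by positivity : 0 ≤ 4 * (6 + d * b) * (p : ℝ) ^ 2 * L)
    have h1 : 1 ≤ (6 + d * b) * (p : ℝ) ^ 2 * L := by
      have h6 : 1 ≤ 6 + d * b := by linarith
      have : 1 ≤ (p : ℝ) ^ 2 := one_le_pow₀ (by linarith)
      calc (1 : ℝ) = 1 * 1 * 1 := by norm_num
        _ ≤ _ := by gcongr
    have hc' : (⌈4 * (6 + d * b) * (p : ℝ) ^ 2 * L⌉₊ : ℝ) ≤ 5 * (6 + d * b) * (p : ℝ) ^ 2 * L := by linarith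
    have := hgen 5 _ (by norm_num) (by positivity) hB2
    calc _ ≤ (768 * (p : ℝ)) ^ 2 * (5 * (6 + d * b) * (p : ℝ) ^ 2 * L) * (2 * p) := by gcongr
      _ = (p : ℝ) ^ 5 * (768 ^ 2 * 10 * (6 + d * b) * L) := by ring
      _ ≤ _ := this
  · have := hgen 5 _ (by norm_num) (by positivity) hB4
    linarith
  · exact_mod_cast hpn
  · have : (1 / (n : ℝ)) ^ 2 ≤ Z ^ 2 := by
      rw [hZ2, div_pow, div_le_div_iff₀ (by positivity) hn0]
      have := hp7 0 (by norm_num)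
      have hnn : (n : ℝ) ≤ (n : ℝ) ^ 2 := le_self_pow₀ hn1 (by norm_num)
      rw [pow_zero] at this
      rw [one_pow]
      gcongr
    exact (abs_le_of_sq_le_sq' this hZ0).2
  · have hL32 : (L ^ ((3 : ℝ) / 2)) ^ 2 = L ^ 3 := by
      rw [← Real.rpow_natCast, ← Real.rpow_mul (by linarith), ← Real.rpow_natCast]; norm_num
    have hL0 : 0 ≤ L ^ ((3 : ℝ) / 2) := Real.rpow_nonneg (by linarith) _
    have : Z ^ 2 ≤ (√(b ^ 3) * ((p : ℝ) ^ 4 * L ^ ((3 : ℝ) / 2) / √n)) ^ 2 := by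
      have e : (√(b ^ 3) * ((p : ℝ) ^ 4 * L ^ ((3 : ℝ) / 2) / √n)) ^ 2
          = √(b ^ 3) ^ 2 * (((p : ℝ) ^ 4) ^ 2 * (L ^ ((3 : ℝ) / 2)) ^ 2) / √n ^ 2 := by ring
      rw [hZ2, e, hL32, Real.sq_sqrt hn0.le, Real.sq_sqrt (by positivity)]
      apply div_le_div_of_nonneg_right _ hn0.le
      calc (p : ℝ) ^ 7 * (b * L) ^ 3 ≤ (p : ℝ) ^ 8 * (b * L) ^ 3 := by gcongr <;> first | linarith | norm_num
        _ = _ := by ring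
    exact (abs_le_of_sq_le_sq' this (by positivity)).2

/-- Local CLT estimate (undirected case): for `d ≥ 3` there is `𝔟₀ > 0` so that for every
`𝔟 ≥ 𝔟₀` there are `C, c, N > 0` such that for all `n ≥ N` with `nd` even and primes `p`
with `gcd(p,d) = 1` and `p ≤ c n^{1/8}`, the normalized sum over equidistributed
symmetric matrices `M ∈ ℰ_𝔟` of the matching/walk weights is within
`C p⁴ (ln n)^{3/2}/√n` of `1 + 1_{p=2}`. -/
theorem undirected_lclt_estimate (d : ℕ) (hd : 3 ≤ d) :
    ∃ b₀ : ℝ, 0 < b₀ ∧ ∀ b : ℝ, b₀ ≤ b →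
      ∃ C c : ℝ, ∃ N : ℕ, 0 < C ∧ 0 < c ∧ 0 < N ∧
        ∀ n : ℕ, N ≤ n → Even (n * d) → ∀ (p : ℕ) [Fact p.Prime], Nat.gcd p d = 1 →
          (p : ℝ) ≤ c * (n : ℝ) ^ ((1 : ℝ) / 8) →
          |((2 : ℝ) ^ (n * d / 2) * ((n * d / 2).factorial : ℝ) / ((n * d).factorial : ℝ)) *
            (∑ᶠ M ∈ {M : ZMod p → ZMod p → ℕ |
                (∀ i j, M i j = M j i) ∧ (∀ i, Even (M i i)) ∧
                (∑ i : ZMod p, ∑ j : ZMod p, M i j) = d * n ∧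
                (∀ i, d ∣ ∑ j, M i j) ∧
                (∑ j : ZMod p, M 0 j) / d < n ∧
                (∀ i, (∑ j : ZMod p, j * (M i j : ZMod p)) = 0) ∧
                (∑ i : ZMod p, ∑ j : ZMod p,
                  ((M i j : ℝ) / (d * n) - 1 / (p : ℝ) ^ 2) ^ 2) ≤ b * Real.log n / n},
              ((n.factorial : ℝ) / ∏ i : ZMod p, (((∑ j, M i j) / d).factorial : ℝ)) *
              (∏ q ∈ Finset.univ.filter (fun q : ZMod p × ZMod p => q.1.val < q.2.val),
                  ((M q.1 q.2).factorial : ℝ)) *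
              (∏ i : ZMod p,
                  ((M i i).factorial : ℝ) /
                    (2 ^ (M i i / 2) * ((M i i / 2).factorial : ℝ))) *
              (∏ i : ZMod p,
                ((Finset.univ.filter (fun a : Fin ((∑ j, M i j) / d) → Fin d → ZMod p =>
                  (∀ k, ∑ r, a k r = 0) ∧
                  (∀ j : ZMod p, (∑ k, Phi (a k) j) = M i j))).card : ℝ)))
            - (1 + if p = 2 then 1 else 0)|
          ≤ C * (p : ℝ) ^ 4 * (Real.log n) ^ ((3 : ℝ) / 2) / Real.sqrt n := by
  have hd0 : 0 < d := by omega
  refine ⟨100, by norm_num, fun b hb => ?_⟩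
  have hb0 : 0 < b := by linarith
  obtain ⟨N, hN0, hN⟩ := ev_log (3072 ^ 2 * b ^ 3 + 768 ^ 2 * 10 * (6 + d * b)) (by positivity) (d + 1)
  refine ⟨9226 * √(b ^ 3), 1, N, by positivity, by norm_num, hN0, ?_⟩
  intro n hn hev p hp hg hpy
  obtain ⟨hdn, hL, hA⟩ := hN n hn
  rw [one_mul] at hpy
  have hp2 : 2 ≤ p := (Fact.out : p.Prime).two_le
  have hn0 : 0 < n := by omega
  have hn0' : (0 : ℝ) < n := by exact_mod_cast hn0
  obtain ⟨K, Y, u, Z, hY0, hu0, h1, h4, hY, hYZ, hZ, hu, huZ, hnZ, hK, hK2, h16, hpn, hinv, hfin⟩ :=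
    params d n p b hdn hp2 hb hL hpy hA
  have hE : 2 * (n * d / 2) = d * n := by
    rw [Nat.mul_comm d n]; exact Nat.two_mul_div_two_of_even hev
  have hδ := delta_bd d n (n * d / 2) p b hd hdn hE hp2 hpn hb hL h16
  have hδ2 : 2 / (n : ℝ) ≤ 2 * Z := by
    calc 2 / (n : ℝ) = 2 * (1 / n) := by ring
      _ ≤ _ := by linarith
  classical
  have hcore := core_sum (p := p) d n (n * d / 2) K hd hdn hE hg b Y u Z _ hb0.le hY0 hu0 h1 h4 hY hYZ hZ hu huZ hnZ
    hK hK2 hδ (by linarith) (fun M => (∀ i, ∑ j : ZMod p, j * (M i j : ZMod p) = 0) ∧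
      ∑ i : ZMod p, ∑ j : ZMod p, ((M i j : ℝ) / (d * n) - 1 / (p : ℝ) ^ 2) ^ 2 ≤ b * Real.log n / n)
    (fun M => Iff.rfl)
  have hτ : 4 * (p : ℝ) ^ 3 * (b * Real.log n / n) ≤ 1 := by
    rw [mul_div_assoc', div_le_one hn0']; exact h1
  rw [main_sum (p := p) d n (n * d / 2) hd0 hE _ (fun M => (∀ i, ∑ j : ZMod p, j * (M i j : ZMod p) = 0) ∧
      ∑ i : ZMod p, ∑ j : ZMod p, ((M i j : ℝ) / (d * n) - 1 / (p : ℝ) ^ 2) ^ 2 ≤ b * Real.log n / n)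
    ?_ _ _ ?_]
  · refine le_trans hcore ?_
    calc 2 / (n : ℝ) + 9224 * Z ≤ 9226 * Z := by linarith
      _ ≤ 9226 * (√(b ^ 3) * ((p : ℝ) ^ 4 * (Real.log n) ^ ((3 : ℝ) / 2) / √n)) := by gcongr
      _ = _ := by ring
  · intro M
    constructor
    · rintro ⟨a1, a2, a3, a4, a5, a6, a7⟩
      exact ⟨a1, a2, a3, a4, a6, a7⟩
    · rintro ⟨a1, a2, a3, a4, a6, a7⟩
      exact ⟨a1, a2, a3, a4, row_zero_lt d n hd0 hn0 M _ hτ a3 a7, a6, a7⟩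
  · rintro M ⟨a1, a2, a3, a4, a5, a6, a7⟩
    have := term_identity (p := p) d n (n * d / 2) hd0 hE M a1 a2 a3 a4
    rw [Nat.mul_comm d n] at this
    exact this
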